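/- Let m, n ≥ 2. Let v₁, ..., v_{n+1} ∈ ℝⁿ be in general position (every n of them linearly independent). Let F : ℝⁿ → ℝᵐ be an injective mapping that maps each line in ℒ(v₁, ..., v_{n+1}) onto a line. Then there exists a basis u₁, ..., uₙ of ℝⁿ such that for every x = Σᵢ αᵢuᵢ, F(x) = Σ_{δ ∈ {0,1}ⁿ} u_δ ∏ᵢ fᵢ(αᵢ)^{δᵢ}, where f₁, ..., fₙ : ℝ → ℝ are additive bijections with fᵢ(1) = 1 for each i, and the coefficients u_δ ∈ ℝᵐ satisfy: (i) u_δ = 0 for all δ with |δ| ≥ (n+2)/2, and (ii) for each integer k with 2 ≤ k < (n+2)/2 and every choice of 0 ≤ l ≤ k−2 indices 1 ≤ i₁ < ⋯ < i_l ≤ n, the sum of u_δ over all δ with |δ| = k and δ_{i₁} = ⋯ = δ_{i_l} = 1 equals 0. Moreover m ≥ n, and if m = n then F is a bijection. -/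

import Mathlib

/-- The line through `a` in direction `b`. -/
def lineThru {k : ℕ} (a b : Fin k → ℝ) : Set (Fin k → ℝ) :=
  {x | ∃ t : ℝ, x = a + t • b}

/-- A subset of `ℝᵏ` is a line if it is of the form `a + ℝ b` with `b ≠ 0`. -/
def IsLine {k : ℕ} (s : Set (Fin k → ℝ)) : Prop :=
  ∃ a b : Fin k → ℝ, b ≠ 0 ∧ s = lineThru a b

/-- The weight `|δ|` of `δ ∈ {0,1}ⁿ`, i.e. the number of `1` entries. -/
def wt {n : ℕ} (δ : Fin n → Bool) : ℕ :=
  ∑ i, if δ i then 1 else 0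

/-!
Along a direction `b`, comparing the images of parallel lines shows that `F` acts on all lines
parallel to `b` by one and the same additive bijection, normalized by `1 ↦ 1`. Rescaling
`v₁, …, vₙ` to a basis `u` with `∑ uᵢ = v_{n+1}`, the directions `uᵢ` make `F` a multiaffine
polynomial in the `fᵢ(αᵢ)`. Additivity along `v_{n+1} = (1, …, 1)` makes that polynomial affine on
integer steps in this direction, so its higher coefficients along it vanish; inclusion–exclusion
then kills the coefficients of degree at least `(n+2)/2`.

The polynomial is injective `ℝⁿ → ℝᵐ`, so `n ≤ m` because its components generate a domain of
transcendence degree `n`. That an injective polynomial map `P : ℝⁿ → ℝⁿ` is surjective is the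
theorem of Białynicki-Birula and Rosenlicht, which follows from a parity count. The number of real
points of a finite reduced `ℝ`-algebra has the parity of its dimension, so generic real fibers of an
algebraic family have constant parity. If `P` misses a point, cut the variety of missed points near
a generic point `y₀` by a transverse slice that meets it in `y₀` only; deforming the slice to one
lying in the range of `P` would change the number of intersections from one to zero.
-/

section RealPointsParity

open Polynomial

lemma prod_neg_iff_odd_card_filter {ι R : Type*} [CommRing R] [LinearOrder R]
    [IsStrictOrderedRing R] (s : Finset ι) (f : ι → R) (hf : ∀ i ∈ s, f i ≠ 0) :
    ∏ i ∈ s, f i < 0 ↔ Odd (s.filter (f · < 0)).card := by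
  classical
  induction s using Finset.induction_on with
  | empty => simp
  | insert a s ha ih =>
    have hprod : ∏ i ∈ s, f i ≠ 0 :=
      Finset.prod_ne_zero_iff.2 fun i hi => hf i (Finset.mem_insert_of_mem hi)
    have ih := ih fun i hi => hf i (Finset.mem_insert_of_mem hi)
    rw [Finset.prod_insert ha, Finset.filter_insert]
    rcases (hf a (Finset.mem_insert_self a s)).lt_or_gt with hneg | hpos
    · rw [if_pos hneg, Finset.card_insert_of_notMem (by simp [ha]), Nat.odd_add_one, ← ih,
        mul_neg_iff]
      simp [hneg, hneg.not_gt, hprod.symm.le_iff_lt]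
    · rw [if_neg hpos.not_gt, ← ih, ← smul_eq_mul, smul_neg_iff_of_pos_left hpos]

lemma det_blockDiagonal'_eq_prod {R ι : Type*} [CommRing R] [Fintype ι] [DecidableEq ι]
    {κ : ι → Type*} [∀ i, Fintype (κ i)] [∀ i, DecidableEq (κ i)]
    (M : ∀ i, Matrix (κ i) (κ i) R) : (Matrix.blockDiagonal' M).det = ∏ i, (M i).det := by
  let := LinearOrder.lift' (Fintype.equivFin ι) (Fintype.equivFin ι).injective
  rw [(Matrix.blockTriangular_blockDiagonal' M).det_fintype]
  refine Finset.prod_congr rfl fun i _ => ?_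
  rw [← Matrix.det_reindex_self (Equiv.sigmaSubtype i)]
  congr 1
  ext k l
  exact Matrix.blockDiagonal'_apply_eq M i k l

lemma norm_pi_eq_prod {R ι : Type*} [CommRing R] [Fintype ι] {K : ι → Type*}
    [∀ i, CommRing (K i)] [∀ i, Algebra R (K i)] [∀ i, Module.Free R (K i)]
    [∀ i, Module.Finite R (K i)] (x : ∀ i, K i) :
    Algebra.norm R x = ∏ i, Algebra.norm R (x i) := by
  classical
  let b i := Module.Free.chooseBasis R (K i)
  have hblock : Algebra.leftMulMatrix (Pi.basis b) x =
      Matrix.blockDiagonal' fun i => Algebra.leftMulMatrix (b i) (x i) := by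
    ext ⟨i, k⟩ ⟨j, l⟩
    rw [Algebra.leftMulMatrix_eq_repr_mul, Pi.basis_repr, Pi.basis_apply]
    by_cases hij : i = j
    · subst hij
      simp [Matrix.blockDiagonal'_apply, Algebra.leftMulMatrix_eq_repr_mul]
    · simp [Matrix.blockDiagonal'_apply, hij]
  simp only [Algebra.norm_eq_matrix_det (Pi.basis b), hblock, det_blockDiagonal'_eq_prod,
    Algebra.norm_eq_matrix_det (b _)]

lemma norm_neg_iff_exists_algEquiv {K : Type*} [Field K] [Algebra ℝ K] [FiniteDimensional ℝ K]
    (y : K) : Algebra.norm ℝ y < 0 ↔ ∃ e : K ≃ₐ[ℝ] ℝ, e y < 0 := by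
  have norm_eq (e : K ≃ₐ[ℝ] ℝ) : Algebra.norm ℝ y = e y := by
    rw [← Algebra.norm_eq_of_algEquiv e, Algebra.norm_self, MonoidHom.id_apply]
  refine ⟨fun hy => ?_, fun ⟨e, he⟩ => norm_eq e ▸ he⟩
  rcases Real.nonempty_algEquiv_or K with ⟨⟨e⟩⟩ | ⟨⟨e⟩⟩
  · exact ⟨e, norm_eq e ▸ hy⟩
  · rw [← Algebra.norm_eq_of_algEquiv e, Algebra.norm_complex_apply] at hy
    exact absurd hy (Complex.normSq_nonneg _).not_gt

lemma norm_pi_neg_iff {ι : Type*} [Finite ι] {K : ι → Type*} [∀ i, Field (K i)]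
    [∀ i, Algebra ℝ (K i)] [∀ i, FiniteDimensional ℝ (K i)] (x : ∀ i, K i)
    (hx : Algebra.norm ℝ x ≠ 0) :
    Algebra.norm ℝ x < 0 ↔ Odd {i | ∃ e : K i ≃ₐ[ℝ] ℝ, e (x i) < 0}.ncard := by
  have := Fintype.ofFinite ι
  rw [norm_pi_eq_prod] at hx ⊢
  rw [prod_neg_iff_odd_card_filter _ _ (Finset.prod_ne_zero_iff.1 hx), ← Set.ncard_coe_finset]
  simp only [norm_neg_iff_exists_algEquiv, Finset.coe_filter, Finset.mem_univ, true_and]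

variable {A : Type*} [CommRing A] [Algebra ℝ A]

lemma algHom_real_surjective (χ : A →ₐ[ℝ] ℝ) : Function.Surjective χ :=
  fun r => ⟨algebraMap ℝ A r, by simp⟩

lemma algHom_real_eq_of_ker_eq {χ χ' : A →ₐ[ℝ] ℝ} (h : RingHom.ker χ = RingHom.ker χ') :
    χ = χ' := by
  ext x
  have hx : x - algebraMap ℝ A (χ x) ∈ RingHom.ker χ := by simp [RingHom.mem_ker]
  rw [h, RingHom.mem_ker, map_sub, AlgHom.commutes, sub_eq_zero] at hx
  exact hx.symm

lemma ncard_algHom_real_eq_ncard_maximalSpectrum (p : ℝ → Prop) (a : A) :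
    {χ : A →ₐ[ℝ] ℝ | p (χ a)}.ncard =
      {I : MaximalSpectrum A |
        ∃ e : (A ⧸ I.asIdeal) ≃ₐ[ℝ] ℝ, p (e (Ideal.Quotient.mk _ a))}.ncard := by
  have ker_isMaximal (χ : A →ₐ[ℝ] ℝ) : (RingHom.ker χ).IsMaximal :=
    RingHom.ker_isMaximal_of_surjective (χ : A →+* ℝ) (algHom_real_surjective χ)
  refine Set.ncard_congr (fun χ _ => ⟨RingHom.ker χ, ker_isMaximal χ⟩) ?_ ?_ ?_
  · exact fun χ hχ =>
      ⟨Ideal.quotientKerAlgEquivOfSurjective (algHom_real_surjective χ), hχ⟩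
  · exact fun χ χ' _ _ h => algHom_real_eq_of_ker_eq (congrArg MaximalSpectrum.asIdeal h)
  · rintro I ⟨e, he⟩
    refine ⟨(e : (A ⧸ I.asIdeal) →ₐ[ℝ] ℝ).comp (Ideal.Quotient.mkₐ ℝ _), he, ?_⟩
    ext x
    simp [RingHom.mem_ker, Ideal.Quotient.eq_zero_iff_mem]

variable [FiniteDimensional ℝ A]

lemma eval_charpoly_lmul (φ : A) (t : ℝ) :
    (Algebra.lmul ℝ A φ).charpoly.eval t = Algebra.norm ℝ (algebraMap ℝ A t - φ) := by
  rw [LinearMap.eval_charpoly, Algebra.norm_apply, map_sub (Algebra.lmul ℝ A), AlgHom.commutes]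

variable [IsReduced A]

lemma norm_neg_iff_odd_ncard_algHom (a : A) (ha : Algebra.norm ℝ a ≠ 0) :
    Algebra.norm ℝ a < 0 ↔ Odd {χ : A →ₐ[ℝ] ℝ | χ a < 0}.ncard := by
  have : IsArtinianRing A := IsArtinianRing.of_finite ℝ A
  let (I : MaximalSpectrum A) : Field (A ⧸ I.asIdeal) := Ideal.Quotient.field _
  let e := (IsArtinianRing.equivPi A).restrictScalars ℝ
  rw [ncard_algHom_real_eq_ncard_maximalSpectrum (· < 0) a]
  rw [← Algebra.norm_eq_of_algEquiv e a] at ha ⊢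
  exact norm_pi_neg_iff (e a) ha

variable (A) in
lemma odd_finrank_iff_odd_ncard_algHom :
    Odd (Module.finrank ℝ A) ↔ Odd (Set.univ : Set (A →ₐ[ℝ] ℝ)).ncard := by
  have norm_neg_one : Algebra.norm ℝ (-1 : A) = (-1) ^ Module.finrank ℝ A := by
    rw [← Algebra.norm_algebraMap, map_neg (algebraMap ℝ A), map_one (algebraMap ℝ A)]
  have h := norm_neg_iff_odd_ncard_algHom (-1 : A) (by simp [norm_neg_one])
  have hneg (χ : A →ₐ[ℝ] ℝ) : χ (-1) < 0 := by simp
  rw [norm_neg_one] at h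
  simp only [hneg, Set.ofPred_true] at h
  rw [← h]
  rcases Nat.even_or_odd (Module.finrank ℝ A) with he | ho
  · simp [he.neg_one_pow, Nat.not_odd_iff_even.2 he]
  · simp [ho.neg_one_pow, ho]

lemma odd_ncard_algHom_mem_Ioo_iff (φ : A) {α β : ℝ} (hαβ : α < β)
    (hα : (Algebra.lmul ℝ A φ).charpoly.eval α ≠ 0)
    (hβ : (Algebra.lmul ℝ A φ).charpoly.eval β ≠ 0) :
    Odd {χ : A →ₐ[ℝ] ℝ | α < χ φ ∧ χ φ < β}.ncard ↔
      (Algebra.lmul ℝ A φ).charpoly.eval α * (Algebra.lmul ℝ A φ).charpoly.eval β < 0 := by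
  simp only [eval_charpoly_lmul, ← map_mul] at hα hβ ⊢
  rw [norm_neg_iff_odd_ncard_algHom _ (by simpa using ⟨hα, hβ⟩)]
  congr! 4 with χ
  rw [map_mul, map_sub, map_sub, AlgHom.commutes, AlgHom.commutes, Algebra.algebraMap_self_apply,
    Algebra.algebraMap_self_apply, mul_neg_iff]
  grind

end RealPointsParity

section RealFibers

open Polynomial TensorProduct

/-- The real points of `T` lying over the real point `ev` of the base ring `S`. -/
def realFiber {S : Type*} (T : Type*) [CommRing S] [CommRing T] [Algebra S T] (ev : S →+* ℝ) :
    Set (T →+* ℝ) :=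
  {χ | χ.comp (algebraMap S T) = ev}

/-- The polynomial `E` counts modulo two, by its changes of sign, how many values of `f` on `s`
lie in an interval whose endpoints are not roots of `E`. -/
def CountsParity {ι : Type*} (E : ℝ[X]) (s : Set ι) (f : ι → ℝ) : Prop :=
  E ≠ 0 ∧ ∀ α β, α < β → E.eval α ≠ 0 → E.eval β ≠ 0 →
    (Odd {i ∈ s | α < f i ∧ f i < β}.ncard ↔ E.eval α * E.eval β < 0)

/-- The real fibers of `T` over the real points of `S` outside the zero locus of `g` are finite,
their cardinalities have a constant parity, and the values of each `φ : T` on them are counted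
modulo two by a polynomial whose coefficients are functions on the base. -/
structure HasFiberParity (S T : Type*) [CommRing S] [CommRing T] [Algebra S T] (g : S) :
    Prop where
  finite : ∀ ev : S →+* ℝ, ev g ≠ 0 → (realFiber T ev).Finite
  odd_ncard_iff : ∀ ev ev' : S →+* ℝ, ev g ≠ 0 → ev' g ≠ 0 →
    (Odd (realFiber T ev).ncard ↔ Odd (realFiber T ev').ncard)
  exists_countsParity : ∀ φ : T, ∃ E : S[X], ∀ ev : S →+* ℝ, ev g ≠ 0 →
    CountsParity (E.map ev) (realFiber T ev) (fun χ => χ φ)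

lemma ncard_sep_eq_of_bijOn {α β : Type*} {f : α → β} {s : Set α} {t : Set β}
    (h : Set.BijOn f s t) (q : β → Prop) :
    {b ∈ t | q b}.ncard = {a ∈ s | q (f a)}.ncard := by
  have himage : f '' {a ∈ s | q (f a)} = {b ∈ t | q b} := by
    rw [← h.image_eq]
    ext b
    constructor
    · rintro ⟨a, ⟨ha, hq⟩, rfl⟩
      exact ⟨⟨a, ha, rfl⟩, hq⟩
    · rintro ⟨⟨a, ha, rfl⟩, hq⟩
      exact ⟨a, ⟨ha, hq⟩, rfl⟩
  rw [← himage, (h.injOn.mono (Set.sep_subset _ _)).ncard_image]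

lemma CountsParity.of_bijOn {ι κ : Type*} {E : ℝ[X]} {s : Set ι} {t : Set κ} {f : κ → ℝ}
    {b : ι → κ} (h : CountsParity E s (f ∘ b)) (hb : Set.BijOn b s t) : CountsParity E t f :=
  ⟨h.1, fun α β hαβ hα hβ => by
    rw [← h.2 α β hαβ hα hβ, ncard_sep_eq_of_bijOn hb]; rfl⟩

lemma countsParity_C_mul_iff {ι : Type*} {E : ℝ[X]} {s : Set ι} {f : ι → ℝ} {c : ℝ} (hc : c ≠ 0) :
    CountsParity (C c * E) s f ↔ CountsParity E s f := by
  have mul_neg_iff' (x y : ℝ) : c * x * (c * y) < 0 ↔ x * y < 0 := by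
    rw [mul_mul_mul_comm, ← smul_eq_mul, smul_neg_iff_of_pos_left (mul_self_pos.2 hc)]
  simp only [CountsParity, eval_mul, eval_C, mul_neg_iff', ne_eq, mul_eq_zero, C_eq_zero, hc,
    false_or]

variable {S T : Type*} [CommRing S] [CommRing T] [Algebra S T]

lemma realFiber_apply {ev : S →+* ℝ} {χ : T →+* ℝ} (h : χ ∈ realFiber T ev) (s : S) :
    χ (algebraMap S T s) = ev s :=
  DFunLike.congr_fun h s

lemma realFiber_ext {X : Set T} (hX : Algebra.adjoin S X = ⊤) {ev : S →+* ℝ}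
    {χ χ' : T →+* ℝ} (h : χ ∈ realFiber T ev) (h' : χ' ∈ realFiber T ev)
    (heq : Set.EqOn χ χ' X) : χ = χ' := by
  let := ev.toAlgebra
  let toAlgHom (ψ : T →+* ℝ) (hψ : ψ ∈ realFiber T ev) : T →ₐ[S] ℝ :=
    { ψ with commutes' := realFiber_apply hψ }
  have : toAlgHom χ h = toAlgHom χ' h' := AlgHom.ext_of_adjoin_eq_top hX heq
  exact congrArg AlgHom.toRingHom this

lemma bijOn_algHom_realFiber [Algebra S ℝ] :
    Set.BijOn (fun ψ : T →ₐ[S] ℝ => (ψ : T →+* ℝ)) Set.univ (realFiber T (algebraMap S ℝ)) :=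
  ⟨fun ψ _ => ψ.comp_algebraMap, fun _ _ _ _ h => AlgHom.coe_ringHom_injective h,
    fun χ hχ => ⟨{ χ with commutes' := realFiber_apply hχ }, trivial, rfl⟩⟩

lemma bijOn_algHom_baseChange_realFiber (R : Type*) [CommRing R] [Algebra S R] [Algebra R ℝ]
    [Algebra S ℝ] [IsScalarTower S R ℝ] :
    Set.BijOn (fun ψ : R ⊗[S] T →ₐ[R] ℝ =>
        (ψ : R ⊗[S] T →+* ℝ).comp Algebra.TensorProduct.includeRight.toRingHom)
      Set.univ (realFiber T (algebraMap S ℝ)) :=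
  bijOn_algHom_realFiber.comp
    (Set.bijOn_univ.2 (AlgHom.liftEquiv S R T ℝ).symm.bijective)

lemma bijOn_realFiber_baseChange (R : Type*) [CommRing R] [Algebra S R] (ev : R →+* ℝ) :
    Set.BijOn (fun ψ : R ⊗[S] T →+* ℝ => ψ.comp Algebra.TensorProduct.includeRight.toRingHom)
      (realFiber (R ⊗[S] T) ev) (realFiber T (ev.comp (algebraMap S R))) := by
  let := ev.toAlgebra
  let : Algebra S ℝ := (ev.comp (algebraMap S R)).toAlgebra
  have : IsScalarTower S R ℝ := IsScalarTower.of_algebraMap_eq fun _ => rfl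
  have hfiber := bijOn_algHom_baseChange_realFiber (S := S) (T := T) R
  have hpoints := bijOn_algHom_realFiber (S := R) (T := R ⊗[S] T)
  refine ⟨?_, ?_, ?_⟩
  · intro ψ hψ
    obtain ⟨ψ, -, rfl⟩ := hpoints.surjOn hψ
    exact hfiber.mapsTo trivial
  · intro ψ hψ ψ' hψ' h
    obtain ⟨ψ, -, rfl⟩ := hpoints.surjOn hψ
    obtain ⟨ψ', -, rfl⟩ := hpoints.surjOn hψ'
    exact congrArg _ (hfiber.injOn trivial trivial h)
  · intro χ hχ
    obtain ⟨ψ, -, rfl⟩ := hfiber.surjOn hχ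
    exact ⟨ψ, hpoints.mapsTo trivial, rfl⟩

end RealFibers

section FiberParity

open Polynomial TensorProduct

lemma hasFiberParity_of_finite_free_unramified (R T : Type*) [CommRing R]
    [CommRing T] [Algebra R T] [Module.Free R T] [Module.Finite R T]
    [Algebra.FormallyUnramified R T] (g : R) : HasFiberParity R T g := by
  have isReduced [Algebra R ℝ] : IsReduced (ℝ ⊗[R] T) :=
    Algebra.FormallyUnramified.isReduced_of_field ℝ (ℝ ⊗[R] T)
  have odd_iff (ev : R →+* ℝ) :
      Odd (realFiber T ev).ncard ↔ Odd (Module.finrank R T) := by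
    have := ev.domain_nontrivial
    let := ev.toAlgebra
    have h := ncard_sep_eq_of_bijOn (bijOn_algHom_baseChange_realFiber (S := R) (T := T) ℝ)
      fun _ => True
    simp only [and_true, Set.ofPred_mem_eq] at h
    rw [← Module.finrank_baseChange (R := ℝ), odd_finrank_iff_odd_ncard_algHom]
    exact iff_of_eq (congrArg Odd h)
  refine ⟨fun ev _ => ?_, fun ev ev' _ _ => (odd_iff ev).trans (odd_iff ev').symm, fun φ =>
    ⟨(Algebra.lmul R T φ).charpoly, fun ev _ => ?_⟩⟩ <;> let := ev.toAlgebra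
  · have h := (bijOn_algHom_baseChange_realFiber (S := R) (T := T) ℝ).image_eq
    exact h ▸ Set.finite_univ.image _
  · have hcharpoly : (Algebra.lmul R T φ).charpoly.map ev =
        (Algebra.lmul ℝ (ℝ ⊗[R] T) (1 ⊗ₜ φ)).charpoly := by
      rw [← Algebra.baseChange_lmul, LinearMap.charpoly_baseChange]
      rfl
    refine CountsParity.of_bijOn ?_ (bijOn_algHom_baseChange_realFiber ℝ)
    refine ⟨((LinearMap.charpoly_monic _).map ev).ne_zero, fun α β hαβ hα hβ => ?_⟩
    rw [hcharpoly] at hα hβ ⊢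
    rw [← odd_ncard_algHom_mem_Ioo_iff _ hαβ hα hβ]
    simp

variable {S T R : Type*} [CommRing S] [IsDomain S] [CommRing T] [Algebra S T] [CommRing R]
  [Algebra S R]

lemma exists_ringHom_away_lift (h : S) (hh : h ≠ 0) [IsLocalization.Away h R] {g' : R}
    (hg' : g' ≠ 0) :
    ∃ g : S, g ≠ 0 ∧ h ∣ g ∧ ∀ ev : S →+* ℝ, ev g ≠ 0 →
      ∃ evR : R →+* ℝ, evR.comp (algebraMap S R) = ev ∧ evR g' ≠ 0 := by
  obtain ⟨k, s, hs⟩ := IsLocalization.Away.surj h g'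
  have hs0 : s ≠ 0 := by
    rintro rfl
    have hunit : IsUnit (algebraMap S R h ^ k) :=
      (IsLocalization.Away.algebraMap_isUnit h).pow k
    exact hg' (by simpa [hunit.mul_left_eq_zero] using hs)
  refine ⟨s * h, mul_ne_zero hs0 hh, dvd_mul_left _ _, fun ev hev => ?_⟩
  rw [map_mul] at hev
  have hunit : IsUnit (ev h) := (right_ne_zero_of_mul hev).isUnit
  refine ⟨IsLocalization.Away.lift h hunit, IsLocalization.Away.lift_comp h hunit, fun h0 => ?_⟩
  have := congrArg (IsLocalization.Away.lift h hunit) hs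
  rw [map_mul, h0, zero_mul, IsLocalization.Away.lift_eq] at this
  exact left_ne_zero_of_mul hev this.symm

lemma exists_hasFiberParity_of_away (h : S) (hh : h ≠ 0) [IsLocalization.Away h R] {g' : R}
    (hg' : g' ≠ 0) (H : HasFiberParity R (R ⊗[S] T) g') :
    ∃ g : S, g ≠ 0 ∧ HasFiberParity S T g := by
  obtain ⟨g, hg, hdvd, lift⟩ := exists_ringHom_away_lift h hh hg'
  have ncard_eq (evR : R →+* ℝ) : (realFiber T (evR.comp (algebraMap S R))).ncard =
      (realFiber (R ⊗[S] T) evR).ncard := by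
    rw [← (bijOn_realFiber_baseChange R evR).image_eq,
      (bijOn_realFiber_baseChange R evR).injOn.ncard_image]
  refine ⟨g, hg, fun ev hev => ?_, fun ev ev' hev hev' => ?_, fun φ => ?_⟩
  · obtain ⟨evR, rfl, hevR⟩ := lift ev hev
    rw [← (bijOn_realFiber_baseChange R evR).image_eq]
    exact (H.finite evR hevR).image _
  · obtain ⟨evR, rfl, hevR⟩ := lift ev hev
    obtain ⟨evR', rfl, hevR'⟩ := lift ev' hev'
    rw [ncard_eq, ncard_eq, H.odd_ncard_iff evR evR' hevR hevR']
  · obtain ⟨E', hE'⟩ := H.exists_countsParity (1 ⊗ₜ φ)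
    obtain ⟨b, hbpow, hb⟩ := IsLocalization.integerNormalization_spec (Submonoid.powers h) E'
    refine ⟨IsLocalization.integerNormalization (Submonoid.powers h) E', fun ev hev => ?_⟩
    obtain ⟨evR, rfl, hevR⟩ := lift ev hev
    have hb0 : evR (algebraMap S R b) ≠ 0 := by
      obtain ⟨j, rfl⟩ := hbpow
      obtain ⟨c, rfl⟩ := hdvd
      rw [map_mul] at hev
      simpa using pow_ne_zero j (left_ne_zero_of_mul hev)
    have hmap : (IsLocalization.integerNormalization (Submonoid.powers h) E').map
        (evR.comp (algebraMap S R)) = C (evR (algebraMap S R b)) * E'.map evR := by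
      rw [← Polynomial.map_map, hb, algebra_compatible_smul R, Polynomial.smul_eq_C_mul,
        Polynomial.map_mul, map_C]
    rw [hmap, countsParity_C_mul_iff hb0]
    exact (hE' evR hevR).of_bijOn (bijOn_realFiber_baseChange R evR)

lemma exists_hasFiberParity_of_finite_unramified [IsNoetherianRing S] [Module.Finite S T]
    [Algebra.FormallyUnramified S T] : ∃ g : S, g ≠ 0 ∧ HasFiberParity S T g := by
  have : Module.FinitePresentation S T := Module.finitePresentation_of_finite S T
  obtain ⟨r, hr, hfree, -⟩ := Module.FinitePresentation.exists_free_localizedModule_powers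
    (nonZeroDivisors S) (LocalizedModule.mkLinearMap (nonZeroDivisors S) T) (FractionRing S)
  have hr0 : r ≠ 0 := nonZeroDivisors.ne_zero hr
  let R := Localization (Submonoid.powers r)
  have : IsLocalization.Away r R :=
    inferInstanceAs (IsLocalization (Submonoid.powers r) (Localization (Submonoid.powers r)))
  have : IsDomain R := IsLocalization.isDomain_localization
    (powers_le_nonZeroDivisors_of_noZeroDivisors hr0)
  have : Module.Free R (R ⊗[S] T) :=
    Module.Free.of_equiv (LocalizedModule.equivTensorProduct (Submonoid.powers r) T)
  exact exists_hasFiberParity_of_away r hr0 one_ne_zero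
    (hasFiberParity_of_finite_free_unramified R (R ⊗[S] T) 1)

end FiberParity

section SeparableRelation

open Polynomial TensorProduct

/-- `x` is a root of a polynomial `r` over `S` such that `r` and its derivative generate an ideal
containing the constant `a`; this is separability of `x` wherever `a` does not vanish. -/
def IsSeparableRelation {S T : Type*} [CommRing S] [CommRing T] [Algebra S T] (r : S[X]) (a : S)
    (x : T) : Prop :=
  aeval x r = 0 ∧ ∃ u v : S[X], u * r + v * derivative r = C a

variable {S T R T' : Type*} [CommRing S] [CommRing T] [Algebra S T] [CommRing R] [CommRing T']
  [Algebra R T']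

lemma IsSeparableRelation.map {r : S[X]} {a : S} {x : T} (h : IsSeparableRelation r a x)
    (f : S →+* R) (F : T →+* T') (hF : F.comp (algebraMap S T) = (algebraMap R T').comp f) :
    IsSeparableRelation (r.map f) (f a) (F x) := by
  obtain ⟨hr, u, v, huv⟩ := h
  refine ⟨?_, u.map f, v.map f, ?_⟩
  · rw [aeval_def, eval₂_map, ← hF, ← hom_eval₂, ← aeval_def, hr, map_zero]
  · rw [derivative_map, ← Polynomial.map_mul, ← Polynomial.map_mul, ← Polynomial.map_add, huv,
      map_C]

lemma IsSeparableRelation.ne_zero {r : S[X]} {a : S} {x : T} (h : IsSeparableRelation r a x)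
    (ha : a ≠ 0) : r ≠ 0 := by
  rintro rfl
  obtain ⟨-, u, v, huv⟩ := h
  rw [mul_zero, derivative_zero, mul_zero, zero_add, eq_comm, C_eq_zero] at huv
  exact ha huv

lemma IsSeparableRelation.smul_kaehlerDifferential_D {r : S[X]} {a : S} {x : T}
    (h : IsSeparableRelation r a x) : a • KaehlerDifferential.D S T x = 0 := by
  obtain ⟨hr, u, v, huv⟩ := h
  have hD : aeval x (derivative r) • KaehlerDifferential.D S T x = 0 := by
    rw [← Derivation.map_aeval, hr, map_zero]
  have hva : aeval x v * aeval x (derivative r) = algebraMap S T a := by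
    simpa [hr] using congrArg (aeval x) huv
  rw [algebra_compatible_smul T, ← hva, mul_smul, hD, smul_zero]

lemma formallyUnramified_of_adjoin_eq_top {X : Set T} (hX : Algebra.adjoin S X = ⊤)
    (hD : ∀ x ∈ X, KaehlerDifferential.D S T x = 0) : Algebra.FormallyUnramified S T := by
  have hzero : KaehlerDifferential.D S T = 0 := Derivation.ext_of_adjoin_eq_top X hX hD
  refine ⟨?_⟩
  rw [← Submodule.subsingleton_iff T, ← subsingleton_iff_bot_eq_top,
    ← KaehlerDifferential.span_range_derivation, hzero, eq_comm, Submodule.span_eq_bot]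
  rintro _ ⟨y, rfl⟩
  rfl

lemma isIntegral_of_isUnit_leadingCoeff {r : S[X]} {x : T} (hr : aeval x r = 0)
    (hunit : IsUnit r.leadingCoeff) : IsIntegral S x := by
  obtain ⟨w, hw⟩ := hunit
  have h := (isIntegral_leadingCoeff_smul r x hr).smul (↑w⁻¹ : S)
  rwa [← hw, smul_smul, Units.inv_mul, one_smul] at h

lemma exists_isSeparableRelation_of_separable {K : Type*} [IsDomain S] [Field K]
    [Algebra S K] [IsFractionRing S K] {L : Type*} [CommRing L] [Algebra K L]
    [Algebra S L] [IsScalarTower S K L] {m : K[X]} (hm : m.Separable) {y : L}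
    (hy : aeval y m = 0) : ∃ r : S[X], ∃ a : S, a ≠ 0 ∧ IsSeparableRelation r a y := by
  obtain ⟨u, v, huv⟩ := hm
  have clear (p : K[X]) : ∃ q : S[X], ∃ b : S, b ≠ 0 ∧ q.map (algebraMap S K) =
      C (algebraMap S K b) * p := by
    obtain ⟨b, hb, h⟩ := IsLocalization.integerNormalization_spec (nonZeroDivisors S) p
    exact ⟨_, b, nonZeroDivisors.ne_zero hb, by
      rw [h, algebra_compatible_smul K, Polynomial.smul_eq_C_mul]⟩
  obtain ⟨r, b, hb, hr⟩ := clear m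
  obtain ⟨u', c, hc, hu⟩ := clear u
  obtain ⟨v', d, hd, hv⟩ := clear v
  refine ⟨r, b * c * d, mul_ne_zero (mul_ne_zero hb hc) hd, ?_, C d * u', C c * v', ?_⟩
  · rw [← aeval_map_algebraMap K, hr, map_mul, hy, mul_zero]
  · apply Polynomial.map_injective (algebraMap S K) (IsFractionRing.injective S K)
    simp only [Polynomial.map_add, Polynomial.map_mul, ← derivative_map, hr, hu, hv, map_C, map_mul,
      derivative_C_mul]
    linear_combination (C (algebraMap S K b) * C (algebraMap S K c) * C (algebraMap S K d)) * huv

lemma exists_isSeparableRelation_of_isAlgebraic [IsDomain S] [CharZero S] [IsDomain T] {x : T}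
    (hx : IsAlgebraic S x) : ∃ r : S[X], ∃ a : S, a ≠ 0 ∧ IsSeparableRelation r a x := by
  by_cases hinj : Function.Injective (algebraMap S T)
  · let K := FractionRing S
    let L := FractionRing T
    have hSL : Function.Injective (algebraMap S L) := by
      rw [IsScalarTower.algebraMap_eq S T L]
      exact (IsFractionRing.injective T L).comp hinj
    have : FaithfulSMul S L := (faithfulSMul_iff_algebraMap_injective S L).2 hSL
    let : Algebra K L := FractionRing.liftAlgebra S L
    have : IsScalarTower S K L := FractionRing.isScalarTower_liftAlgebra S L
    have : CharZero K := charZero_of_injective_algebraMap (IsFractionRing.injective S K)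
    have hy : IsAlgebraic K (algebraMap T L x) :=
      hx.algebraMap.extendScalars (IsFractionRing.injective S K)
    obtain ⟨r, a, ha, hr, huv⟩ := exists_isSeparableRelation_of_separable (S := S)
      (minpoly.irreducible hy.isIntegral).separable (minpoly.aeval K (algebraMap T L x))
    rw [aeval_algebraMap_apply, map_eq_zero_iff _ (IsFractionRing.injective T L)] at hr
    exact ⟨r, a, ha, hr, huv⟩
  · rw [injective_iff_map_eq_zero] at hinj
    push Not at hinj
    obtain ⟨s, hs, hs0⟩ := hinj
    exact ⟨C s, s, hs0, by rw [aeval_C, hs], 1, 0, by simp⟩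

lemma exists_hasFiberParity (S T : Type*) [CommRing S] [IsDomain S] [CharZero S]
    [IsNoetherianRing S] [CommRing T] [IsDomain T] [Algebra S T] [Algebra.FiniteType S T]
    [Algebra.IsAlgebraic S T] : ∃ g : S, g ≠ 0 ∧ HasFiberParity S T g := by
  obtain ⟨X, hX⟩ := Algebra.FiniteType.out (R := S) (A := T)
  choose r a ha hr using fun x : T =>
    exists_isSeparableRelation_of_isAlgebraic (Algebra.IsAlgebraic.isAlgebraic (R := S) x)
  let h : S := ∏ x ∈ X, a x * (r x).leadingCoeff
  have hh : h ≠ 0 := Finset.prod_ne_zero_iff.2 fun x _ =>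
    mul_ne_zero (ha x) (leadingCoeff_ne_zero.2 ((hr x).ne_zero (ha x)))
  let R := Localization.Away h
  have hinj : Function.Injective (algebraMap S R) :=
    IsLocalization.injective R (powers_le_nonZeroDivisors_of_noZeroDivisors hh)
  have : IsDomain R :=
    IsLocalization.isDomain_localization (powers_le_nonZeroDivisors_of_noZeroDivisors hh)
  have : IsNoetherianRing R := IsLocalization.isNoetherianRing (Submonoid.powers h) R inferInstance
  have isUnit (x : T) (hx : x ∈ X) : IsUnit (algebraMap S R (a x * (r x).leadingCoeff)) :=
    isUnit_of_dvd_unit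
      (map_dvd _ (Finset.dvd_prod_of_mem (fun x => a x * (r x).leadingCoeff) hx))
      (IsLocalization.Away.algebraMap_isUnit h)
  have hadjoin : Algebra.adjoin R ((fun x => (1 : R) ⊗ₜ[S] x) '' (X : Set T)) = ⊤ :=
    Algebra.TensorProduct.adjoin_one_tmul_image_eq_top (X : Set T) hX
  have relation (x : T) : IsSeparableRelation ((r x).map (algebraMap S R))
      (algebraMap S R (a x)) ((1 : R) ⊗ₜ[S] x) :=
    (hr x).map (algebraMap S R) (Algebra.TensorProduct.includeRight : T →ₐ[S] R ⊗[S] T).toRingHom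
      Algebra.TensorProduct.includeLeftRingHom_comp_algebraMap.symm
  have : Module.Finite R (R ⊗[S] T) := by
    refine ⟨?_⟩
    rw [← Algebra.top_toSubmodule, ← hadjoin]
    refine fg_adjoin_of_finite (X.finite_toSet.image _) ?_
    rintro _ ⟨x, hx, rfl⟩
    refine isIntegral_of_isUnit_leadingCoeff (relation x).1 ?_
    rw [leadingCoeff_map_of_injective hinj]
    exact isUnit_of_mul_isUnit_right (map_mul (algebraMap S R) _ _ ▸ isUnit x hx)
  have : Algebra.FormallyUnramified R (R ⊗[S] T) := by
    refine formallyUnramified_of_adjoin_eq_top hadjoin ?_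
    rintro _ ⟨x, hx, rfl⟩
    have hunit := isUnit_of_mul_isUnit_left (map_mul (algebraMap S R) _ _ ▸ isUnit x hx)
    exact hunit.smul_eq_zero.1 (relation x).smul_kaehlerDifferential_D
  obtain ⟨g', hg', H⟩ := exists_hasFiberParity_of_finite_unramified (S := R) (T := R ⊗[S] T)
  exact exists_hasFiberParity_of_away h hh hg' H

end SeparableRelation

section LocalLifting

open Polynomial Filter Topology

variable {S T : Type*} [CommRing S] [CommRing T] [Algebra S T] {g : S}

lemma continuous_eval_map {Z : Type*} [TopologicalSpace Z] {ev : Z → S →+* ℝ}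
    (hev : ∀ s, Continuous fun z => ev z s) (E : S[X]) (α : ℝ) :
    Continuous fun z => (E.map (ev z)).eval α := by
  simp only [eval_map, eval₂_eq_sum, Polynomial.sum]
  exact continuous_finsetSum _ fun i _ => (hev _).mul continuous_const

lemma ringHom_algebraMap_real [Algebra ℝ T] (χ : T →+* ℝ) (r : ℝ) : χ (algebraMap ℝ T r) = r :=
  DFunLike.congr_fun (Subsingleton.elim (χ.comp (algebraMap ℝ T)) (RingHom.id ℝ)) r

lemma eventually_nhdsGT_forall_lt {F : Set ℝ} (hF : F.Finite) (a : ℝ) :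
    ∀ᶠ β in 𝓝[>] a, ∀ f ∈ F, a < f → β < f := by
  rw [eventually_all_finite hF]
  intro f _
  by_cases hf : a < f
  · filter_upwards [nhdsWithin_le_nhds (Iio_mem_nhds hf)] with β hβ _ using hβ
  · exact Eventually.of_forall fun β h => absurd h hf

lemma exists_mem_realFiber_of_eval_mul_neg {E : S[X]} {φ : T} {ev : S →+* ℝ}
    (hE : CountsParity (E.map ev) (realFiber T ev) fun χ => χ φ) {α β : ℝ} (hαβ : α < β)
    (hneg : (E.map ev).eval α * (E.map ev).eval β < 0) :
    ∃ χ ∈ realFiber T ev, α < χ φ ∧ χ φ < β := by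
  have hodd := (hE.2 α β hαβ (left_ne_zero_of_mul hneg.ne) (right_ne_zero_of_mul hneg.ne)).2 hneg
  obtain ⟨χ, hχ, h⟩ := Set.nonempty_of_ncard_ne_zero hodd.pos.ne'
  exact ⟨χ, hχ, h⟩

/-- The square of the Euclidean distance from `a` to `x`. Being polynomial in the coordinates, it
can be evaluated at real points of an algebra. -/
def sqDist {ι : Type*} [Fintype ι] (a x : ι → ℝ) : ℝ :=
  ∑ i, (x i - a i) ^ 2

section SqDist

variable {ι : Type*} [Fintype ι]

lemma sqDist_self (a : ι → ℝ) : sqDist a a = 0 := by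
  simp only [sqDist, sub_self, ne_eq, OfNat.ofNat_ne_zero, not_false_eq_true, zero_pow,
    Finset.sum_const_zero]

lemma sqDist_nonneg (a x : ι → ℝ) : 0 ≤ sqDist a x :=
  Finset.sum_nonneg fun _ _ => sq_nonneg _

lemma eq_of_sqDist_nonpos {a x : ι → ℝ} (h : sqDist a x ≤ 0) : x = a := by
  have hsum := le_antisymm h (sqDist_nonneg a x)
  rw [sqDist, Finset.sum_eq_zero_iff_of_nonneg fun _ _ => sq_nonneg _] at hsum
  exact funext fun i => sub_eq_zero.1 (sq_eq_zero_iff.1 (hsum i (Finset.mem_univ i)))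

lemma continuous_sqDist (a : ι → ℝ) : Continuous (sqDist a) := by
  unfold sqDist
  fun_prop

lemma setOf_sqDist_le_subset_closedBall (a : ι → ℝ) {r : ℝ} (hr : 0 ≤ r) :
    {x | sqDist a x ≤ r ^ 2} ⊆ Metric.closedBall a r := by
  intro x hx
  rw [Metric.mem_closedBall, dist_pi_le_iff hr]
  intro i
  have hi : (x i - a i) ^ 2 ≤ sqDist a x :=
    Finset.single_le_sum (f := fun i => (x i - a i) ^ 2) (fun i _ => sq_nonneg _)
      (Finset.mem_univ i)
  exact abs_le_of_sq_le_sq (hi.trans hx) hr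

lemma isCompact_setOf_sqDist_le (a : ι → ℝ) {ρ : ℝ} (hρ : 0 ≤ ρ) :
    IsCompact {x | sqDist a x ≤ ρ} := by
  refine (isCompact_closedBall a √ρ).of_isClosed_subset
    (isClosed_le (continuous_sqDist a) continuous_const) ?_
  simpa only [Real.sq_sqrt hρ] using setOf_sqDist_le_subset_closedBall a ρ.sqrt_nonneg

lemma exists_setOf_sqDist_le_subset {a : ι → ℝ} {U : Set (ι → ℝ)} (hU : U ∈ 𝓝 a) :
    ∃ ρ, 0 < ρ ∧ {x | sqDist a x ≤ ρ} ⊆ U := by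
  obtain ⟨r, hr, h⟩ := Metric.nhds_basis_closedBall.mem_iff.1 hU
  exact ⟨r ^ 2, by positivity, (setOf_sqDist_le_subset_closedBall a hr.le).trans h⟩

lemma exists_forall_ringHom_apply_eq_sqDist [Algebra ℝ T] (x : ι → T) (a : ι → ℝ) :
    ∃ φ : T, ∀ χ : T →+* ℝ, χ φ = sqDist a (χ ∘ x) :=
  ⟨∑ i, (x i - algebraMap ℝ T (a i)) ^ 2, fun χ => by
    simp only [sqDist, Function.comp_apply, map_sum, map_pow, map_sub, ringHom_algebraMap_real]⟩

end SqDist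

/- A real point `χ₀` is the only point of its fiber at which `φ = sqDist` is smaller than a
suitable `β`. An odd number of points persists under small perturbations of the base point. -/
lemma eventually_exists_mem_realFiber_sqDist_lt [Algebra ℝ T] {ι : Type*} [Fintype ι] {x : ι → T}
    (hx : Algebra.adjoin S (Set.range x) = ⊤) (H : HasFiberParity S T g) {Z : Type*}
    [TopologicalSpace Z] {ev : Z → S →+* ℝ} (hev : ∀ s, Continuous fun z => ev z s) {z₀ : Z}
    (hg : ev z₀ g ≠ 0) {χ₀ : T →+* ℝ} (hχ₀ : χ₀ ∈ realFiber T (ev z₀)) {δ : ℝ} (hδ : 0 < δ) :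
    ∀ᶠ z in 𝓝 z₀, ∃ χ ∈ realFiber T (ev z), sqDist (χ₀ ∘ x) (χ ∘ x) < δ := by
  obtain ⟨φ, hφ⟩ := exists_forall_ringHom_apply_eq_sqDist x (χ₀ ∘ x)
  have hφ₀ : χ₀ φ = 0 := by rw [hφ, sqDist_self]
  have eq_of_nonpos (χ : T →+* ℝ) (hχ : χ ∈ realFiber T (ev z₀)) (h : χ φ ≤ 0) : χ = χ₀ :=
    realFiber_ext hx hχ hχ₀ <| Set.forall_mem_range.2 fun i =>
      congrFun (eq_of_sqDist_nonpos (hφ χ ▸ h)) i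
  obtain ⟨E, hE⟩ := H.exists_countsParity φ
  have hroots := finite_setOfPred_isRoot (hE _ hg).1
  obtain ⟨α, hα, hα0⟩ := (Set.Iio_infinite (0 : ℝ)).exists_notMem_finite hroots
  obtain ⟨β, hβroots, hβfiber, hβ, hβδ⟩ := ((eventually_nhdsGT_forall_lt hroots 0).and
    ((eventually_nhdsGT_forall_lt ((H.finite _ hg).image fun χ => χ φ) 0).and
      (Ioo_mem_nhdsGT hδ))).exists
  have hαβ : α < β := lt_trans hα hβ
  have hneg : ((E.map (ev z₀)).eval α) * ((E.map (ev z₀)).eval β) < 0 := by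
    refine ((hE _ hg).2 α β hαβ hα0 fun h => (hβroots β h hβ).false).1 ?_
    have hsingleton : {χ ∈ realFiber T (ev z₀) | α < χ φ ∧ χ φ < β} = {χ₀} := by
      ext χ
      constructor
      · rintro ⟨hχ, -, hlt⟩
        exact eq_of_nonpos χ hχ (not_lt.1 fun h => (hβfiber _ ⟨χ, hχ, rfl⟩ h).not_gt hlt)
      · rintro rfl
        exact ⟨hχ₀, hφ₀ ▸ hα, hφ₀ ▸ hβ⟩
    rw [hsingleton, Set.ncard_singleton]
    exact odd_one
  have hcont := (continuous_eval_map hev E α).mul (continuous_eval_map hev E β)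
  filter_upwards [hcont.continuousAt.eventually_lt continuousAt_const hneg,
    (hev g).continuousAt.eventually_ne hg] with z hz hgz
  obtain ⟨χ, hχ, -, hlt⟩ := exists_mem_realFiber_of_eval_mul_neg (hE _ hgz) hαβ hz
  exact ⟨χ, hχ, hφ χ ▸ hlt.trans hβδ⟩

end LocalLifting

section ParityAlongPath

open Polynomial Filter Topology

lemma iff_of_forall_eventually_iff {Z : Type*} [TopologicalSpace Z] {s G : Set Z}
    (hs : IsPreconnected s) (hG : s ⊆ closure (s ∩ G)) {p : Z → Prop}
    (h : ∀ x ∈ s, ∃ q : Prop, ∀ᶠ y in 𝓝 x, y ∈ s ∩ G → (p y ↔ q)) {x y : Z}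
    (hx : x ∈ s ∩ G) (hy : y ∈ s ∩ G) : p x ↔ p y := by
  choose! q hq using h
  have hpq (x) (hx : x ∈ s ∩ G) : p x ↔ q x := (hq x hx.1).self_of_nhds hx
  rw [hpq x hx, hpq y hy]
  refine hs.induction₂ (fun x y => q x ↔ q y) (fun x hx => ?_)
    (fun _ _ _ _ _ _ => Iff.trans) (fun _ _ _ _ => Iff.symm) hx.1 hy.1
  filter_upwards [nhdsWithin_le_nhds (hq x hx).eventually_nhds, self_mem_nhdsWithin] with y hxy hys
  obtain ⟨z, hz, hxz, hyz⟩ :=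
    ((mem_closure_iff_frequently.1 (hG hys)).and_eventually (hxy.and (hq y hys))).exists
  exact (hxz hz).symm.trans (hyz hz)

lemma Icc_subset_closure_diff_of_finite {a b : ℝ} (hab : a < b) {F : Set ℝ} (hF : F.Finite) :
    Set.Icc a b ⊆ closure (Set.Icc a b ∩ Fᶜ) := by
  have h : Set.Ioo a b ⊆ closure (Set.Icc a b ∩ Fᶜ) :=
    ((hF.countable.dense_compl ℝ).open_subset_closure_inter isOpen_Ioo).trans
      (closure_mono (Set.inter_subset_inter_left _ Set.Ioo_subset_Icc_self))
  simpa only [closure_Ioo hab.ne] using closure_minimal h isClosed_closure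

lemma exists_eq_pow_mul_map_evalRingHom_ne_zero {E : ℝ[X][X]} (hE : E ≠ 0) (t₀ : ℝ) :
    ∃ (m : ℕ) (E₁ : ℝ[X][X]), E = C (X - C t₀) ^ m * E₁ ∧ E₁.map (evalRingHom t₀) ≠ 0 := by
  obtain ⟨m, E₁, hE₁, hfactor⟩ := WfDvdMonoid.max_power_factor' hE (x := C (X - C t₀))
    (isUnit_C.not.2 (not_isUnit_X_sub_C t₀))
  refine ⟨m, E₁, hfactor, fun h => hE₁ ?_⟩
  rw [C_dvd_iff_dvd_coeff]
  intro i
  rw [dvd_iff_isRoot]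
  simpa using congrArg (coeff · i) h

lemma exists_eventually_eval_mul_neg_iff {E : ℝ[X][X]} (hE : E ≠ 0) (t₀ : ℝ) {U V : Set ℝ}
    (hU : U.Infinite) (hV : V.Infinite) :
    ∃ α ∈ U, ∃ β ∈ V, ∃ q : Prop, ∀ᶠ t in 𝓝 t₀, E.map (evalRingHom t) ≠ 0 →
      (E.map (evalRingHom t)).eval α ≠ 0 ∧ (E.map (evalRingHom t)).eval β ≠ 0 ∧
      ((E.map (evalRingHom t)).eval α * (E.map (evalRingHom t)).eval β < 0 ↔ q) := by
  obtain ⟨m, E₁, rfl, hE₁⟩ := exists_eq_pow_mul_map_evalRingHom_ne_zero hE t₀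
  obtain ⟨α, hα, hα0⟩ := hU.exists_notMem_finite (finite_setOfPred_isRoot hE₁)
  obtain ⟨β, hβ, hβ0⟩ := hV.exists_notMem_finite (finite_setOfPred_isRoot hE₁)
  let e (t c : ℝ) : ℝ := (E₁.map (evalRingHom t)).eval c
  have he (c : ℝ) : Continuous fun t => e t c := continuous_eval_map Polynomial.continuous E₁ c
  have hcont : Continuous fun t => e t α * e t β := (he α).mul (he β)
  have hsign : ∀ᶠ t in 𝓝 t₀, (e t α * e t β < 0 ↔ e t₀ α * e t₀ β < 0) := by
    rcases (mul_ne_zero hα0 hβ0 : e t₀ α * e t₀ β ≠ 0).lt_or_gt with h | h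
    · filter_upwards [hcont.continuousAt.eventually_lt continuousAt_const h] with t ht
      exact iff_of_true ht h
    · filter_upwards [continuousAt_const.eventually_lt hcont.continuousAt h] with t ht
      exact iff_of_false ht.not_gt h.not_gt
  refine ⟨α, hα, β, hβ, e t₀ α * e t₀ β < 0, ?_⟩
  filter_upwards [hsign, (he α).continuousAt.eventually_ne hα0,
    (he β).continuousAt.eventually_ne hβ0] with t ht htα htβ hEt
  simp only [Polynomial.map_mul, Polynomial.map_pow, map_C, eval_mul, eval_pow, eval_C,
    coe_evalRingHom, eval_sub, eval_X] at hEt ⊢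
  have hm : (t - t₀) ^ m ≠ 0 := fun h0 => hEt (by rw [← C_pow, h0, C_0, zero_mul])
  refine ⟨mul_ne_zero hm htα, mul_ne_zero hm htβ, ?_⟩
  rw [← ht, mul_mul_mul_comm, ← smul_eq_mul, smul_neg_iff_of_pos_left (mul_self_pos.2 hm)]

variable {S T : Type*} [CommRing S] [CommRing T] [Algebra S T] {g : S}

lemma odd_ncard_realFiber_lt_iff (H : HasFiberParity S T g) (L : S →+* ℝ[X])
    (h0 : (L g).eval 0 ≠ 0) (h1 : (L g).eval 1 ≠ 0) (φ : T) {a ρ₁ ρ₂ : ℝ} (hρ : ρ₁ < ρ₂)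
    (haρ : a < ρ₁)
    (hgap : ∀ t ∈ Set.Icc (0 : ℝ) 1, ∀ χ ∈ realFiber T ((evalRingHom t).comp L),
      a < χ φ ∧ (χ φ < ρ₁ ∨ ρ₂ < χ φ)) :
    Odd {χ ∈ realFiber T ((evalRingHom 0).comp L) | χ φ < ρ₁}.ncard ↔
      Odd {χ ∈ realFiber T ((evalRingHom 1).comp L) | χ φ < ρ₁}.ncard := by
  have hLg : L g ≠ 0 := fun h => h0 (by rw [h, eval_zero])
  obtain ⟨E, hE⟩ := H.exists_countsParity φ
  have hEmap (t : ℝ) : E.map ((evalRingHom t).comp L) = (E.map L).map (evalRingHom t) :=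
    (Polynomial.map_map _ _ _).symm
  have hE0 : E.map L ≠ 0 := fun h => (hE _ h0).1 (by rw [hEmap, h, Polynomial.map_zero])
  refine iff_of_forall_eventually_iff (isPreconnected_Icc (a := (0 : ℝ)) (b := 1))
    (Icc_subset_closure_diff_of_finite one_pos (finite_setOfPred_isRoot hLg))
    (p := fun t => Odd {χ ∈ realFiber T ((evalRingHom t).comp L) | χ φ < ρ₁}.ncard)
    (fun t₀ _ => ?_) ⟨by simp, h0⟩ ⟨by simp, h1⟩
  obtain ⟨α, hα, β, hβ, q, hq⟩ := exists_eventually_eval_mul_neg_iff hE0 t₀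
    (Set.Iio_infinite a) (Set.Ioo_infinite hρ)
  refine ⟨q, ?_⟩
  filter_upwards [hq] with t ht htG
  obtain ⟨hEt, hparity⟩ := hE ((evalRingHom t).comp L) htG.2
  rw [hEmap] at hEt hparity
  obtain ⟨hα0, hβ0, hsign⟩ := ht hEt
  rw [← hsign, ← hparity α β ((hα.trans haρ).trans hβ.1) hα0 hβ0]
  congr! 3
  ext χ
  refine and_congr_right fun hχ => ⟨fun h => ⟨hα.trans (hgap t htG.1 χ hχ).1, h.trans hβ.1⟩,
    fun h => (hgap t htG.1 χ hχ).2.resolve_right (hβ.2.trans' h.2).not_gt⟩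

lemma odd_ncard_realFiber_sqDist_lt_iff {κ ι : Type*} [Fintype ι]
    [Algebra (MvPolynomial κ ℝ) T] [Algebra ℝ T] {g : MvPolynomial κ ℝ}
    (H : HasFiberParity (MvPolynomial κ ℝ) T g) {w₀ w₁ : κ → ℝ}
    (h₀ : MvPolynomial.eval w₀ g ≠ 0) (h₁ : MvPolynomial.eval w₁ g ≠ 0) (x : ι → T) (a : ι → ℝ)
    {ρ₁ ρ₂ : ℝ} (hρ₁ : 0 < ρ₁) (hρ : ρ₁ < ρ₂)
    (hgap : ∀ w ∈ segment ℝ w₀ w₁, ∀ χ ∈ realFiber T (MvPolynomial.eval w),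
      sqDist a (χ ∘ x) < ρ₁ ∨ ρ₂ < sqDist a (χ ∘ x)) :
    Odd {χ ∈ realFiber T (MvPolynomial.eval w₀) | sqDist a (χ ∘ x) < ρ₁}.ncard ↔
      Odd {χ ∈ realFiber T (MvPolynomial.eval w₁) | sqDist a (χ ∘ x) < ρ₁}.ncard := by
  let L : MvPolynomial κ ℝ →+* ℝ[X] :=
    MvPolynomial.eval₂Hom C fun k => C (w₀ k) + X * C (w₁ k - w₀ k)
  have hL (t : ℝ) : (evalRingHom t).comp L = MvPolynomial.eval (w₀ + t • (w₁ - w₀)) := by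
    apply MvPolynomial.ringHom_ext <;> intro <;> simp [L]
  have hL₀ : (evalRingHom 0).comp L = MvPolynomial.eval w₀ := by simp [hL]
  have hL₁ : (evalRingHom 1).comp L = MvPolynomial.eval w₁ := by simp [hL]
  obtain ⟨φ, hφ⟩ := exists_forall_ringHom_apply_eq_sqDist x a
  have h := odd_ncard_realFiber_lt_iff H L (by simpa [← hL₀] using h₀) (by simpa [← hL₁] using h₁)
    φ (a := -1) hρ (by linarith) fun t ht χ hχ => ?_
  · simpa only [hL₀, hL₁, hφ] using h
  · rw [hL] at hχ
    rw [hφ]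
    exact ⟨by linarith [sqDist_nonneg a (χ ∘ x)],
      hgap _ (segment_eq_image' ℝ w₀ w₁ ▸ ⟨t, ht, rfl⟩) χ hχ⟩

end ParityAlongPath

section AlgebraicOfInjective

open MvPolynomial Filter Topology

lemma isAlgebraic_mvPolynomial_of_isTranscendenceBasis {R A ι : Type*} [CommRing R] [Nontrivial R]
    [CommRing A] [Algebra R A] [Algebra (MvPolynomial ι R) A] [IsScalarTower R (MvPolynomial ι R) A]
    {x : ι → A} (hx : IsTranscendenceBasis R x)
    (hX : ∀ i, algebraMap (MvPolynomial ι R) A (X i) = x i) :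
    Algebra.IsAlgebraic (MvPolynomial ι R) A := by
  have := hx.isAlgebraic
  have haeval : IsScalarTower.toAlgHom R (MvPolynomial ι R) A = aeval x :=
    algHom_ext fun i => by simp [hX]
  have hrange : (aeval x : MvPolynomial ι R →ₐ[R] A).range = Algebra.adjoin R (Set.range x) :=
    (Algebra.adjoin_range_eq_range_aeval R x).symm
  let f : MvPolynomial ι R →ₐ[R] Algebra.adjoin R (Set.range x) :=
    (aeval x).codRestrict _ fun p => hrange ▸ ⟨p, rfl⟩
  refine Algebra.IsAlgebraic.of_ringHom_of_comp_eq f (RingHom.id A) ?_ Function.injective_id ?_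
  · rintro ⟨y, hy⟩
    obtain ⟨p, rfl⟩ := hrange ▸ hy
    exact ⟨p, rfl⟩
  · ext p
    · exact (DFunLike.congr_fun haeval (C p)).symm
    · exact (DFunLike.congr_fun haeval (X p)).symm

lemma exists_continuous_family_through_ringHom {A D ι : Type*} [CommRing A] [CommRing D]
    [Algebra A D] [Algebra (MvPolynomial ι A) D] [IsScalarTower A (MvPolynomial ι A) D]
    (χ₀ : D →+* ℝ) (i : ι) :
    ∃ ev : ℝ → MvPolynomial ι A →+* ℝ, (∀ p, Continuous (ev · p)) ∧
      χ₀ ∈ realFiber D (ev (χ₀ (algebraMap (MvPolynomial ι A) D (X i)))) ∧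
      (∀ r, ev r (X i) = r) ∧ ∀ r a, ev r (C a) = χ₀ (algebraMap A D a) := by
  classical
  let z₀ (j : ι) : ℝ := χ₀ (algebraMap (MvPolynomial ι A) D (X j))
  refine ⟨fun r => (eval (Function.update z₀ i r)).comp (map (χ₀.comp (algebraMap A D))),
    fun p => (continuous_eval _).comp (continuous_const.update i continuous_id), ?_, ?_, ?_⟩
  · refine ringHom_ext (fun a => ?_) fun j => ?_
    · rw [RingHom.comp_apply, ← algebraMap_eq,
        ← IsScalarTower.algebraMap_apply A (MvPolynomial ι A) D]
      simp
    · simp [z₀]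
  · intro r
    simp
  · intro r a
    simp

/- Otherwise `D` has a transcendental element over `A`, and by local lifting its value can be moved
while the values on `A` stay fixed. -/
lemma isAlgebraic_of_injOn_realPoints {A D : Type*} [CommRing A] [IsDomain A] [IsNoetherianRing A]
    [Algebra ℝ A] [CommRing D] [IsDomain D] [Algebra ℝ D] [Algebra A D] [IsScalarTower ℝ A D]
    [Algebra.FiniteType A D] (hdense : ∀ d : D, d ≠ 0 → ∃ χ : D →+* ℝ, χ d ≠ 0)
    (hinj : ∀ χ χ' : D →+* ℝ, χ.comp (algebraMap A D) = χ'.comp (algebraMap A D) → χ = χ') :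
    Algebra.IsAlgebraic A D := by
  by_contra hnot
  have : FaithfulSMul A D := (faithfulSMul_iff_algebraMap_injective A D).2
    (not_not.1 (hnot ∘ Algebra.isAlgebraic_of_not_injective))
  have : CharZero A := charZero_of_injective_algebraMap (algebraMap ℝ A).injective
  obtain ⟨B, hB⟩ := exists_isTranscendenceBasis A D
  have : Finite B := Cardinal.lt_aleph0_iff_set_finite.1
    (hB.cardinalMk_eq_trdeg.trans_lt trdeg_lt_aleph0_of_finiteType)
  obtain ⟨b⟩ : Nonempty B := not_isEmpty_iff.1 (hnot ∘ hB.isEmpty_iff_isAlgebraic.1)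
  let : Algebra (MvPolynomial B A) D := (aeval ((↑) : B → D)).toAlgebra
  have hX (i : B) : algebraMap (MvPolynomial B A) D (X i) = i := aeval_X _ i
  have : IsScalarTower A (MvPolynomial B A) D :=
    .of_algebraMap_eq fun a => (aeval_C ((↑) : B → D) a).symm
  have := isAlgebraic_mvPolynomial_of_isTranscendenceBasis hB hX
  have : Algebra.FiniteType (MvPolynomial B A) D := .of_restrictScalars_finiteType A _ D
  obtain ⟨g, hg, H⟩ := exists_hasFiberParity (MvPolynomial B A) D
  obtain ⟨χ₀, hχ₀⟩ := hdense (algebraMap _ D g)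
    fun h => hg ((injective_iff_map_eq_zero _).1 hB.1 g h)
  obtain ⟨ev, hev, hev₀, hevX, hevC⟩ :=
    exists_continuous_family_through_ringHom (A := A) χ₀ b
  obtain ⟨Y, hY⟩ := Algebra.FiniteType.out (R := MvPolynomial B A) (A := D)
  have hlift := eventually_exists_mem_realFiber_sqDist_lt (x := ((↑) : Y → D))
    (by simpa using hY) H hev (by rwa [← realFiber_apply hev₀]) hev₀ one_pos
  obtain ⟨r, ⟨χ, hχ, -⟩, hr⟩ :=
    ((hlift.filter_mono nhdsWithin_le_nhds).and (self_mem_nhdsWithin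
      (s := {χ₀ (algebraMap (MvPolynomial B A) D (X b))}ᶜ))).exists
  refine hr ?_
  have hχχ₀ : χ = χ₀ := hinj χ χ₀ <| RingHom.ext fun a => by
    rw [RingHom.comp_apply, IsScalarTower.algebraMap_apply A (MvPolynomial B A) D,
      realFiber_apply hχ]
    exact hevC r a
  rw [Set.mem_singleton_iff, ← hχχ₀, realFiber_apply hχ, hevX]

end AlgebraicOfInjective

section InjectivePolynomialMap

open MvPolynomial Filter Topology

variable {σ τ : Type*}

/-- The map `ℝ^σ → ℝ^τ` with polynomial coordinates `P`. -/
noncomputable def polyMap (P : τ → MvPolynomial σ ℝ) (x : σ → ℝ) : τ → ℝ :=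
  fun j => eval x (P j)

lemma continuous_polyMap (P : τ → MvPolynomial σ ℝ) : Continuous (polyMap P) :=
  continuous_pi fun j => continuous_eval (P j)

lemma eval_polyMap (P : τ → MvPolynomial σ ℝ) (x : σ → ℝ) (p : MvPolynomial τ ℝ) :
    eval (polyMap P x) p = eval x (aeval P p) := by
  induction p using MvPolynomial.induction_on with
  | C r => simp
  | add p q hp hq => simp [hp, hq]
  | mul_X p j hp => simp [hp, polyMap]

lemma ringHom_eq_eval (χ : MvPolynomial σ ℝ →+* ℝ) : χ = eval fun i => χ (X i) := by
  refine ringHom_ext (fun r => ?_) fun i => by rw [eval_X]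
  rw [eval_C, ← algebraMap_eq, ringHom_algebraMap_real]

lemma mem_realFiber_eval_iff {T : Type*} [CommRing T] [Algebra ℝ T] [Algebra (MvPolynomial τ ℝ) T]
    [IsScalarTower ℝ (MvPolynomial τ ℝ) T] {y : τ → ℝ} {χ : T →+* ℝ} :
    χ ∈ realFiber T (eval y) ↔ ∀ j, χ (algebraMap (MvPolynomial τ ℝ) T (X j)) = y j := by
  refine ⟨fun h j => by rw [realFiber_apply h, eval_X], fun h => ringHom_ext (fun r => ?_) ?_⟩
  · rw [RingHom.comp_apply, ← algebraMap_eq, ← IsScalarTower.algebraMap_apply, algebraMap_eq,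
      eval_C, ringHom_algebraMap_real]
  · intro j
    rw [RingHom.comp_apply, h, eval_X]

lemma dense_setOf_eval_ne_zero [Finite σ] {g : MvPolynomial σ ℝ} (hg : g ≠ 0) :
    Dense {x : σ → ℝ | eval x g ≠ 0} := by
  have := Fintype.ofFinite σ
  refine interior_eq_empty_iff_dense_compl.1 (Set.eq_empty_iff_forall_notMem.2 fun x hx => hg ?_)
  have hzero : (fun y : σ → ℝ => eval y g) = fun _ => 0 :=
    (AnalyticOnNhd.eval_mvPolynomial g).eq_of_eventuallyEq analyticOnNhd_const
      (mem_interior_iff_mem_nhds.1 hx)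
  exact MvPolynomial.funext fun y => by rw [map_zero]; exact congrFun hzero y

lemma isAlgebraic_adjoin_range_of_injective [Finite σ] [Finite τ] {P : τ → MvPolynomial σ ℝ}
    (hP : Function.Injective (polyMap P)) :
    Algebra.IsAlgebraic (Algebra.adjoin ℝ (Set.range P)) (MvPolynomial σ ℝ) := by
  have : IsNoetherianRing (Algebra.adjoin ℝ (Set.range P)) :=
    isNoetherianRing_of_fg (Subalgebra.fg_def.2 ⟨_, Set.finite_range P, rfl⟩)
  have : Algebra.FiniteType (Algebra.adjoin ℝ (Set.range P)) (MvPolynomial σ ℝ) :=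
    .of_restrictScalars_finiteType ℝ _ _
  refine isAlgebraic_of_injOn_realPoints (fun d hd => ?_) fun χ χ' h => ?_
  · obtain ⟨x, hx⟩ := (dense_setOf_eval_ne_zero hd).nonempty
    exact ⟨eval x, hx⟩
  · rw [ringHom_eq_eval χ, ringHom_eq_eval χ'] at h ⊢
    congr 1
    exact hP (funext fun j => DFunLike.congr_fun h ⟨P j, Algebra.subset_adjoin ⟨j, rfl⟩⟩)

lemma isTranscendenceBasis_of_injective [Fintype σ] [Fintype τ] {P : τ → MvPolynomial σ ℝ}
    (hP : Function.Injective (polyMap P)) (hcard : Fintype.card τ ≤ Fintype.card σ) :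
    IsTranscendenceBasis ℝ P := by
  have := isAlgebraic_adjoin_range_of_injective hP
  refine Algebra.IsAlgebraic.isTranscendenceBasis_of_lift_le_trdeg_of_finite ℝ P ?_
  rw [trdeg_of_isDomain]
  simpa using hcard

lemma card_le_card_of_injective [Fintype σ] [Fintype τ] {P : τ → MvPolynomial σ ℝ}
    (hP : Function.Injective (polyMap P)) : Fintype.card σ ≤ Fintype.card τ := by
  by_contra! hlt
  have hbasis := (isTranscendenceBasis_of_injective hP hlt.le).lift_cardinalMk_eq_trdeg
  rw [trdeg_of_isDomain] at hbasis
  exact hlt.ne (by simpa using hbasis)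

lemma exists_odd_ncard_polyMap_fiber_iff [Fintype σ] [Fintype τ] {P : τ → MvPolynomial σ ℝ}
    (hP : Function.Injective (polyMap P)) (hcard : Fintype.card τ ≤ Fintype.card σ) :
    ∃ g : MvPolynomial τ ℝ, g ≠ 0 ∧ ∀ y₀ y₁, eval y₀ g ≠ 0 → eval y₁ g ≠ 0 →
      ∀ (a : σ → ℝ) (ρ₁ ρ₂ : ℝ), 0 < ρ₁ → ρ₁ < ρ₂ →
      (∀ x, polyMap P x ∈ segment ℝ y₀ y₁ → sqDist a x < ρ₁ ∨ ρ₂ < sqDist a x) →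
      (Odd {x | polyMap P x = y₀ ∧ sqDist a x < ρ₁}.ncard ↔
        Odd {x | polyMap P x = y₁ ∧ sqDist a x < ρ₁}.ncard) := by
  have hbasis := isTranscendenceBasis_of_injective hP hcard
  let : Algebra (MvPolynomial τ ℝ) (MvPolynomial σ ℝ) := (aeval P).toAlgebra
  have hX (j : τ) : algebraMap (MvPolynomial τ ℝ) (MvPolynomial σ ℝ) (X j) = P j := aeval_X _ j
  have : IsScalarTower ℝ (MvPolynomial τ ℝ) (MvPolynomial σ ℝ) :=
    .of_algebraMap_eq fun r => (aeval_C P r).symm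
  have := isAlgebraic_mvPolynomial_of_isTranscendenceBasis hbasis hX
  have : Algebra.FiniteType (MvPolynomial τ ℝ) (MvPolynomial σ ℝ) :=
    .of_restrictScalars_finiteType ℝ _ _
  obtain ⟨g, hg, H⟩ := exists_hasFiberParity (MvPolynomial τ ℝ) (MvPolynomial σ ℝ)
  have hbij (y : τ → ℝ) : Set.BijOn (fun x : σ → ℝ => eval x) {x | polyMap P x = y}
      (realFiber (MvPolynomial σ ℝ) (eval y)) := by
    refine ⟨fun x hx => ?_, fun x _ x' _ h => ?_, fun χ hχ => ⟨fun i => χ (X i), ?_, ?_⟩⟩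
    · exact mem_realFiber_eval_iff.2 fun j => by rw [hX]; exact congrFun hx j
    · exact funext fun i => by simpa using DFunLike.congr_fun h (X i)
    · refine funext fun j => ?_
      rw [polyMap, ← ringHom_eq_eval, ← hX]
      exact mem_realFiber_eval_iff.1 hχ j
    · exact (ringHom_eq_eval χ).symm
  have heval (x : σ → ℝ) : eval x ∘ X = x := funext fun i => eval_X i
  refine ⟨g, hg, fun y₀ y₁ h₀ h₁ a ρ₁ ρ₂ hρ₁ hρ hgap => ?_⟩
  have h := odd_ncard_realFiber_sqDist_lt_iff H h₀ h₁ X a hρ₁ hρ fun w hw χ hχ => ?_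
  · simpa only [ncard_sep_eq_of_bijOn (hbij _), heval, Set.mem_ofPred_eq] using h
  · obtain ⟨x, rfl, rfl⟩ := (hbij w).surjOn hχ
    rw [heval]
    exact hgap x hw

end InjectivePolynomialMap

section OpenMap

open Metric MvPolynomial Topology

lemma exists_ball_forall_sqDist_lt_or_lt {σ E : Type*} [Fintype σ] [MetricSpace E]
    {f : (σ → ℝ) → E} (hf : Continuous f) (hinj : Function.Injective f) (a : σ → ℝ) {ρ₁ ρ₂ : ℝ}
    (hρ₁ : 0 < ρ₁) (hρ : ρ₁ < ρ₂) :
    ∃ η > 0, ∀ x, f x ∈ ball (f a) η → sqDist a x < ρ₁ ∨ ρ₂ < sqDist a x := by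
  let shell : Set (σ → ℝ) := {x | sqDist a x ≤ ρ₂} ∩ {x | ρ₁ ≤ sqDist a x}
  have hshell : IsCompact shell := (isCompact_setOf_sqDist_le a (hρ₁.trans hρ).le).inter_right
    (isClosed_le continuous_const (continuous_sqDist a))
  have ha : f a ∉ f '' shell := by
    rintro ⟨x, hx, h⟩
    exact hρ₁.not_ge (by simpa only [hinj h, sqDist_self, Set.mem_ofPred_eq] using hx.2)
  obtain ⟨η, hη, hball⟩ :=
    isOpen_iff.1 (hshell.image hf).isClosed.isOpen_compl (f a) ha
  refine ⟨η, hη, fun x hx => ?_⟩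
  by_contra! h
  exact hball hx ⟨x, ⟨h.2, h.1⟩, rfl⟩

/- Near `polyMap P a` the number of preimages near `a` has constant parity off a hypersurface, and
it is one at the images of points near `a`. -/
lemma isOpenMap_polyMap_of_injective {σ τ : Type*} [Fintype σ] [Fintype τ]
    {P : τ → MvPolynomial σ ℝ} (hP : Function.Injective (polyMap P))
    (hcard : Fintype.card τ ≤ Fintype.card σ) : IsOpenMap (polyMap P) := by
  obtain ⟨g, hg, hparity⟩ := exists_odd_ncard_polyMap_fiber_iff hP hcard
  have hgP : aeval P g ≠ 0 := fun h =>
    hg ((injective_iff_map_eq_zero _).1 (isTranscendenceBasis_of_injective hP hcard).1 g h)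
  refine isOpenMap_iff_nhds_le.2 fun a W hW => ?_
  obtain ⟨ρ₂, hρ₂, hsub⟩ := exists_setOf_sqDist_le_subset hW
  obtain ⟨ρ₁, hρ₁, hρ⟩ := exists_between hρ₂
  obtain ⟨η, hη, hgap⟩ :=
    exists_ball_forall_sqDist_lt_or_lt (continuous_polyMap P) hP a hρ₁ hρ
  have hnear : {x | sqDist a x < ρ₁} ∩ polyMap P ⁻¹' ball (polyMap P a) η ∈ 𝓝 a :=
    Filter.inter_mem
      ((isOpen_lt (continuous_sqDist a) continuous_const).mem_nhds (by simpa [sqDist_self]))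
      ((continuous_polyMap P).continuousAt (ball_mem_nhds _ hη))
  obtain ⟨x₀, hx₀g, hx₀, hx₀η⟩ := (dense_setOf_eval_ne_zero hgP).inter_nhds_nonempty hnear
  have hgeneric : ball (polyMap P a) η ∩ {y | eval y g ≠ 0} ⊆
      polyMap P '' {x | sqDist a x ≤ ρ₁} := by
    rintro y ⟨hy, hyg⟩
    have hone : {x | polyMap P x = polyMap P x₀ ∧ sqDist a x < ρ₁} = {x₀} :=
      Set.eq_singleton_iff_unique_mem.2 ⟨⟨rfl, hx₀⟩, fun x hx => hP hx.1⟩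
    have hodd := (hparity (polyMap P x₀) y (by rwa [eval_polyMap]) hyg a ρ₁ ρ₂ hρ₁ hρ fun x hx =>
      hgap x ((convex_ball _ _).segment_subset hx₀η hy hx)).1
      (by rw [hone, Set.ncard_singleton]; exact odd_one)
    obtain ⟨x, rfl, hx⟩ := Set.nonempty_of_ncard_ne_zero hodd.pos.ne'
    exact ⟨x, hx.le, rfl⟩
  have hball : ball (polyMap P a) η ⊆ polyMap P '' {x | sqDist a x ≤ ρ₁} :=
    ((dense_setOf_eval_ne_zero hg).open_subset_closure_inter isOpen_ball).trans <|
      closure_minimal hgeneric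
        ((isCompact_setOf_sqDist_le a hρ₁.le).image (continuous_polyMap P)).isClosed
  refine Filter.mem_of_superset (ball_mem_nhds _ hη) (hball.trans ?_)
  rintro _ ⟨x, hx, rfl⟩
  exact hsub (hx.trans hρ.le)

end OpenMap

section RealZeroLocus

open MvPolynomial

lemma exists_eval_ne_zero_of_notMem_vanishingIdeal {k σ : Type*} [Field k] {Y : Set (σ → k)}
    {p : MvPolynomial σ k} (hp : p ∉ vanishingIdeal k Y) : ∃ y ∈ Y, eval y p ≠ 0 := by
  by_contra! h
  exact hp h

/- `h` is a product of elements of the other minimal primes outside the given one. -/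
lemma exists_vanishingIdeal_sep_eq_of_mem_minimalPrimes {k σ : Type*} [Field k] [Finite σ]
    {Y : Set (σ → k)} {p : Ideal (MvPolynomial σ k)}
    (hp : p ∈ (vanishingIdeal k Y).minimalPrimes) :
    ∃ h : MvPolynomial σ k, vanishingIdeal k {y ∈ Y | eval y h ≠ 0} = p := by
  have hprime : p.IsPrime := hp.1.1
  have hfin := (vanishingIdeal k Y).finite_minimalPrimes_of_isNoetherianRing
  have exists_notMem (q : Ideal (MvPolynomial σ k)) (hq : q ∈ (vanishingIdeal k Y).minimalPrimes)
      (hqp : q ≠ p) : ∃ f ∈ q, f ∉ p :=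
    Set.not_subset.1 fun hle => hqp (le_antisymm hle (hp.2 hq.1 hle))
  choose! f hf hfp using exists_notMem
  let h := ∏ q ∈ hfin.toFinset.erase p, f q
  have hmem (q) (hq : q ∈ (vanishingIdeal k Y).minimalPrimes) (hqp : q ≠ p) : h ∈ q :=
    Ideal.mem_of_dvd q
      (Finset.dvd_prod_of_mem f (Finset.mem_erase.2 ⟨hqp, hfin.mem_toFinset.2 hq⟩)) (hf q hq hqp)
  have hh : h ∉ p := by
    rw [hprime.prod_mem_iff]
    rintro ⟨q, hq, hqp⟩
    obtain ⟨hne, hq⟩ := Finset.mem_erase.1 hq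
    exact hfp q (hfin.mem_toFinset.1 hq) hne hqp
  refine ⟨h, le_antisymm (fun F hF => ?_) fun F hF y hy => ?_⟩
  · refine (hprime.mem_or_mem (hp.1.2 fun y hy => ?_ : F * h ∈ p)).resolve_right hh
    by_cases hy' : eval y h = 0
    · exact (map_mul (eval y) F h).trans (by rw [hy', mul_zero])
    · exact (map_mul (eval y) F h).trans
        (mul_eq_zero_of_left (hF y ⟨hy, hy'⟩ : eval y F = 0) _)
  · obtain ⟨q, hq, hqy⟩ := Ideal.exists_minimalPrimes_le
      (vanishingIdeal_anti_mono (Set.singleton_subset_iff.2 hy.1) :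
        vanishingIdeal k Y ≤ vanishingIdeal k {y})
    have hqp : q = p := by
      by_contra hqp
      exact hy.2 (hqy (hmem q hq hqp) y rfl)
    exact hqy (hqp ▸ hF) y rfl

variable {σ τ : Type*} {I : Ideal (MvPolynomial σ ℝ)}

/-- Evaluation at a point of the zero locus of `I`, as a real point of the coordinate ring. -/
noncomputable def evalQuotient {x : σ → ℝ} (hx : x ∈ zeroLocus ℝ I) :
    MvPolynomial σ ℝ ⧸ I →+* ℝ :=
  Ideal.Quotient.lift I (eval x) hx

lemma evalQuotient_mk {x : σ → ℝ} (hx : x ∈ zeroLocus ℝ I) (p : MvPolynomial σ ℝ) :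
    evalQuotient hx (Ideal.Quotient.mk I p) = eval x p :=
  rfl

lemma ringHom_mk_eq_eval (χ : MvPolynomial σ ℝ ⧸ I →+* ℝ) (p : MvPolynomial σ ℝ) :
    χ (Ideal.Quotient.mk I p) = eval (fun i => χ (Ideal.Quotient.mk I (X i))) p :=
  DFunLike.congr_fun (ringHom_eq_eval (χ.comp (Ideal.Quotient.mk I))) p

lemma ringHom_mk_X_mem_zeroLocus (χ : MvPolynomial σ ℝ ⧸ I →+* ℝ) :
    (fun i => χ (Ideal.Quotient.mk I (X i))) ∈ zeroLocus ℝ I := fun p hp => by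
  rw [aeval_eq_eval, ← ringHom_mk_eq_eval, Ideal.Quotient.eq_zero_iff_mem.2 hp, map_zero]

lemma exists_evalQuotient_eq (χ : MvPolynomial σ ℝ ⧸ I →+* ℝ) :
    ∃ (x : σ → ℝ) (hx : x ∈ zeroLocus ℝ I), evalQuotient hx = χ :=
  ⟨_, ringHom_mk_X_mem_zeroLocus χ, Ideal.Quotient.ringHom_ext <| RingHom.ext fun p =>
    (ringHom_mk_eq_eval χ p).symm⟩

variable {J : Ideal (MvPolynomial τ ℝ)} {P : τ → MvPolynomial σ ℝ}

lemma polyMap_mem_zeroLocus (hJ : J ≤ I.comap (aeval P : MvPolynomial τ ℝ →ₐ[ℝ] _)) {x : σ → ℝ}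
    (hx : x ∈ zeroLocus ℝ I) : polyMap P x ∈ zeroLocus ℝ J := fun q hq => by
  rw [aeval_eq_eval, eval_polyMap]
  exact hx _ (hJ hq)

section QuotientAlgebra

variable [Algebra (MvPolynomial τ ℝ ⧸ J) (MvPolynomial σ ℝ ⧸ I)]
  (hmap : ∀ q, algebraMap (MvPolynomial τ ℝ ⧸ J) (MvPolynomial σ ℝ ⧸ I) (Ideal.Quotient.mk J q) =
    Ideal.Quotient.mk I (aeval P q))

include hmap

lemma evalQuotient_mem_realFiber_iff {x : σ → ℝ} {y : τ → ℝ} (hx : x ∈ zeroLocus ℝ I)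
    (hy : y ∈ zeroLocus ℝ J) :
    evalQuotient hx ∈ realFiber (MvPolynomial σ ℝ ⧸ I) (evalQuotient hy) ↔ polyMap P x = y := by
  refine ⟨fun h => funext fun j => ?_, ?_⟩
  · simpa [hmap, evalQuotient_mk, polyMap] using realFiber_apply h (Ideal.Quotient.mk J (X j))
  · rintro rfl
    refine Ideal.Quotient.ringHom_ext (RingHom.ext fun q => ?_)
    simp [hmap, evalQuotient_mk, eval_polyMap]

lemma realFiber_evalQuotient_polyMap (hP : Function.Injective (polyMap P)) {x : σ → ℝ}
    (hx : x ∈ zeroLocus ℝ I) (hy : polyMap P x ∈ zeroLocus ℝ J) :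
    realFiber (MvPolynomial σ ℝ ⧸ I) (evalQuotient hy) = {evalQuotient hx} := by
  refine Set.eq_singleton_iff_unique_mem.2
    ⟨(evalQuotient_mem_realFiber_iff hmap hx hy).2 rfl, fun χ hχ => ?_⟩
  obtain ⟨x', hx', rfl⟩ := exists_evalQuotient_eq χ
  obtain rfl := hP ((evalQuotient_mem_realFiber_iff hmap hx' hy).1 hχ)
  rfl

lemma isAlgebraic_quotient_of_injective [Finite σ] [Finite τ] [J.IsPrime] [I.IsPrime]
    [IsScalarTower ℝ (MvPolynomial τ ℝ ⧸ J) (MvPolynomial σ ℝ ⧸ I)]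
    (hP : Function.Injective (polyMap P))
    (hdense : ∀ p ∉ I, ∃ x ∈ zeroLocus ℝ I, eval x p ≠ 0) :
    Algebra.IsAlgebraic (MvPolynomial τ ℝ ⧸ J) (MvPolynomial σ ℝ ⧸ I) := by
  have : Algebra.FiniteType (MvPolynomial τ ℝ ⧸ J) (MvPolynomial σ ℝ ⧸ I) :=
    .of_restrictScalars_finiteType ℝ _ _
  refine isAlgebraic_of_injOn_realPoints (fun d hd => ?_) fun χ χ' h => ?_
  · obtain ⟨p, rfl⟩ := Ideal.Quotient.mk_surjective d
    obtain ⟨x, hx, hxp⟩ := hdense p (mt Ideal.Quotient.eq_zero_iff_mem.2 hd)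
    exact ⟨evalQuotient hx, hxp⟩
  · obtain ⟨x, hx, rfl⟩ := exists_evalQuotient_eq χ
    obtain ⟨x', hx', rfl⟩ := exists_evalQuotient_eq χ'
    have hxx' : x = x' := hP <| funext fun j => by
      simpa [hmap, evalQuotient_mk, polyMap] using DFunLike.congr_fun h (Ideal.Quotient.mk J (X j))
    subst hxx'
    rfl

/- The fibers over generic points have constant parity, which is that of a singleton over a generic
point of the range. -/
lemma exists_mem_range_polyMap_of_algebra [Finite σ] [Finite τ] [J.IsPrime] [I.IsPrime]
    [IsScalarTower ℝ (MvPolynomial τ ℝ ⧸ J) (MvPolynomial σ ℝ ⧸ I)]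
    (hcomap : I.comap (aeval P) = J) (hP : Function.Injective (polyMap P))
    (hdense : ∀ p ∉ I, ∃ x ∈ zeroLocus ℝ I, eval x p ≠ 0) :
    ∃ g ∉ J, ∀ y ∈ zeroLocus ℝ J, eval y g ≠ 0 → y ∈ Set.range (polyMap P) := by
  have : Algebra.FiniteType (MvPolynomial τ ℝ ⧸ J) (MvPolynomial σ ℝ ⧸ I) :=
    .of_restrictScalars_finiteType ℝ _ _
  have : CharZero (MvPolynomial τ ℝ ⧸ J) :=
    charZero_of_injective_algebraMap (algebraMap ℝ (MvPolynomial τ ℝ ⧸ J)).injective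
  have := isAlgebraic_quotient_of_injective hmap hP hdense
  obtain ⟨g, hg, H⟩ := exists_hasFiberParity (MvPolynomial τ ℝ ⧸ J) (MvPolynomial σ ℝ ⧸ I)
  obtain ⟨g, rfl⟩ := Ideal.Quotient.mk_surjective g
  have hgJ : g ∉ J := mt Ideal.Quotient.eq_zero_iff_mem.2 hg
  obtain ⟨x, hx, hxg⟩ := hdense (aeval P g) fun h => hgJ (hcomap.le h)
  rw [← eval_polyMap] at hxg
  refine ⟨g, hgJ, fun y hy hyg => ?_⟩
  have hparity := H.odd_ncard_iff (evalQuotient (polyMap_mem_zeroLocus hcomap.ge hx))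
    (evalQuotient hy) hxg hyg
  rw [realFiber_evalQuotient_polyMap hmap hP hx, Set.ncard_singleton] at hparity
  obtain ⟨χ, hχ⟩ := Set.nonempty_of_ncard_ne_zero (hparity.1 odd_one).pos.ne'
  obtain ⟨x', hx', rfl⟩ := exists_evalQuotient_eq χ
  exact ⟨x', (evalQuotient_mem_realFiber_iff hmap hx' hy).1 hχ⟩

end QuotientAlgebra

variable [Finite σ]

lemma exists_vanishingIdeal_isPrime_comap_eq [hJ : J.IsPrime]
    (hdense : ∀ q ∉ J, ∃ x, polyMap P x ∈ zeroLocus ℝ J ∧ eval (polyMap P x) q ≠ 0) :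
    ∃ X₀ : Set (σ → ℝ), (vanishingIdeal ℝ X₀).IsPrime ∧
      (vanishingIdeal ℝ X₀).comap (aeval P) = J := by
  have hcomap : (vanishingIdeal ℝ (polyMap P ⁻¹' zeroLocus ℝ J)).comap (aeval P) = J := by
    refine le_antisymm (fun q hq => ?_) fun q hq x hx => ?_
    · by_contra hqJ
      obtain ⟨x, hx, hxq⟩ := hdense q hqJ
      exact hxq (eval_polyMap P x q ▸ hq x hx)
    · exact (eval_polyMap P x q).symm.trans (hx q hq)
  have hmin : J ∈ ((vanishingIdeal ℝ (polyMap P ⁻¹' zeroLocus ℝ J)).comap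
      (aeval P).toRingHom).minimalPrimes := by
    rw [show Ideal.comap (aeval P).toRingHom _ = J from hcomap,
      Ideal.minimalPrimes_eq_subsingleton_self]
    exact Set.mem_singleton J
  obtain ⟨p, hp, hpJ⟩ := Ideal.exists_minimalPrimes_comap_eq _ J hmin
  obtain ⟨h, rfl⟩ := exists_vanishingIdeal_sep_eq_of_mem_minimalPrimes hp
  exact ⟨_, hp.1.1, hpJ⟩

lemma exists_mem_range_polyMap_of_eval_ne_zero [Finite τ] [J.IsPrime] [I.IsPrime]
    (hcomap : I.comap (aeval P) = J) (hP : Function.Injective (polyMap P))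
    (hdense : ∀ p ∉ I, ∃ x ∈ zeroLocus ℝ I, eval x p ≠ 0) :
    ∃ g ∉ J, ∀ y ∈ zeroLocus ℝ J, eval y g ≠ 0 → y ∈ Set.range (polyMap P) := by
  let : Algebra (MvPolynomial τ ℝ ⧸ J) (MvPolynomial σ ℝ ⧸ I) :=
    (Ideal.quotientMap I (aeval P).toRingHom hcomap.ge).toAlgebra
  have hmap (q : MvPolynomial τ ℝ) : algebraMap (MvPolynomial τ ℝ ⧸ J) (MvPolynomial σ ℝ ⧸ I)
      (Ideal.Quotient.mk J q) = Ideal.Quotient.mk I (aeval P q) := rfl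
  have : IsScalarTower ℝ (MvPolynomial τ ℝ ⧸ J) (MvPolynomial σ ℝ ⧸ I) :=
    .of_algebraMap_eq fun r => (hmap (C r)).trans (by rw [aeval_C]; rfl) |>.symm
  exact exists_mem_range_polyMap_of_algebra hmap hcomap hP hdense

lemma exists_eval_polyMap_eq_zero_of_disjoint_range [Finite τ]
    (hP : Function.Injective (polyMap P)) {Y : Set (τ → ℝ)}
    (hY : Disjoint (Set.range (polyMap P)) Y) (hJ : (vanishingIdeal ℝ Y).IsPrime) :
    ∃ h ∉ vanishingIdeal ℝ Y, ∀ x, polyMap P x ∈ zeroLocus ℝ (vanishingIdeal ℝ Y) →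
      eval (polyMap P x) h = 0 := by
  by_contra! hdense
  obtain ⟨X₀, hI, hcomap⟩ := exists_vanishingIdeal_isPrime_comap_eq hdense
  obtain ⟨g, hg, hrange⟩ := exists_mem_range_polyMap_of_eval_ne_zero hcomap hP fun p hp =>
    (exists_eval_ne_zero_of_notMem_vanishingIdeal hp).imp fun x hx =>
      ⟨zeroLocus_vanishingIdeal_le X₀ hx.1, hx.2⟩
  obtain ⟨y, hy, hyg⟩ := exists_eval_ne_zero_of_notMem_vanishingIdeal hg
  exact hY.notMem_of_mem_right hy (hrange y (zeroLocus_vanishingIdeal_le Y hy) hyg)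

end RealZeroLocus

section LocalGraph

open MvPolynomial Filter Topology

lemma contDiff_eval {ι : Type*} [Fintype ι] (p : MvPolynomial ι ℝ) :
    ContDiff ℝ 1 fun x : ι → ℝ => eval x p :=
  (AnalyticOnNhd.eval_mvPolynomial p).contDiff

lemma contDiff_eval_map_eval {ι : Type*} [Fintype ι] (r : Polynomial (MvPolynomial ι ℝ)) :
    ContDiff ℝ 1 fun p : (ι → ℝ) × ℝ => (r.map (eval p.1)).eval p.2 := by
  simp only [Polynomial.eval_map, Polynomial.eval₂_eq_sum, Polynomial.sum]
  exact ContDiff.sum fun i _ => ((contDiff_eval _).comp contDiff_fst).mul (contDiff_snd.pow i)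

variable {ι T : Type*} [CommRing T] [Algebra (MvPolynomial ι ℝ) T]

lemma IsSeparableRelation.eval_map_eq_zero {r : Polynomial (MvPolynomial ι ℝ)}
    {a : MvPolynomial ι ℝ} {x : T} (h : IsSeparableRelation r a x) {z : ι → ℝ} {χ : T →+* ℝ}
    (hχ : χ ∈ realFiber T (eval z)) : (r.map (eval z)).eval (χ x) = 0 := by
  rw [Polynomial.eval_map, ← (hχ : χ.comp _ = _), ← Polynomial.hom_eval₂, ← Polynomial.aeval_def,
    h.1, map_zero]

lemma IsSeparableRelation.eval_derivative_map_ne_zero {r : Polynomial (MvPolynomial ι ℝ)}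
    {a : MvPolynomial ι ℝ} {x : T} (h : IsSeparableRelation r a x) {z : ι → ℝ} (hz : eval z a ≠ 0)
    {χ : T →+* ℝ} (hχ : χ ∈ realFiber T (eval z)) :
    (Polynomial.derivative (r.map (eval z))).eval (χ x) ≠ 0 := by
  obtain ⟨u, v, huv⟩ := h.2
  intro h0
  have := congrArg (fun p => (p.map (eval z)).eval (χ x)) huv
  simp only [Polynomial.map_add, Polynomial.map_mul, Polynomial.eval_add, Polynomial.eval_mul,
    ← Polynomial.derivative_map, h0, h.eval_map_eq_zero hχ, Polynomial.map_C, Polynomial.eval_C,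
    mul_zero, add_zero] at this
  exact hz this.symm

lemma IsSeparableRelation.exists_eventually_eval_map_eq_zero_iff [Finite ι]
    {r : Polynomial (MvPolynomial ι ℝ)} {a : MvPolynomial ι ℝ} {x : T}
    (h : IsSeparableRelation r a x) {z : ι → ℝ} (hz : eval z a ≠ 0) {χ : T →+* ℝ}
    (hχ : χ ∈ realFiber T (eval z)) :
    ∃ (ψ : (ι → ℝ) → ℝ) (ψ' : (ι → ℝ) →L[ℝ] ℝ), HasStrictFDerivAt ψ ψ' z ∧
      ∀ᶠ p in 𝓝 (z, χ x), (r.map (eval p.1)).eval p.2 = 0 ↔ p.2 = ψ p.1 := by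
  cases nonempty_fintype ι
  have hF := (contDiff_eval_map_eval r).contDiffAt (x := (z, χ x))
    |>.hasStrictFDerivAt one_ne_zero
  have hslice : HasDerivAt (fun t => (r.map (eval z)).eval t)
      (fderiv ℝ (fun p : (ι → ℝ) × ℝ => (r.map (eval p.1)).eval p.2) (z, χ x) (0, 1)) (χ x) :=
    hF.hasFDerivAt.comp_hasDerivAt (χ x) ((hasDerivAt_const _ z).prodMk (hasDerivAt_id _))
  have hinv : (fderiv ℝ (fun p : (ι → ℝ) × ℝ => (r.map (eval p.1)).eval p.2) (z, χ x) ∘L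
      .inr ℝ (ι → ℝ) ℝ).IsInvertible := by
    refine ⟨ContinuousLinearEquiv.unitsEquivAut ℝ (Units.mk0 _
      (h.eval_derivative_map_ne_zero hz hχ)), ContinuousLinearMap.ext_ring ?_⟩
    simpa using ((Polynomial.hasDerivAt _ _).unique hslice)
  refine ⟨_, _, hF.hasStrictFDerivAt_implicitFunctionOfProdDomain hinv, ?_⟩
  filter_upwards [hF.eventually_apply_eq_iff_implicitFunctionOfProdDomain hinv] with p hp
  rw [eq_comm (a := p.2), ← hp, h.eval_map_eq_zero hχ]

/- The implicit function theorem describes the roots of the separable relations. The real points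
persist locally, so each of these roots does come from a real point. -/
lemma exists_eventually_exists_mem_realFiber_iff [Finite ι] [Algebra ℝ T] {κ : Type*} [Finite κ]
    {x : κ → T} (hx : Algebra.adjoin (MvPolynomial ι ℝ) (Set.range x) = ⊤)
    {g : MvPolynomial ι ℝ} (H : HasFiberParity (MvPolynomial ι ℝ) T g)
    {r : κ → Polynomial (MvPolynomial ι ℝ)} {a : κ → MvPolynomial ι ℝ}
    (hr : ∀ k, IsSeparableRelation (r k) (a k) (x k)) {z : ι → ℝ} (hg : eval z g ≠ 0)
    (ha : ∀ k, eval z (a k) ≠ 0) {χ₀ : T →+* ℝ} (hχ₀ : χ₀ ∈ realFiber T (eval z)) :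
    ∃ (ψ : (ι → ℝ) → κ → ℝ) (ψ' : (ι → ℝ) →L[ℝ] κ → ℝ), HasStrictFDerivAt ψ ψ' z ∧
      ∀ᶠ p in 𝓝 (z, χ₀ ∘ x), (∃ χ ∈ realFiber T (eval p.1), χ ∘ x = p.2) ↔ p.2 = ψ p.1 := by
  cases nonempty_fintype ι
  cases nonempty_fintype κ
  choose ψ ψ' hψ' hψ using fun k =>
    (hr k).exists_eventually_eval_map_eq_zero_iff (ha k) hχ₀
  have hroots : ∀ᶠ p in 𝓝 (z, χ₀ ∘ x), ∀ k,
      ((r k).map (eval p.1)).eval (p.2 k) = 0 ↔ p.2 k = ψ k p.1 :=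
    eventually_all.2 fun k => Tendsto.eventually (f := fun p : (ι → ℝ) × (κ → ℝ) => (p.1, p.2 k))
      (by rw [← Function.comp_apply (f := χ₀)]; exact Continuous.tendsto (by fun_prop) (z, χ₀ ∘ x))
      (hψ k)
  obtain ⟨U, hU, V, hV, hUV⟩ := mem_nhds_prod_iff.1 hroots
  obtain ⟨δ, hδ, hδV⟩ := exists_setOf_sqDist_le_subset hV
  have hlift := eventually_exists_mem_realFiber_sqDist_lt hx H (fun p => continuous_eval p) hg
    hχ₀ hδ
  refine ⟨fun y k => ψ k y, ContinuousLinearMap.pi ψ', hasStrictFDerivAt_pi.2 hψ', ?_⟩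
  filter_upwards [hroots, (continuous_fst.tendsto (z, χ₀ ∘ x)).eventually hlift,
    continuous_fst.continuousAt.preimage_mem_nhds hU] with p hp ⟨χ, hχ, hlt⟩ hpU
  refine ⟨?_, fun hpψ => ⟨χ, hχ, ?_⟩⟩
  · rintro ⟨χ', hχ', hp₂⟩
    exact funext fun k => (hp k).1 (hp₂ ▸ (hr k).eval_map_eq_zero hχ')
  · rw [hpψ]
    have hχV : (p.1, χ ∘ x) ∈ U ×ˢ V := ⟨hpU, hδV hlt.le⟩
    exact funext fun k => (hUV hχV k).1 ((hr k).eval_map_eq_zero hχ)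

end LocalGraph

section LocalParametrization

open MvPolynomial Filter Topology

variable {τ : Type*}

lemma adjoin_range_mk_X (I : Ideal (MvPolynomial τ ℝ)) :
    Algebra.adjoin ℝ (Set.range fun i => Ideal.Quotient.mk I (X i)) = ⊤ := by
  have h := congrArg (Subalgebra.map (Ideal.Quotient.mkₐ ℝ I)) (adjoin_range_X (R := ℝ) (σ := τ))
  rw [AlgHom.map_adjoin, ← Set.range_comp, Algebra.map_top,
    (AlgHom.range_eq_top _).2 Ideal.Quotient.mk_surjective] at h
  exact h

lemma exists_isTranscendenceBasis_subfamily {R A : Type*} [CommRing R] [Nontrivial R]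
    [CommRing A] [IsDomain A] [Algebra R A] [FaithfulSMul R A] {x : τ → A}
    (hx : Algebra.adjoin R (Set.range x) = ⊤) :
    ∃ J : Set τ, IsTranscendenceBasis R fun j : J => x j := by
  have : Algebra.IsAlgebraic (Algebra.adjoin R (Set.range x)) A :=
    ⟨fun a => isAlgebraic_algebraMap
      (⟨a, hx ▸ Algebra.mem_top⟩ : Algebra.adjoin R (Set.range x))⟩
  obtain ⟨u, hu, hb⟩ := exists_isTranscendenceBasis_subset (R := R) (Set.range x)
  choose s hs using fun a : u => hu a.2
  have hinj : Function.Injective s := fun a b hab => Subtype.ext (by rw [← hs a, ← hs b, hab])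
  refine ⟨Set.range s, ?_⟩
  have hfamily : (fun j : Set.range s => x j) =
      Subtype.val ∘ (Equiv.ofInjective s hinj).symm := by
    funext j
    obtain ⟨a, rfl⟩ := (Equiv.ofInjective s hinj).surjective j
    simp [hs]
  exact hfamily ▸ hb.comp_equiv (Equiv.ofInjective s hinj).symm

lemma adjoin_eq_top_of_subset_union_range {R S A : Type*} [CommSemiring R] [CommSemiring S]
    [Semiring A] [Algebra R S] [Algebra R A] [Algebra S A] [IsScalarTower R S A] {X Y : Set A}
    (hX : Algebra.adjoin R X = ⊤) (hXY : X ⊆ Y ∪ Set.range (algebraMap S A)) :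
    Algebra.adjoin S Y = ⊤ := by
  have hle : Algebra.adjoin R X ≤ (Algebra.adjoin S Y).restrictScalars R :=
    Algebra.adjoin_le <| hXY.trans <| Set.union_subset Algebra.subset_adjoin <|
      Set.range_subset_iff.2 (Algebra.adjoin S Y).algebraMap_mem
  exact Algebra.eq_top_iff.2 fun a => hle (hX.ge trivial)

variable {I : Ideal (MvPolynomial τ ℝ)} {J : Set τ}
  [Algebra (MvPolynomial J ℝ) (MvPolynomial τ ℝ ⧸ I)]
  (hX : ∀ q, algebraMap (MvPolynomial J ℝ) (MvPolynomial τ ℝ ⧸ I) q =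
    Ideal.Quotient.mk I (rename (↑) q))

include hX

lemma evalQuotient_mem_realFiber_eval_iff
    [IsScalarTower ℝ (MvPolynomial J ℝ) (MvPolynomial τ ℝ ⧸ I)] {y : τ → ℝ}
    (hy : y ∈ zeroLocus ℝ I) (z : J → ℝ) :
    evalQuotient hy ∈ realFiber (MvPolynomial τ ℝ ⧸ I) (eval z) ↔ (fun j : J => y j) = z := by
  rw [mem_realFiber_eval_iff, _root_.funext_iff]
  simp [hX, evalQuotient_mk]

lemma exists_mem_realFiber_eval_iff_mem_zeroLocus
    [IsScalarTower ℝ (MvPolynomial J ℝ) (MvPolynomial τ ℝ ⧸ I)] (y : τ → ℝ) :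
    (∃ χ ∈ realFiber (MvPolynomial τ ℝ ⧸ I) (eval fun j : J => y j),
      (χ ∘ fun k : ↥Jᶜ => Ideal.Quotient.mk I (X k)) = fun k : ↥Jᶜ => y k) ↔
      y ∈ zeroLocus ℝ I := by
  refine ⟨?_, fun hy => ⟨evalQuotient hy, (evalQuotient_mem_realFiber_eval_iff hX hy _).2 rfl,
    funext fun k => by simp [evalQuotient_mk]⟩⟩
  rintro ⟨χ, hχ, hK⟩
  obtain ⟨y', hy', rfl⟩ := exists_evalQuotient_eq χ
  have hJ := (evalQuotient_mem_realFiber_eval_iff hX hy' _).1 hχ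
  suffices y' = y from this ▸ hy'
  funext i
  by_cases hi : i ∈ J
  · exact congrFun hJ ⟨i, hi⟩
  · simpa [evalQuotient_mk] using congrFun hK ⟨i, hi⟩

lemma adjoin_range_mk_X_compl_eq_top [IsScalarTower ℝ (MvPolynomial J ℝ) (MvPolynomial τ ℝ ⧸ I)] :
    Algebra.adjoin (MvPolynomial J ℝ)
      (Set.range fun k : ↥Jᶜ => Ideal.Quotient.mk I (X k)) = ⊤ := by
  refine adjoin_eq_top_of_subset_union_range (adjoin_range_mk_X I) ?_
  rintro _ ⟨i, rfl⟩
  by_cases hi : i ∈ J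
  · exact Or.inr ⟨X ⟨i, hi⟩, by rw [hX, rename_X]⟩
  · exact Or.inl ⟨⟨i, hi⟩, rfl⟩

lemma exists_eventually_mem_zeroLocus_iff_of_algebra [Finite τ] [I.IsPrime]
    [IsScalarTower ℝ (MvPolynomial J ℝ) (MvPolynomial τ ℝ ⧸ I)]
    (hJ : IsTranscendenceBasis ℝ fun j : J => Ideal.Quotient.mk I (X j.1))
    {Y : Set (τ → ℝ)} (hY : vanishingIdeal ℝ Y = I) :
    ∃ y₀ ∈ Y, ∃ (ψ : (J → ℝ) → ↥Jᶜ → ℝ) (ψ' : (J → ℝ) →L[ℝ] ↥Jᶜ → ℝ),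
      HasStrictFDerivAt ψ ψ' (fun j => y₀ j) ∧
      ∀ᶠ y in 𝓝 y₀, y ∈ zeroLocus ℝ I ↔ (fun k : ↥Jᶜ => y k) = ψ fun j => y j := by
  cases nonempty_fintype ↥Jᶜ
  have : Algebra.FiniteType (MvPolynomial J ℝ) (MvPolynomial τ ℝ ⧸ I) :=
    .of_restrictScalars_finiteType ℝ _ _
  have := isAlgebraic_mvPolynomial_of_isTranscendenceBasis hJ fun j => by rw [hX, rename_X]
  obtain ⟨g, hg, H⟩ := exists_hasFiberParity (MvPolynomial J ℝ) (MvPolynomial τ ℝ ⧸ I)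
  choose r a ha hr using fun k : ↥Jᶜ => exists_isSeparableRelation_of_isAlgebraic
    (Algebra.IsAlgebraic.isAlgebraic (R := MvPolynomial J ℝ) (Ideal.Quotient.mk I (X k.1)))
  have hne : rename (↑) (g * ∏ k, a k) ∉ vanishingIdeal ℝ Y := by
    have haeval : aeval (fun j : J => Ideal.Quotient.mk I (X j.1)) =
        IsScalarTower.toAlgHom ℝ (MvPolynomial J ℝ) (MvPolynomial τ ℝ ⧸ I) :=
      algHom_ext fun j => by simp [hX]
    have hinj : Function.Injective (algebraMap (MvPolynomial J ℝ) (MvPolynomial τ ℝ ⧸ I)) := by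
      simpa [AlgebraicIndependent, haeval] using hJ.1
    rw [hY, ← Ideal.Quotient.eq_zero_iff_mem, ← hX, map_eq_zero_iff _ hinj]
    exact mul_ne_zero hg (Finset.prod_ne_zero_iff.2 fun k _ => ha k)
  obtain ⟨y₀, hy₀, hne₀⟩ := exists_eval_ne_zero_of_notMem_vanishingIdeal hne
  rw [eval_rename, map_mul, map_prod, mul_ne_zero_iff, Finset.prod_ne_zero_iff] at hne₀
  have hy₀I : y₀ ∈ zeroLocus ℝ I := hY ▸ zeroLocus_vanishingIdeal_le Y hy₀
  obtain ⟨ψ, ψ', hψ', hψ⟩ := exists_eventually_exists_mem_realFiber_iff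
    (adjoin_range_mk_X_compl_eq_top hX) H hr hne₀.1 (fun k => hne₀.2 k (Finset.mem_univ k))
    ((evalQuotient_mem_realFiber_eval_iff hX hy₀I _).2 rfl)
  have hsplit : Continuous fun y : τ → ℝ => (fun j : J => y j, fun k : ↥Jᶜ => y k) := by fun_prop
  refine ⟨y₀, hy₀, ψ, ψ', hψ', ?_⟩
  have hy₀K : (evalQuotient hy₀I ∘ fun k : ↥Jᶜ => Ideal.Quotient.mk I (X k)) =
      fun k : ↥Jᶜ => y₀ k :=
    _root_.funext fun k => eval_X _
  rw [hy₀K] at hψ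
  filter_upwards [(hsplit.tendsto y₀).eventually hψ] with y hy
  rw [← hy, exists_mem_realFiber_eval_iff_mem_zeroLocus hX]

omit hX [Algebra (MvPolynomial J ℝ) (MvPolynomial τ ℝ ⧸ I)] in
lemma exists_eventually_mem_zeroLocus_iff [Finite τ] [hI : I.IsPrime]
    (hJ : IsTranscendenceBasis ℝ fun j : J => Ideal.Quotient.mk I (X j.1))
    {Y : Set (τ → ℝ)} (hY : vanishingIdeal ℝ Y = I) :
    ∃ y₀ ∈ Y, ∃ (ψ : (J → ℝ) → ↥Jᶜ → ℝ) (ψ' : (J → ℝ) →L[ℝ] ↥Jᶜ → ℝ),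
      HasStrictFDerivAt ψ ψ' (fun j => y₀ j) ∧
      ∀ᶠ y in 𝓝 y₀, y ∈ zeroLocus ℝ I ↔ (fun k : ↥Jᶜ => y k) = ψ fun j => y j := by
  let : Algebra (MvPolynomial J ℝ) (MvPolynomial τ ℝ ⧸ I) :=
    ((Ideal.Quotient.mk I).comp (rename (↑)).toRingHom).toAlgebra
  have hmap (q : MvPolynomial J ℝ) : algebraMap (MvPolynomial J ℝ) (MvPolynomial τ ℝ ⧸ I) q =
    Ideal.Quotient.mk I (rename (↑) q) := rfl
  have : IsScalarTower ℝ (MvPolynomial J ℝ) (MvPolynomial τ ℝ ⧸ I) :=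
    .of_algebraMap_eq fun c => (hmap (C c)).trans (by rw [rename_C]; rfl) |>.symm
  exact exists_eventually_mem_zeroLocus_iff_of_algebra hmap hJ hY

end LocalParametrization

section ShiftedFamilies

open MvPolynomial

lemma isAlgebraic_mvPolynomial_of_trdeg_le {R A ι : Type*} [Field R] [CommRing A] [IsDomain A]
    [Algebra R A] [Algebra (MvPolynomial ι R) A] [IsScalarTower R (MvPolynomial ι R) A] [Fintype ι]
    (h : Algebra.trdeg R A ≤ Fintype.card ι) : Algebra.IsAlgebraic (MvPolynomial ι R) A := by
  let x (i : ι) : A := algebraMap (MvPolynomial ι R) A (X i)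
  have haeval : aeval x = IsScalarTower.toAlgHom R (MvPolynomial ι R) A :=
    algHom_ext fun i => by simp [x]
  by_cases hx : AlgebraicIndependent R x
  · have hbasis : IsTranscendenceBasis R x :=
      hx.isTranscendenceBasis_of_lift_trdeg_le_of_finite (by simpa using h)
    exact isAlgebraic_mvPolynomial_of_isTranscendenceBasis hbasis fun i => rfl
  · rw [AlgebraicIndependent, haeval] at hx
    exact Algebra.isAlgebraic_of_not_injective hx

lemma ringHom_aeval {σ T : Type*} [CommRing T] [Algebra ℝ T] (χ : T →+* ℝ) (x : σ → T)
    (p : MvPolynomial σ ℝ) : χ (aeval x p) = eval (χ ∘ x) p := by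
  simpa [Function.comp_def] using
    DFunLike.congr_fun (ringHom_eq_eval (χ.comp (aeval x).toRingHom)) p

variable {τ K : Type*}

/-- The family of maps `ℝ^K → ℝ^τ` with polynomial coordinates `Q`, in which `none` serves as a
homotopy parameter with value `w none`, translated by the vector `w ∘ some`. -/
noncomputable def shiftedFamily (Q : τ → MvPolynomial (Option K) ℝ) (w : Option τ → ℝ) (x : K → ℝ) :
    τ → ℝ :=
  polyMap Q (fun o => o.elim (w none) x) + w ∘ some

variable {A : Type*} [CommRing A] [Algebra ℝ A] {y : τ → A} {Q : τ → MvPolynomial (Option K) ℝ}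

section GenericMember

variable [Algebra (MvPolynomial (Option τ) ℝ) (MvPolynomial (Option K) A)]
  [IsScalarTower ℝ (MvPolynomial (Option τ) ℝ) (MvPolynomial (Option K) A)]
  (hnone : algebraMap (MvPolynomial (Option τ) ℝ) (MvPolynomial (Option K) A) (X none) = X none)
  (hsome : ∀ i, algebraMap (MvPolynomial (Option τ) ℝ) (MvPolynomial (Option K) A) (X (some i)) =
    C (y i) - aeval X (Q i))

include hnone hsome

lemma mem_realFiber_eval_iff_shiftedFamily {w : Option τ → ℝ}
    {χ : MvPolynomial (Option K) A →+* ℝ} :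
    χ ∈ realFiber (MvPolynomial (Option K) A) (eval w) ↔
      χ (X none) = w none ∧
        (fun i => χ (C (y i))) = shiftedFamily Q w fun k => χ (X (some k)) := by
  rw [mem_realFiber_eval_iff, Option.forall, hnone, _root_.funext_iff]
  refine and_congr_right fun h0 => forall_congr' fun i => ?_
  have helim : (χ ∘ X : Option K → ℝ) = fun o => o.elim (w none) fun k => χ (X (some k)) := by
    ext (_ | _) <;> simp [h0]
  rw [hsome, map_sub, ringHom_aeval, helim, sub_eq_iff_eq_add']
  rfl

lemma exists_mem_realFiber_of_eq_shiftedFamily {w : Option τ → ℝ} {x : K → ℝ} {ψ : A →+* ℝ}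
    (hψ : ψ ∘ y = shiftedFamily Q w x) :
    ∃ χ ∈ realFiber (MvPolynomial (Option K) A) (eval w),
      χ.comp C = ψ ∧ (fun k => χ (X (some k))) = x := by
  have hC : (eval₂Hom ψ fun o : Option K => o.elim (w none) x).comp C = ψ :=
    RingHom.ext fun c => by simp
  have hX : (fun k => eval₂Hom ψ (fun o : Option K => o.elim (w none) x) (X (some k))) = x :=
    _root_.funext fun k => by simp
  refine ⟨_, (mem_realFiber_eval_iff_shiftedFamily hnone hsome).2 ⟨by simp, ?_⟩, hC, hX⟩
  rw [hX, ← hψ]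
  exact _root_.funext fun i => DFunLike.congr_fun hC (y i)

lemma bijOn_realFiber_shiftedFamily (hy : Algebra.adjoin ℝ (Set.range y) = ⊤) (w : Option τ → ℝ) :
    Set.BijOn (fun χ k => χ (X (some k))) (realFiber (MvPolynomial (Option K) A) (eval w))
      {x | ∃ ψ : A →+* ℝ, ψ ∘ y = shiftedFamily Q w x} := by
  refine ⟨fun χ hχ => ⟨χ.comp C, ?_⟩, fun χ hχ χ' hχ' h => ?_, fun x ⟨ψ, hψ⟩ => ?_⟩
  · exact ((mem_realFiber_eval_iff_shiftedFamily hnone hsome).1 hχ).2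
  · rw [mem_realFiber_eval_iff_shiftedFamily hnone hsome] at hχ hχ'
    have h : (fun k => χ (X (some k))) = fun k => χ' (X (some k)) := h
    have hC : χ.comp C = χ'.comp C := by
      refine realFiber_ext (S := ℝ) (ev := .id ℝ) hy (Subsingleton.elim _ _)
        (Subsingleton.elim _ _) ?_
      rintro _ ⟨i, rfl⟩
      exact congrFun (hχ.2.trans (h ▸ hχ'.2.symm)) i
    refine ringHom_ext (DFunLike.congr_fun hC) ?_
    rintro (_ | k)
    exacts [hχ.1.trans hχ'.1.symm, congrFun h k]
  · obtain ⟨χ, hχ, -, hx⟩ := exists_mem_realFiber_of_eq_shiftedFamily hnone hsome hψ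
    exact ⟨χ, hχ, hx⟩

/- A nonzero element `h` of `A` divides a nonzero polynomial in the parameters, so its zeros are
avoided by the family for generic parameters. -/
lemma exists_forall_shiftedFamily_apply_ne_zero [IsDomain A]
    [Algebra.IsAlgebraic (MvPolynomial (Option τ) ℝ) (MvPolynomial (Option K) A)]
    {h : A} (hh : h ≠ 0) :
    ∃ G : MvPolynomial (Option τ) ℝ, G ≠ 0 ∧ ∀ w x, eval w G ≠ 0 →
      ∀ ψ : A →+* ℝ, ψ ∘ y = shiftedFamily Q w x → ψ h ≠ 0 := by
  obtain ⟨G, hG, c, hc⟩ := (Algebra.IsAlgebraic.isAlgebraic (R := MvPolynomial (Option τ) ℝ)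
    (C h : MvPolynomial (Option K) A)).exists_nonzero_dvd
      (mem_nonZeroDivisors_of_ne_zero (by simpa))
  refine ⟨G, hG, fun w x hw ψ hψ h0 => hw ?_⟩
  obtain ⟨χ, hχ, rfl, -⟩ := exists_mem_realFiber_of_eq_shiftedFamily hnone hsome hψ
  rw [← realFiber_apply hχ, hc, map_mul, ← RingHom.comp_apply, h0, zero_mul]

lemma exists_odd_ncard_shiftedFamily_iff [IsDomain A] [Fintype K] [Finite τ]
    (hy : Algebra.adjoin ℝ (Set.range y) = ⊤)
    [Algebra.IsAlgebraic (MvPolynomial (Option τ) ℝ) (MvPolynomial (Option K) A)] (a : K → ℝ) :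
    ∃ G : MvPolynomial (Option τ) ℝ, G ≠ 0 ∧
      ∀ w₀ w₁, eval w₀ G ≠ 0 → eval w₁ G ≠ 0 → ∀ ρ₁ ρ₂, 0 < ρ₁ → ρ₁ < ρ₂ →
        (∀ w ∈ segment ℝ w₀ w₁, ∀ x, (∃ ψ : A →+* ℝ, ψ ∘ y = shiftedFamily Q w x) →
          sqDist a x < ρ₁ ∨ ρ₂ < sqDist a x) →
        (Odd {x ∈ {x | ∃ ψ : A →+* ℝ, ψ ∘ y = shiftedFamily Q w₀ x} | sqDist a x < ρ₁}.ncard ↔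
          Odd {x ∈ {x | ∃ ψ : A →+* ℝ, ψ ∘ y = shiftedFamily Q w₁ x} | sqDist a x < ρ₁}.ncard) := by
  have : CharZero (MvPolynomial (Option K) A) :=
    charZero_of_injective_algebraMap (algebraMap ℝ _).injective
  have : Algebra.FiniteType ℝ A := ⟨⟨(Set.finite_range y).toFinset, by simpa using hy⟩⟩
  have : Algebra.FiniteType (MvPolynomial (Option τ) ℝ) (MvPolynomial (Option K) A) :=
    .of_restrictScalars_finiteType ℝ _ _
  obtain ⟨G, hG, H⟩ := exists_hasFiberParity (MvPolynomial (Option τ) ℝ) (MvPolynomial (Option K) A)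
  have hbij := bijOn_realFiber_shiftedFamily hnone hsome hy
  refine ⟨G, hG, fun w₀ w₁ h₀ h₁ ρ₁ ρ₂ hρ₁ hρ hgap => ?_⟩
  rw [ncard_sep_eq_of_bijOn (hbij w₀), ncard_sep_eq_of_bijOn (hbij w₁)]
  exact odd_ncard_realFiber_sqDist_lt_iff H h₀ h₁ (fun k => X (some k)) a hρ₁ hρ fun w hw χ hχ =>
    hgap w hw _ ((hbij w).mapsTo hχ)

end GenericMember

lemma exists_ringHom_comp_mk_X_eq_iff {I : Ideal (MvPolynomial τ ℝ)} {v : τ → ℝ} :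
    (∃ ψ : MvPolynomial τ ℝ ⧸ I →+* ℝ, (ψ ∘ fun i => Ideal.Quotient.mk I (X i)) = v) ↔
      v ∈ zeroLocus ℝ I := by
  refine ⟨?_, fun hv => ⟨evalQuotient hv, _root_.funext fun i => eval_X i⟩⟩
  rintro ⟨ψ, rfl⟩
  exact ringHom_mk_X_mem_zeroLocus ψ

lemma trdeg_mvPolynomial_option_le [IsDomain A] [Fintype τ] [Fintype K]
    (hcard : Algebra.trdeg ℝ A + Fintype.card K ≤ Fintype.card τ) :
    Algebra.trdeg ℝ (MvPolynomial (Option K) A) ≤ Fintype.card (Option τ) := by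
  have h := lift_trdeg_add_eq ℝ A (MvPolynomial (Option K) A)
  rw [trdeg_of_isDomain] at h
  rw [← Cardinal.lift_le, ← h]
  simpa [add_assoc] using add_le_add_left (Cardinal.lift_le.2 hcard) 1

/- For a generic shift, a family in as many variables as the codimension of a variety meets it
outside any given proper subvariety, with a locally constant parity. -/
lemma exists_generic_shiftedFamily_parity [Fintype τ] [Fintype K] {I : Ideal (MvPolynomial τ ℝ)}
    [I.IsPrime]
    (hcard : Algebra.trdeg ℝ (MvPolynomial τ ℝ ⧸ I) + Fintype.card K ≤ Fintype.card τ)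
    (Q : τ → MvPolynomial (Option K) ℝ) {h : MvPolynomial τ ℝ} (hh : h ∉ I) (a : K → ℝ) :
    ∃ G : MvPolynomial (Option τ) ℝ, G ≠ 0 ∧
      (∀ w, eval w G ≠ 0 → ∀ x, shiftedFamily Q w x ∈ zeroLocus ℝ I →
        eval (shiftedFamily Q w x) h ≠ 0) ∧
      ∀ w₀ w₁, eval w₀ G ≠ 0 → eval w₁ G ≠ 0 → ∀ ρ₁ ρ₂, 0 < ρ₁ → ρ₁ < ρ₂ →
        (∀ w ∈ segment ℝ w₀ w₁, ∀ x, shiftedFamily Q w x ∈ zeroLocus ℝ I →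
          sqDist a x < ρ₁ ∨ ρ₂ < sqDist a x) →
        (Odd {x | shiftedFamily Q w₀ x ∈ zeroLocus ℝ I ∧ sqDist a x < ρ₁}.ncard ↔
          Odd {x | shiftedFamily Q w₁ x ∈ zeroLocus ℝ I ∧ sqDist a x < ρ₁}.ncard) := by
  let A := MvPolynomial τ ℝ ⧸ I
  let y (i : τ) : A := Ideal.Quotient.mk I (X i)
  let v : Option τ → MvPolynomial (Option K) A := fun o =>
    o.elim (X none) fun i => C (y i) - aeval X (Q i)
  let : Algebra (MvPolynomial (Option τ) ℝ) (MvPolynomial (Option K) A) := (aeval v).toAlgebra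
  have hv (o) : algebraMap (MvPolynomial (Option τ) ℝ) (MvPolynomial (Option K) A) (X o) = v o :=
    aeval_X v o
  have : IsScalarTower ℝ (MvPolynomial (Option τ) ℝ) (MvPolynomial (Option K) A) :=
    .of_algebraMap_eq fun r => (aeval_C v r).symm
  have := isAlgebraic_mvPolynomial_of_trdeg_le (trdeg_mvPolynomial_option_le (A := A) hcard)
  obtain ⟨G, hG, hGne⟩ := exists_forall_shiftedFamily_apply_ne_zero (hv none) (fun i => hv (some i))
    (mt Ideal.Quotient.eq_zero_iff_mem.1 hh)
  obtain ⟨G', hG', hparity⟩ := exists_odd_ncard_shiftedFamily_iff (hv none) (fun i => hv (some i))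
    (adjoin_range_mk_X I) a
  have hlocus (w x) : (∃ ψ : A →+* ℝ, ψ ∘ y = shiftedFamily Q w x) ↔
      shiftedFamily Q w x ∈ zeroLocus ℝ I := exists_ringHom_comp_mk_X_eq_iff
  simp only [Set.mem_ofPred_eq, hlocus] at hparity
  refine ⟨G * G', mul_ne_zero hG hG', fun w hw x hx => ?_, fun w₀ w₁ h₀ h₁ => ?_⟩
  · rw [map_mul] at hw
    exact hGne w x (left_ne_zero_of_mul hw) (evalQuotient hx) (_root_.funext fun i => eval_X i)
  · rw [map_mul] at h₀ h₁
    exact hparity w₀ w₁ (right_ne_zero_of_mul h₀) (right_ne_zero_of_mul h₁)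

end ShiftedFamilies

section Approximation

open MvPolynomial Filter Topology

lemma exists_mvPolynomial_near_of_continuousOn {K : Type*} {C : Set (K → ℝ)} (hC : IsCompact C)
    {s : (K → ℝ) → ℝ} (hs : ContinuousOn s C) {δ : ℝ} (hδ : 0 < δ) :
    ∃ g : MvPolynomial K ℝ, ∀ x ∈ C, dist (eval x g) (s x) < δ := by
  have : CompactSpace C := isCompact_iff_compactSpace.1 hC
  let coord (k : K) : C(C, ℝ) := ⟨fun x => x.1 k, (continuous_apply k).comp continuous_subtype_val⟩
  have aeval_coord (p : MvPolynomial K ℝ) (x : C) : aeval coord p x = eval x.1 p := by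
    induction p using MvPolynomial.induction_on with
    | C r => simp
    | add p q hp hq => simp [hp, hq]
    | mul_X p k hp => simp [hp, coord]
  have hsep : (aeval coord).range.SeparatesPoints := fun x y hxy => by
    obtain ⟨k, hk⟩ := Function.ne_iff.1 (Subtype.coe_ne_coe.2 hxy)
    exact ⟨coord k, ⟨coord k, ⟨X k, aeval_X (R := ℝ) coord k⟩, rfl⟩, hk⟩
  obtain ⟨⟨_, p, rfl⟩, hp⟩ :=
    ContinuousMap.exists_mem_subalgebra_near_continuous_of_separatesPoints _ hsep
      (fun x : C => s x) hs.domRestrict δ hδ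
  exact ⟨p, fun x hx => by simpa [aeval_coord, Real.dist_eq] using hp ⟨x, hx⟩⟩

lemma continuousAt_invFun_of_isOpenMap {α β : Type*} [Nonempty α] [TopologicalSpace α]
    [TopologicalSpace β] {f : α → β} (hinj : Function.Injective f) (hopen : IsOpenMap f) (a : α) :
    ContinuousAt (Function.invFun f) (f a) := by
  rw [ContinuousAt, Function.leftInverse_invFun hinj a]
  refine Tendsto.mono_left ?_ (hopen.nhds_le a)
  rw [tendsto_map'_iff, (Function.leftInverse_invFun hinj).comp_eq_id]
  exact tendsto_id

lemma exists_polyMap_near_of_mapsTo_range {K σ τ : Type*} [Finite σ] [Fintype τ]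
    {P : τ → MvPolynomial σ ℝ} (hinj : Function.Injective (polyMap P))
    (hopen : IsOpenMap (polyMap P)) {C : Set (K → ℝ)} (hC : IsCompact C)
    {s : (K → ℝ) → τ → ℝ} (hs : ContinuousOn s C)
    (hrange : Set.MapsTo s C (Set.range (polyMap P))) {ε : ℝ} (hε : 0 < ε) :
    ∃ g : σ → MvPolynomial K ℝ, ∀ x ∈ C, dist (s x) (polyMap P (polyMap g x)) < ε := by
  cases nonempty_fintype σ
  let inv := Function.invFun (polyMap P)
  have hinv (x) (hx : x ∈ C) : polyMap P (inv (s x)) = s x := Function.invFun_eq (hrange hx)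
  have hcont : ContinuousOn (fun x => inv (s x)) C := fun x hx => by
    have h := continuousAt_invFun_of_isOpenMap hinj hopen (inv (s x))
    rw [hinv x hx] at h
    exact h.comp_continuousWithinAt (hs x hx)
  obtain ⟨δ, hδ, hclose⟩ := Metric.mem_uniformity_dist.1 <|
    (hC.image_of_continuousOn hcont).uniformContinuousAt_of_continuousAt (polyMap P)
      (fun _ _ => (continuous_polyMap P).continuousAt) (Metric.dist_mem_uniformity hε)
  choose g hg using fun i : σ => exists_mvPolynomial_near_of_continuousOn hC
    ((continuous_apply i).comp_continuousOn hcont) hδ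
  refine ⟨g, fun x hx => ?_⟩
  have hdist : dist (inv (s x)) (polyMap g x) < δ :=
    (dist_pi_lt_iff hδ).2 fun i => by rw [dist_comm]; exact hg i x hx
  simpa [hinv x hx] using hclose hdist ⟨x, hx, rfl⟩

end Approximation

section StableSolution

open Filter Topology

lemma exists_implicit_function_of_eq_sub {𝕜 W X : Type*} [NontriviallyNormedField 𝕜]
    [NormedAddCommGroup W] [NormedSpace 𝕜 W] [CompleteSpace W]
    [NormedAddCommGroup X] [NormedSpace 𝕜 X] [CompleteSpace X]
    {H : W × X → X} {H' : W × X →L[𝕜] X} {w₀ : W} {a : X} (hH : HasStrictFDerivAt H H' (w₀, a))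
    (hslice : ∀ x, H (w₀, x) = x - a) :
    ∃ φ : W → X, Tendsto φ (𝓝 w₀) (𝓝 a) ∧ ∀ᶠ e in 𝓝 (w₀, a), H e = 0 ↔ e.2 = φ e.1 := by
  have hpartial : H' ∘L .inr 𝕜 W X = .id 𝕜 X := by
    refine (hH.hasFDerivAt.comp a (hasFDerivAt_prodMk_right w₀ a)).unique ?_
    rw [show H ∘ Prod.mk w₀ = fun x => x - a from funext hslice]
    exact (hasFDerivAt_id a).sub_const a
  have hinv : (H' ∘L .inr 𝕜 W X).IsInvertible := by
    rw [hpartial]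
    exact ⟨.refl 𝕜 X, rfl⟩
  refine ⟨hH.implicitFunctionOfProdDomain hinv, hH.tendsto_implicitFunctionOfProdDomain hinv, ?_⟩
  filter_upwards [hH.eventually_apply_eq_iff_implicitFunctionOfProdDomain hinv] with e he
  rw [eq_comm (a := e.2), ← he, hslice, sub_self]

lemma eventually_setOf_mem_eq_singleton {W X Y : Type*} [TopologicalSpace W] [TopologicalSpace X]
    [TopologicalSpace Y] [T2Space X] {m : W → X → Y} (hm : Continuous fun e : W × X => m e.1 e.2)
    {V : Set Y} (hV : IsClosed V) {C N : Set X} (hC : IsCompact C) (hNC : N ⊆ C) {w₀ : W} {a : X}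
    (hN : N ∈ 𝓝 a) (hiso : ∀ x ∈ C, m w₀ x ∈ V → x = a) {φ : W → X}
    (hφ : Tendsto φ (𝓝 w₀) (𝓝 a))
    (hgraph : ∀ᶠ e : W × X in 𝓝 (w₀, a), m e.1 e.2 ∈ V ↔ e.2 = φ e.1) :
    ∀ᶠ w in 𝓝 w₀, {x | m w x ∈ V ∧ x ∈ N} = {φ w} := by
  have huniq : ∀ᶠ w in 𝓝 w₀, ∀ x ∈ C, m w x ∈ V → x = φ w := by
    refine hC.eventually_forall_of_forall_eventually fun x hx => ?_
    by_cases hxV : m w₀ x ∈ V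
    · obtain rfl := hiso x hx hxV
      exact hgraph.mono fun e he => he.1
    · have hnotMem : ∀ᶠ e : W × X in 𝓝 (w₀, x), m e.1 e.2 ∈ Vᶜ :=
        hm.continuousAt.eventually_mem (hV.isOpen_compl.mem_nhds hxV)
      exact hnotMem.mono fun e he hV => absurd hV he
  have hsol : ∀ᶠ w in 𝓝 w₀, m w (φ w) ∈ V ↔ φ w = φ w :=
    (tendsto_id.prodMk_nhds hφ).eventually hgraph
  filter_upwards [huniq, hsol, hφ hN] with w huniq hsol hφN
  exact Set.eq_singleton_iff_unique_mem.2
    ⟨⟨hsol.2 rfl, hφN⟩, fun x hx => huniq x (hNC hx.2) hx.1⟩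

end StableSolution

section SliceHomotopy

open MvPolynomial Filter Topology

variable {σ τ : Type*}

open Classical in
/-- The affine slice `x ↦ (y₀|_J, x)` of `ℝ^τ`, fixing the coordinates in `J`. -/
noncomputable def slice (J : Set τ) (y₀ : τ → ℝ) (x : ↥Jᶜ → ℝ) : τ → ℝ :=
  fun i => if hi : i ∈ J then y₀ i else x ⟨i, hi⟩

variable {J : Set τ} {y₀ : τ → ℝ}

lemma slice_apply_mem (x : ↥Jᶜ → ℝ) (j : J) : slice J y₀ x j = y₀ j := dif_pos j.2

lemma slice_apply_compl (x : ↥Jᶜ → ℝ) (k : ↥Jᶜ) : slice J y₀ x k = x k := dif_neg k.2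

lemma slice_self (J : Set τ) (y₀ : τ → ℝ) : slice J y₀ (fun k => y₀ k) = y₀ := by
  funext i
  simp [slice]

lemma continuous_slice : Continuous (slice J y₀) := by
  refine continuous_pi fun i => ?_
  by_cases hi : i ∈ J
  · simpa only [slice, hi, dite_true] using continuous_const
  · simpa only [slice, hi, dite_false] using continuous_apply _

open Classical in
/-- The homotopy `(1 - t) R(x) + t slice(x)` from the polynomial map with coordinates `R` to the
slice through `y₀`, as polynomials in the homotopy parameter `none` and the variables `some k`. -/
noncomputable def sliceHomotopy (J : Set τ) (y₀ : τ → ℝ) (R : τ → MvPolynomial ↥Jᶜ ℝ) (i : τ) :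
    MvPolynomial (Option ↥Jᶜ) ℝ :=
  (1 - X none) * rename some (R i) +
    X none * if hi : i ∈ J then C (y₀ i) else X (some ⟨i, hi⟩)

lemma shiftedFamily_sliceHomotopy (R : τ → MvPolynomial ↥Jᶜ ℝ) (w : Option τ → ℝ) (x : ↥Jᶜ → ℝ) :
    shiftedFamily (sliceHomotopy J y₀ R) w x =
      (1 - w none) • polyMap R x + w none • slice J y₀ x + w ∘ some := by
  funext i
  have hcomp : (fun o : Option ↥Jᶜ => o.elim (w none) x) ∘ some = x := rfl
  by_cases hi : i ∈ J <;>
    simp [shiftedFamily, polyMap, sliceHomotopy, slice, eval_rename, hcomp, hi]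

lemma contDiff_shiftedFamily {K : Type*} [Fintype τ] [Fintype K]
    (Q : τ → MvPolynomial (Option K) ℝ) :
    ContDiff ℝ 1 fun e : (Option τ → ℝ) × (K → ℝ) => shiftedFamily Q e.1 e.2 := by
  refine contDiff_pi.2 fun i => ContDiff.add ?_ (by fun_prop)
  refine (contDiff_eval (Q i)).comp (contDiff_pi.2 fun o => ?_)
  cases o with
  | none => simp only [Option.elim_none]; fun_prop
  | some k => simp only [Option.elim_some]; fun_prop

/-- The parameters `w` of `shiftedFamily` whose homotopy parameter lies in `(-1, 2)` and whose shift
has size less than `ε`. -/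
def homotopyBox (τ : Type*) (ε : ℝ) : Set (Option τ → ℝ) :=
  Set.univ.pi fun o => o.elim (Set.Ioo (-1) 2) fun _ => Set.Ioo (-ε) ε

lemma isOpen_homotopyBox [Finite τ] (ε : ℝ) : IsOpen (homotopyBox τ ε) :=
  isOpen_set_pi Set.finite_univ fun o _ => by cases o <;> exact isOpen_Ioo

lemma convex_homotopyBox (ε : ℝ) : Convex ℝ (homotopyBox τ ε) :=
  convex_pi fun o _ => by cases o <;> exact convex_Ioo _ _

lemma elim_mem_homotopyBox {ε : ℝ} (hε : 0 < ε) {t : ℝ} (ht : t ∈ Set.Ioo (-1) 2) :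
    (fun o : Option τ => o.elim t fun _ => 0) ∈ homotopyBox τ ε := by
  rintro (_ | i) -
  · exact ht
  · exact ⟨neg_lt_zero.2 hε, hε⟩

lemma dist_shiftedFamily_slice_lt [Fintype τ] {R : τ → MvPolynomial ↥Jᶜ ℝ} {ε : ℝ} {x : ↥Jᶜ → ℝ}
    (hR : dist (slice J y₀ x) (polyMap R x) < ε) {w : Option τ → ℝ} (hw : w ∈ homotopyBox τ ε) :
    dist (shiftedFamily (sliceHomotopy J y₀ R) w x) (slice J y₀ x) < 3 * ε := by
  have hε : 0 < ε := dist_nonneg.trans_lt hR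
  rw [dist_pi_lt_iff (by positivity)]
  intro i
  have hi := (dist_pi_lt_iff hε).1 hR i
  have hwi := hw (some i) trivial
  have ht := hw none trivial
  simp only [Option.elim] at hwi ht
  rw [Real.dist_eq, abs_lt] at hi ⊢
  simp only [shiftedFamily_sliceHomotopy, Pi.add_apply, Pi.smul_apply, smul_eq_mul,
    Function.comp_apply]
  constructor <;> nlinarith [ht.1, ht.2, hwi.1, hwi.2]

lemma polyMap_bind₁ {K : Type*} (P : τ → MvPolynomial σ ℝ) (g : σ → MvPolynomial K ℝ) (x : K → ℝ) :
    polyMap (fun i => bind₁ g (P i)) x = polyMap P (polyMap g x) :=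
  funext fun i => (eval_polyMap g x (P i)).symm

/- A polynomial approximation of the slice on a compact set avoiding `V`, factoring through
`polyMap P`, is joined to the slice inside the complement of `V`, robustly under small shifts. -/
lemma exists_sliceHomotopy_notMem [Finite σ] [Finite τ] {P : τ → MvPolynomial σ ℝ}
    (hinj : Function.Injective (polyMap P)) (hopen : IsOpenMap (polyMap P)) {V : Set (τ → ℝ)}
    (hV : IsClosed V) {S : Set (↥Jᶜ → ℝ)} (hS : IsCompact S) (hSV : ∀ x ∈ S, slice J y₀ x ∉ V)
    (hrange : Set.MapsTo (slice J y₀) S (Set.range (polyMap P))) :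
    ∃ ε > 0, ∃ g : σ → MvPolynomial ↥Jᶜ ℝ, ∀ w ∈ homotopyBox τ ε, ∀ x ∈ S,
      shiftedFamily (sliceHomotopy J y₀ fun i => bind₁ g (P i)) w x ∉ V := by
  cases nonempty_fintype τ
  obtain ⟨ε, hε, hεV⟩ := (hS.image continuous_slice).exists_thickening_subset_open
    hV.isOpen_compl (Set.image_subset_iff.2 hSV)
  obtain ⟨g, hg⟩ := exists_polyMap_near_of_mapsTo_range hinj hopen hS
    continuous_slice.continuousOn hrange (ε := ε / 3) (by positivity)
  refine ⟨ε / 3, by positivity, g, fun w hw x hx => hεV ?_⟩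
  rw [Metric.mem_thickening_iff]
  refine ⟨_, Set.mem_image_of_mem _ hx, ?_⟩
  have h := dist_shiftedFamily_slice_lt (polyMap_bind₁ P g x ▸ hg x hx) hw
  rwa [mul_div_cancel₀ _ three_ne_zero] at h

lemma eventually_shiftedFamily_mem_range [Finite τ] {R : τ → MvPolynomial ↥Jᶜ ℝ}
    {U : Set (τ → ℝ)} (hU : IsOpen U) (hR : Set.range (polyMap R) ⊆ U)
    {C : Set (↥Jᶜ → ℝ)} (hC : IsCompact C) :
    ∀ᶠ w in 𝓝 (fun o : Option τ => o.elim (0 : ℝ) fun _ => 0), ∀ x ∈ C,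
      shiftedFamily (sliceHomotopy J y₀ R) w x ∈ U := by
  cases nonempty_fintype τ
  have := Fintype.ofFinite ↥Jᶜ
  refine hC.eventually_forall_of_forall_eventually fun x _ => ?_
  refine (contDiff_shiftedFamily _).continuous.continuousAt.eventually_mem (hU.mem_nhds ?_)
  refine hR ⟨x, ?_⟩
  rw [shiftedFamily_sliceHomotopy]
  ext i
  simp

/- At the parameter `(1, 0)` the family is the slice itself, so its intersection with a graph over
the coordinates in `J` is transverse and persists. -/
lemma eventually_shiftedFamily_setOf_mem_eq_singleton [Finite τ] {R : τ → MvPolynomial ↥Jᶜ ℝ}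
    {V : Set (τ → ℝ)} (hV : IsClosed V) (hy₀ : y₀ ∈ V) {ψ : (J → ℝ) → ↥Jᶜ → ℝ}
    {ψ' : (J → ℝ) →L[ℝ] ↥Jᶜ → ℝ} (hψ : HasStrictFDerivAt ψ ψ' fun j => y₀ j)
    (hgraph : ∀ᶠ y in 𝓝 y₀, y ∈ V ↔ (fun k : ↥Jᶜ => y k) = ψ fun j => y j)
    {C N : Set (↥Jᶜ → ℝ)} (hC : IsCompact C) (hNC : N ⊆ C) (hN : N ∈ 𝓝 fun k : ↥Jᶜ => y₀ k)
    (hiso : ∀ x ∈ C, slice J y₀ x ∈ V → x = fun k : ↥Jᶜ => y₀ k) :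
    ∀ᶠ w in 𝓝 (fun o : Option τ => o.elim (1 : ℝ) fun _ => 0),
      ∃ x₁, {x | shiftedFamily (sliceHomotopy J y₀ R) w x ∈ V ∧ x ∈ N} = {x₁} := by
  cases nonempty_fintype τ
  have (S : Set τ) : Fintype S := Fintype.ofFinite S
  set w₁ : Option τ → ℝ := fun o => o.elim 1 fun _ => 0
  let m (e : (Option τ → ℝ) × (↥Jᶜ → ℝ)) : τ → ℝ := shiftedFamily (sliceHomotopy J y₀ R) e.1 e.2
  have hm : ContDiff ℝ 1 m := contDiff_shiftedFamily _
  have hm₁ (x) : m (w₁, x) = slice J y₀ x := by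
    funext i
    simp [m, w₁, shiftedFamily_sliceHomotopy]
  have hm₁_self : m (w₁, fun k => y₀ k) = y₀ := by rw [hm₁, slice_self]
  have hm' := hm.contDiffAt.hasStrictFDerivAt (x := (w₁, fun k : ↥Jᶜ => y₀ k)) one_ne_zero
  let res (S : Set τ) : (τ → ℝ) →L[ℝ] S → ℝ := .pi fun s => .proj s.1
  have hres (S : Set τ) := (res S).hasStrictFDerivAt.comp _ hm'
  have hψm : HasStrictFDerivAt ψ ψ' ((res J ∘ m) (w₁, fun k => y₀ k)) := by
    rwa [Function.comp_apply, hm₁_self]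
  have hH := (hres Jᶜ).sub (hψm.comp _ (hres J))
  obtain ⟨φ, hφ, hφ_iff⟩ := exists_implicit_function_of_eq_sub hH fun x => by
    have hresJ : res J (slice J y₀ x) = fun j : J => y₀ j := funext fun j => slice_apply_mem x j
    have hresK : res Jᶜ (slice J y₀ x) = x := funext fun k => slice_apply_compl x k
    simp only [Pi.sub_apply, Function.comp_apply, hm₁, hresJ, hresK, hgraph.self_of_nhds.1 hy₀]
  rw [← hm₁_self] at hgraph
  have hφ_graph : ∀ᶠ e in 𝓝 (w₁, fun k : ↥Jᶜ => y₀ k), m e ∈ V ↔ e.2 = φ e.1 := by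
    filter_upwards [hφ_iff, hm.continuous.continuousAt.eventually hgraph] with e he hge
    rw [hge, ← he]
    exact sub_eq_zero.symm
  exact (eventually_setOf_mem_eq_singleton hm.continuous hV hC hNC hN
    (fun x hx hxV => hiso x hx (hm₁ x ▸ hxV)) hφ hφ_graph).mono fun w hw => ⟨φ w, hw⟩

end SliceHomotopy

section Surjectivity

open MvPolynomial Filter Topology

lemma exists_isPrime_vanishingIdeal_sep {k σ : Type*} [Field k] [Finite σ] {Z : Set (σ → k)}
    (hZ : Z.Nonempty) :
    ∃ h : MvPolynomial σ k, (vanishingIdeal k {y ∈ Z | eval y h ≠ 0}).IsPrime := by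
  have hne : vanishingIdeal k Z ≠ ⊤ := fun htop => by
    obtain ⟨y, hy⟩ := hZ
    have hone : (1 : MvPolynomial σ k) ∈ vanishingIdeal k Z := htop.ge trivial
    simpa using hone y hy
  obtain ⟨p, hp, hle⟩ := Ideal.exists_le_maximal _ hne
  obtain ⟨q, hq, -⟩ := Ideal.exists_minimalPrimes_le (J := p) hle
  obtain ⟨h, hh⟩ := exists_vanishingIdeal_sep_eq_of_mem_minimalPrimes hq
  exact ⟨h, hh ▸ hq.1.1⟩

variable {σ τ : Type*}

lemma isClosed_zeroLocus (I : Ideal (MvPolynomial τ ℝ)) : IsClosed (zeroLocus ℝ I) := by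
  have h : zeroLocus ℝ I = ⋂ p ∈ I, {y | eval y p = 0} := by
    ext y
    simp only [Set.mem_iInter]
    rfl
  rw [h]
  exact isClosed_biInter fun p _ => isClosed_eq (continuous_eval p) continuous_const

lemma trdeg_add_card_compl [Fintype τ] {I : Ideal (MvPolynomial τ ℝ)} [I.IsPrime] {J : Set τ}
    [Fintype ↥Jᶜ] (hJ : IsTranscendenceBasis ℝ fun j : J => Ideal.Quotient.mk I (X j.1)) :
    Algebra.trdeg ℝ (MvPolynomial τ ℝ ⧸ I) + Fintype.card ↥Jᶜ = Fintype.card τ := by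
  rw [← hJ.cardinalMk_eq_trdeg, ← Cardinal.mk_fintype, Cardinal.mk_sum_compl, Cardinal.mk_fintype]

lemma eventually_slice_mem_imp_eq [Finite τ] {J : Set τ} {V : Set (τ → ℝ)} {y₀ : τ → ℝ}
    (hy₀ : y₀ ∈ V) {ψ : (J → ℝ) → ↥Jᶜ → ℝ}
    (hgraph : ∀ᶠ y in 𝓝 y₀, y ∈ V ↔ (fun k : ↥Jᶜ => y k) = ψ fun j => y j) :
    ∀ᶠ x in 𝓝 fun k : ↥Jᶜ => y₀ k, slice J y₀ x ∈ V → x = fun k : ↥Jᶜ => y₀ k := by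
  have hψ := hgraph.self_of_nhds.1 hy₀
  filter_upwards [(continuous_slice.tendsto' _ _ (slice_self J y₀)).eventually hgraph] with x hx hxV
  have hxψ := hx.1 hxV
  simpa only [slice_apply_compl, slice_apply_mem, ← hψ] using hxψ

lemma exists_isTranscendenceBasis_mk_X (I : Ideal (MvPolynomial τ ℝ)) [I.IsPrime] :
    ∃ J : Set τ, IsTranscendenceBasis ℝ fun j : J => Ideal.Quotient.mk I (X j.1) := by
  have : FaithfulSMul ℝ (MvPolynomial τ ℝ ⧸ I) :=
    (faithfulSMul_iff_algebraMap_injective ℝ _).2 (algebraMap ℝ (MvPolynomial τ ℝ ⧸ I)).injective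
  exact exists_isTranscendenceBasis_subfamily (R := ℝ) (A := MvPolynomial τ ℝ ⧸ I)
    (x := fun i => Ideal.Quotient.mk I (X i)) (adjoin_range_mk_X I)

variable {P : τ → MvPolynomial σ ℝ}

/- Deforming the slice to a family of maps into the range of `P` preserves the parity of the number
of intersections with the zero locus, which is one at the start. -/
lemma exists_polyMap_mem_of_isolated_slice [Finite σ] [Finite τ]
    (hinj : Function.Injective (polyMap P)) (hopen : IsOpenMap (polyMap P))
    {I : Ideal (MvPolynomial τ ℝ)} [I.IsPrime] {J : Set τ} [Fintype ↥Jᶜ]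
    (hJ : IsTranscendenceBasis ℝ fun j : J => Ideal.Quotient.mk I (X j.1))
    {y₀ : τ → ℝ} (hy₀ : y₀ ∈ zeroLocus ℝ I) {ψ : (J → ℝ) → ↥Jᶜ → ℝ}
    {ψ' : (J → ℝ) →L[ℝ] ↥Jᶜ → ℝ} (hψ : HasStrictFDerivAt ψ ψ' fun j => y₀ j)
    (hgraph : ∀ᶠ y in 𝓝 y₀, y ∈ zeroLocus ℝ I ↔ (fun k : ↥Jᶜ => y k) = ψ fun j => y j)
    {ρ : ℝ} (hρ : 0 < ρ)
    (hiso : ∀ x, sqDist (fun k : ↥Jᶜ => y₀ k) x ≤ ρ → slice J y₀ x ∈ zeroLocus ℝ I →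
      x = fun k : ↥Jᶜ => y₀ k)
    (hrange : ∀ x, sqDist (fun k : ↥Jᶜ => y₀ k) x ≤ ρ → (x ≠ fun k : ↥Jᶜ => y₀ k) →
      slice J y₀ x ∈ Set.range (polyMap P))
    {h : MvPolynomial τ ℝ} (hh : h ∉ I) :
    ∃ x, polyMap P x ∈ zeroLocus ℝ I ∧ eval (polyMap P x) h ≠ 0 := by
  cases nonempty_fintype τ
  set a : ↥Jᶜ → ℝ := fun k => y₀ k
  have hV := isClosed_zeroLocus I
  have hball := isCompact_setOf_sqDist_le a hρ.le
  have hshell : IsCompact ({x | sqDist a x ≤ ρ} ∩ {x | ρ / 2 ≤ sqDist a x}) :=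
    hball.inter_right (isClosed_le continuous_const (continuous_sqDist a))
  have hshell_ne (x) (hx : x ∈ {x | sqDist a x ≤ ρ} ∩ {x | ρ / 2 ≤ sqDist a x}) : x ≠ a := by
    rintro rfl
    exact (half_pos hρ).not_ge (sqDist_self a ▸ hx.2)
  obtain ⟨ε, hε, g, hg⟩ := exists_sliceHomotopy_notMem hinj hopen hV hshell
    (fun x hx hxV => hshell_ne x hx (hiso x hx.1 hxV))
    (fun x hx => hrange x hx.1 (hshell_ne x hx))
  set Q := sliceHomotopy J y₀ fun i => bind₁ g (P i)
  obtain ⟨G, hG, hne, hparity⟩ :=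
    exists_generic_shiftedFamily_parity (trdeg_add_card_compl hJ).le Q hh a
  have hbox {t : ℝ} (ht : t ∈ Set.Ioo (-1) 2) :=
    (isOpen_homotopyBox ε).mem_nhds (elim_mem_homotopyBox (τ := τ) hε ht)
  have hnhds : {x | sqDist a x < ρ / 2} ∈ 𝓝 a :=
    (continuous_sqDist a).continuousAt.eventually_lt_const (by rw [sqDist_self]; exact half_pos hρ)
  obtain ⟨w₀, hw₀G, hw₀, hw₀U⟩ := (dense_setOf_eval_ne_zero hG).inter_nhds_nonempty <|
    inter_mem (eventually_shiftedFamily_mem_range (y₀ := y₀) hopen.isOpen_range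
      (Set.range_subset_iff.2 fun x => ⟨polyMap g x, (polyMap_bind₁ P g x).symm⟩) hball)
      (hbox ⟨neg_one_lt_zero, two_pos⟩)
  obtain ⟨w₁, hw₁G, ⟨x₁, hx₁⟩, hw₁U⟩ := (dense_setOf_eval_ne_zero hG).inter_nhds_nonempty <|
    inter_mem (eventually_shiftedFamily_setOf_mem_eq_singleton (R := fun i => bind₁ g (P i))
      hV hy₀ hψ hgraph hball (fun x hx => le_of_lt (lt_trans hx (half_lt_self hρ))) hnhds hiso)
      (hbox ⟨by norm_num, one_lt_two⟩)
  have hodd := (hparity w₀ w₁ hw₀G hw₁G _ _ (half_pos hρ) (half_lt_self hρ) fun w hw x hx => by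
    by_contra! hcon
    exact hg w ((convex_homotopyBox ε).segment_subset hw₀U hw₁U hw) x ⟨hcon.2, hcon.1⟩ hx).2
      (by simpa using hx₁ ▸ Set.ncard_singleton x₁ ▸ odd_one)
  obtain ⟨x, hx, hxρ⟩ := Set.nonempty_of_ncard_ne_zero hodd.pos.ne'
  obtain ⟨z, hz⟩ := hw₀ x (hxρ.le.trans (half_le_self hρ.le))
  exact ⟨z, hz ▸ hx, hz ▸ hne w₀ hw₀G x hx⟩

theorem surjective_polyMap_of_injective [Fintype σ] [Fintype τ]
    (hP : Function.Injective (polyMap P)) (hcard : Fintype.card τ ≤ Fintype.card σ) :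
    Function.Surjective (polyMap P) := by
  by_contra hsurj
  rw [← Set.range_eq_univ, ← ne_eq, ← Set.nonempty_compl] at hsurj
  obtain ⟨h, hprime⟩ := exists_isPrime_vanishingIdeal_sep hsurj
  set Y := {y ∈ (Set.range (polyMap P))ᶜ | eval y h ≠ 0}
  have hY : Disjoint (Set.range (polyMap P)) Y :=
    disjoint_compl_right.mono_right (Set.sep_subset _ _)
  obtain ⟨h', hh', hvanish⟩ := exists_eval_polyMap_eq_zero_of_disjoint_range hP hY hprime
  obtain ⟨J, hJ⟩ := exists_isTranscendenceBasis_mk_X (vanishingIdeal ℝ Y)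
  obtain ⟨y₀, hy₀, ψ, ψ', hψ, hgraph⟩ := exists_eventually_mem_zeroLocus_iff hJ rfl
  have hy₀V : y₀ ∈ zeroLocus ℝ (vanishingIdeal ℝ Y) := zeroLocus_vanishingIdeal_le Y hy₀
  have := Fintype.ofFinite ↥Jᶜ
  have heval : ∀ᶠ x in 𝓝 fun k : ↥Jᶜ => y₀ k, eval (slice J y₀ x) h ≠ 0 :=
    ((continuous_eval h).comp continuous_slice).continuousAt.eventually_ne <| by
      rw [Function.comp_apply, slice_self]
      exact hy₀.2
  obtain ⟨ρ, hρ, hsub⟩ := exists_setOf_sqDist_le_subset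
    ((eventually_slice_mem_imp_eq hy₀V hgraph).and heval)
  have hrange (x) (hx : sqDist (fun k : ↥Jᶜ => y₀ k) x ≤ ρ) (hne : x ≠ fun k : ↥Jᶜ => y₀ k) :
      slice J y₀ x ∈ Set.range (polyMap P) := by
    by_contra hnot
    exact hne ((hsub hx).1 fun p hp => hp _ ⟨hnot, (hsub hx).2⟩)
  obtain ⟨x, hxV, hx⟩ := exists_polyMap_mem_of_isolated_slice hP
    (isOpenMap_polyMap_of_injective hP hcard) hJ hy₀V hψ hgraph hρ (fun x hx => (hsub hx).1)
    hrange hh'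
  exact hx (hvanish x hxV)

end Surjectivity

section LineGrids

variable {K E : Type*} [Field K] [AddCommGroup E] [Module K E]

/-- `γ` runs bijectively through a line, and `f` is the affine coordinate of `γ t` on that line
normalized by giving `γ 0` and `γ 1` the coordinates `0` and `1`. -/
structure IsLineParam (γ : K → E) (f : K → K) : Prop where
  bijective : Function.Bijective f
  map_zero : f 0 = 0
  map_one : f 1 = 1
  eq_add_smul (t : K) : γ t = γ 0 + f t • (γ 1 - γ 0)

lemma exists_isLineParam {γ : K → E} (hγ : Function.Injective γ) {a b : E} (hb : b ≠ 0)
    (hrange : Set.range γ = {x | ∃ t : K, x = a + t • b}) : ∃ f, IsLineParam γ f := by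
  have hcoord (t : K) : ∃ s : K, γ t = a + s • b := hrange.subset ⟨t, rfl⟩
  choose φ hφ using hcoord
  have hinj : Function.Injective φ := fun s t hst => hγ (by rw [hφ, hφ, hst])
  have hsurj (s : K) : ∃ t, φ t = s := by
    obtain ⟨t, ht⟩ := hrange.superset ⟨s, rfl⟩
    exact ⟨t, smul_left_injective K hb (add_left_cancel ((hφ t).symm.trans ht))⟩
  have hne : φ 1 - φ 0 ≠ 0 := sub_ne_zero.2 (hinj.ne one_ne_zero)
  refine ⟨fun t => (φ t - φ 0) / (φ 1 - φ 0), ⟨fun s t hst => ?_, fun s => ?_⟩, by simp,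
    div_self hne, fun t => ?_⟩
  · exact hinj (sub_left_injective ((div_left_inj' hne).1 hst))
  · obtain ⟨t, ht⟩ := hsurj (φ 0 + s * (φ 1 - φ 0))
    exact ⟨t, by simp only [ht, add_sub_cancel_left, mul_div_cancel_right₀ _ hne]⟩
  · have hdir : γ 1 - γ 0 = (φ 1 - φ 0) • b := by rw [hφ 1, hφ 0]; module
    rw [hdir, smul_smul, div_mul_cancel₀ _ hne, hφ t, hφ 0]
    module

lemma IsLineParam.comp_mul_right {γ : K → E} {f : K → K} (h : IsLineParam γ f) {c : K}
    (hc : c ≠ 0) : IsLineParam (fun t => γ (t * c)) fun t => f (t * c) / f c := by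
  have hfc : f c ≠ 0 := fun h0 => hc (h.bijective.1 (h0.trans h.map_zero.symm))
  refine ⟨⟨fun s t hst => ?_, fun s => ?_⟩, by simp [h.map_zero], by simp [hfc], fun t => ?_⟩
  · exact mul_right_cancel₀ hc (h.bijective.1 ((div_left_inj' hfc).1 hst))
  · obtain ⟨t, ht⟩ := h.bijective.2 (s * f c)
    exact ⟨t / c, by simp only [div_mul_cancel₀ _ hc, ht, mul_div_cancel_right₀ _ hfc]⟩
  · simp only [zero_mul, one_mul]
    rw [h.eq_add_smul (t * c), h.eq_add_smul c, add_sub_cancel_left, smul_smul,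
      div_mul_cancel₀ _ hfc]

/-- An injective map of the plane sending every line parallel to a coordinate axis bijectively
onto a line. -/
structure IsLineGrid (H : K → K → E) : Prop where
  injective : Function.Injective2 H
  row (y : K) : ∃ f, IsLineParam (fun x => H x y) f
  col (x : K) : ∃ s, IsLineParam (H x) s

namespace IsLineGrid

variable {H : K → K → E} {f h : K → K}

lemma row_direction_ne_zero (hH : IsLineGrid H) : H 1 0 - H 0 0 ≠ 0 :=
  sub_ne_zero.2 fun e => one_ne_zero (hH.injective e).1

lemma col_direction_notMem_span (hH : IsLineGrid H) :
    H 0 1 - H 0 0 ∉ Submodule.span K {H 1 0 - H 0 0, H 1 1 - H 0 1} := by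
  intro hmem
  obtain ⟨α, β, hαβ⟩ := Submodule.mem_span_pair.1 hmem
  obtain ⟨f, hf⟩ := hH.row 0
  obtain ⟨h, hh⟩ := hH.row 1
  obtain ⟨x, hx⟩ := hf.bijective.2 α
  obtain ⟨x', hx'⟩ := hh.bijective.2 (-β)
  have hmeet : H x 0 = H x' 1 := by
    rw [hf.eq_add_smul x, hh.eq_add_smul x', hx, hx', ← sub_eq_zero]
    rw [← sub_eq_zero] at hαβ
    rw [← hαβ]
    module
  exact zero_ne_one (hH.injective hmeet).2

/- Modulo the directions of the rows through `0` and `1`, the row through `2` is a line missing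
the value at height `0`, so it is constant. -/
lemma exists_row_two_eq [NeZero (2 : K)] (hH : IsLineGrid H) :
    ∃ σ : K, σ ≠ 0 ∧ σ ≠ 1 ∧ ∀ x, H x 2 = H x 0 + σ • (H x 1 - H x 0) := by
  obtain ⟨f, hf⟩ := hH.row 0
  obtain ⟨h, hh⟩ := hH.row 1
  obtain ⟨q, hq⟩ := hH.row 2
  choose s hs using hH.col
  obtain ⟨l, hl, hker⟩ := Submodule.exists_le_ker_of_notMem hH.col_direction_notMem_span
  have hl0 : l (H 1 0 - H 0 0) = 0 := hker (Submodule.subset_span (by simp))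
  have hl1 : l (H 1 1 - H 0 1) = 0 := hker (Submodule.subset_span (by simp))
  have hheight (x : K) : l (H x 2) = l (H 0 0) + s x 2 * l (H 0 1 - H 0 0) := by
    rw [(hs x).eq_add_smul 2, hf.eq_add_smul x, hh.eq_add_smul x]
    simp only [map_add, map_sub, map_smul, smul_eq_mul] at hl0 hl1 ⊢
    linear_combination (f x - s x 2 * f x) * hl0 + s x 2 * h x * hl1
  have hs0 (x : K) : s x 2 ≠ 0 := fun e =>
    two_ne_zero ((hs x).bijective.1 (e.trans (hs x).map_zero.symm))
  have hs1 (x : K) : s x 2 ≠ 1 := fun e =>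
    one_add_one_eq_two.symm.trans_ne (by simp) ((hs x).bijective.1 (e.trans (hs x).map_one.symm))
  have hsq (x : K) : s x 2 = s 0 2 + q x * (s 1 2 - s 0 2) := by
    have e := congrArg l (hq.eq_add_smul x)
    simp only [map_add, map_smul, map_sub l (H 1 2), hheight, smul_eq_mul] at e
    exact mul_right_cancel₀ hl (by linear_combination e)
  have hconst : s 1 2 - s 0 2 = 0 := by
    by_contra hne
    obtain ⟨x, hx⟩ := hq.bijective.2 (-s 0 2 / (s 1 2 - s 0 2))
    exact hs0 x (by rw [hsq, hx, div_mul_cancel₀ _ hne, add_neg_cancel])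
  refine ⟨s 0 2, hs0 0, hs1 0, fun x => ?_⟩
  rw [(hs x).eq_add_smul 2, hsq x, hconst, mul_zero, add_zero]

lemma row_param_eq_of_linearIndependent [NeZero (2 : K)] (hH : IsLineGrid H)
    (hf : IsLineParam (fun x => H x 0) f) (hh : IsLineParam (fun x => H x 1) h)
    (hind : LinearIndependent K ![H 1 0 - H 0 0, H 1 1 - H 0 1]) : f = h := by
  obtain ⟨q, hq⟩ := hH.row 2
  obtain ⟨σ, hσ0, hσ1, hσ⟩ := hH.exists_row_two_eq
  funext x
  have hrel : ((1 - σ) * (f x - q x)) • (H 1 0 - H 0 0) +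
      (σ * (h x - q x)) • (H 1 1 - H 0 1) = 0 := by
    have e := hq.eq_add_smul x
    simp only [hσ] at e
    rw [hf.eq_add_smul x, hh.eq_add_smul x, ← sub_eq_zero] at e
    rw [← e]
    module
  obtain ⟨h₁, h₂⟩ := LinearIndependent.pair_iff.1 hind _ _ hrel
  have hfq := (mul_eq_zero.1 h₁).resolve_left (sub_ne_zero.2 hσ1.symm)
  have hhq := (mul_eq_zero.1 h₂).resolve_left hσ0
  exact (sub_eq_zero.1 hfq).trans (sub_eq_zero.1 hhq).symm

/- If the rows are parallel, the column through `x` would meet the column through `0` unless they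
are parallel too. -/
lemma row_param_eq_of_parallel (hH : IsLineGrid H)
    (hf : IsLineParam (fun x => H x 0) f) (hh : IsLineParam (fun x => H x 1) h) {c : K}
    (hc : c • (H 1 0 - H 0 0) = H 1 1 - H 0 1) : f = h := by
  have hscale (x : K) : c * h x = f x := by
    by_contra hne
    obtain ⟨s, hs⟩ := hH.col x
    obtain ⟨s₀, hs₀⟩ := hH.col 0
    obtain ⟨τ, hτ⟩ : ∃ τ : K, f x + τ * (c * h x - f x) = 0 :=
      ⟨-f x / (c * h x - f x), by rw [div_mul_cancel₀ _ (sub_ne_zero.2 hne), add_neg_cancel]⟩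
    obtain ⟨y, hy⟩ := hs.bijective.2 τ
    obtain ⟨y₀, hy₀⟩ := hs₀.bijective.2 τ
    have hmeet : H x y = H 0 y₀ := by
      have e : H x y - H 0 y₀ = (f x + τ * (c * h x - f x)) • (H 1 0 - H 0 0) := by
        rw [hs.eq_add_smul y, hs₀.eq_add_smul y₀, hy, hy₀, hf.eq_add_smul x, hh.eq_add_smul x, ← hc]
        module
      rwa [hτ, zero_smul, sub_eq_zero] at e
    rw [(hH.injective hmeet).1, hf.map_zero, hh.map_zero, mul_zero] at hne
    exact hne rfl
  have hc1 : c = 1 := by simpa [hf.map_one, hh.map_one] using hscale 1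
  funext x
  rw [← hscale x, hc1, one_mul]

lemma row_param_eq [NeZero (2 : K)] (hH : IsLineGrid H)
    (hf : IsLineParam (fun x => H x 0) f) (hh : IsLineParam (fun x => H x 1) h) : f = h := by
  by_cases hpar : ∃ c : K, c • (H 1 0 - H 0 0) = H 1 1 - H 0 1
  · obtain ⟨c, hc⟩ := hpar
    exact hH.row_param_eq_of_parallel hf hh hc
  · exact hH.row_param_eq_of_linearIndependent hf hh
      ((LinearIndependent.pair_iff' hH.row_direction_ne_zero).2 fun c hc => hpar ⟨c, hc⟩)

end IsLineGrid

end LineGrids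

section LinePreservingMaps

variable {K V E : Type*} [Field K] [AddCommGroup V] [Module K V] [AddCommGroup E] [Module K E]

/-- `G` sends every line parallel to `b` bijectively onto a line. -/
def MapsLines (K : Type*) [Field K] [Module K V] [Module K E] (G : V → E) (b : V) : Prop :=
  ∀ p, ∃ f, IsLineParam (fun t : K => G (p + t • b)) f

variable {G : V → E} {b b' : V} {f : K → K}

lemma isLineGrid_of_mapsLines (hG : Function.Injective G) (hb : MapsLines K G b)
    (hb' : MapsLines K G b') (hli : LinearIndependent K ![b, b']) (p : V) {c : K} (hc : c ≠ 0) :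
    IsLineGrid fun x y : K => G (p + x • b + y • c • b') where
  injective x x' y y' e := by
    have hcomb : (x - x') • b + ((y - y') * c) • b' = 0 := by
      rw [← sub_eq_zero.2 (hG e)]
      module
    obtain ⟨hx, hy⟩ := LinearIndependent.pair_iff.1 hli _ _ hcomb
    exact ⟨sub_eq_zero.1 hx, sub_eq_zero.1 ((mul_eq_zero.1 hy).resolve_right hc)⟩
  row y := by
    obtain ⟨f, hf⟩ := hb (p + y • c • b')
    exact ⟨f, by simpa only [add_right_comm p] using hf⟩
  col x := by
    obtain ⟨f, hf⟩ := hb' (p + x • b)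
    exact ⟨_, by simpa only [mul_smul] using hf.comp_mul_right hc⟩

lemma param_add_smul_eq [NeZero (2 : K)] (hG : Function.Injective G) (hb : MapsLines K G b)
    (hb' : MapsLines K G b') (hli : LinearIndependent K ![b, b']) {φ : V → K → K}
    (hφ : ∀ p, IsLineParam (fun t : K => G (p + t • b)) (φ p)) (p : V) (c : K) :
    φ (p + c • b') = φ p := by
  rcases eq_or_ne c 0 with rfl | hc
  · rw [zero_smul, add_zero]
  refine ((isLineGrid_of_mapsLines hG hb hb' hli p hc).row_param_eq ?_ ?_).symm
  · simpa only [zero_smul, add_zero] using hφ p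
  · simpa only [one_smul, add_right_comm p] using hφ (p + c • b')

lemma exists_uniform_param [NeZero (2 : K)] (hG : Function.Injective G) (hb : MapsLines K G b)
    (hspan : Submodule.span K {b' | MapsLines K G b' ∧ LinearIndependent K ![b, b']} = ⊤) :
    ∃ f, ∀ p, IsLineParam (fun t : K => G (p + t • b)) f := by
  choose φ hφ using id hb
  have hinv (v : V) : ∀ (c : K) (p : V), φ (p + c • v) = φ p := by
    have hv : v ∈ Submodule.span K {b' | MapsLines K G b' ∧ LinearIndependent K ![b, b']} :=
      hspan.ge trivial
    induction hv using Submodule.span_induction with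
    | mem b' hb' => exact fun c p => param_add_smul_eq hG hb hb'.1 hb'.2 hφ p c
    | zero => simp
    | add u v _ _ hu hv => exact fun c p => by rw [smul_add, ← add_assoc, hv, hu]
    | smul r v _ hv => exact fun c p => by rw [smul_smul, hv]
  refine ⟨φ 0, fun p => ?_⟩
  have hp : φ p = φ 0 := by simpa only [zero_add, one_smul] using hinv p 1 0
  exact hp ▸ hφ p

lemma map_add_of_forall_map_add_eq (hf : Function.Injective f) (hsurj : Function.Surjective f)
    (h1 : f 1 = 1) (h : ∀ s t, f (s + t) = f s + f t * (f (s + 1) - f s)) (s t : K) :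
    f (s + t) = f s + f t := by
  obtain ⟨c, hc⟩ : ∃ c, c = f (1 + 1) - f 1 - 1 := ⟨_, rfl⟩
  have hquad (s t : K) : f (s + t) = f s + f t + c * f s * f t := by
    rw [h s t, add_comm s 1, h 1 s, hc, h1]
    ring
  have hc0 : c = 0 := by
    by_contra hne
    obtain ⟨s, hs⟩ := hsurj (-1 / c)
    have hconst (t : K) : f (s + t) = -1 / c := by
      rw [hquad, hs, mul_div_cancel₀ _ hne]
      ring
    exact zero_ne_one (add_left_cancel (hf ((hconst 0).trans (hconst 1).symm)))
  rw [hquad, hc0, zero_mul, zero_mul, add_zero]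

lemma map_add_of_isLineParam (hG : Function.Injective G) (hb0 : b ≠ 0)
    (hf : ∀ p, IsLineParam (fun t : K => G (p + t • b)) f) (s t : K) :
    f (s + t) = f s + f t := by
  have hline (p : V) (t : K) : G (p + t • b) = G p + f t • (G (p + b) - G p) := by
    simpa only [zero_smul, one_smul, add_zero] using (hf p).eq_add_smul t
  have hne : G (0 + b) - G 0 ≠ 0 := sub_ne_zero.2 (hG.ne (by rwa [zero_add]))
  refine map_add_of_forall_map_add_eq (hf 0).bijective.1 (hf 0).bijective.2 (hf 0).map_one
    (fun s t => smul_left_injective K hne ?_) s t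
  have e := hline (0 + s • b) t
  rw [add_assoc 0, ← add_smul, show (0 : V) + s • b + b = 0 + (s + 1) • b by module, hline 0 s,
    hline 0 (s + t), hline 0 (s + 1), ← sub_eq_zero] at e
  rw [← sub_eq_zero, ← e]
  module

lemma exists_addEquiv_of_mapsLines [NeZero (2 : K)] (hG : Function.Injective G) (hb0 : b ≠ 0)
    (hb : MapsLines K G b)
    (hspan : Submodule.span K {b' | MapsLines K G b' ∧ LinearIndependent K ![b, b']} = ⊤) :
    ∃ f : K ≃+ K, f 1 = 1 ∧ ∀ p t, G (p + t • b) = G p + f t • (G (p + b) - G p) := by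
  obtain ⟨f, hf⟩ := exists_uniform_param hG hb hspan
  refine ⟨AddEquiv.mk' (Equiv.ofBijective f (hf 0).bijective) (map_add_of_isLineParam hG hb0 hf),
    (hf 0).map_one, fun p t => ?_⟩
  change _ = G p + f t • _
  simpa only [zero_smul, one_smul, add_zero] using (hf p).eq_add_smul t

end LinePreservingMaps

section Multiaffine

variable {ι K E : Type*} [Fintype ι]

/-- The multiaffine map `x ↦ ∑ s, (∏ i ∈ s, xᵢ) • c s`, whose coefficient at the squarefree monomial
with support `s` is `c s`. -/
def multiaffine [CommRing K] [AddCommGroup E] [Module K E] (c : Finset ι → E) (x : ι → K) : E :=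
  ∑ s, (∏ i ∈ s, x i) • c s

lemma multiaffine_sub [CommRing K] [AddCommGroup E] [Module K E] (c d : Finset ι → E)
    (x : ι → K) : multiaffine (c - d) x = multiaffine c x - multiaffine d x := by
  simp only [multiaffine, Pi.sub_apply, smul_sub, Finset.sum_sub_distrib]

lemma multiaffine_smul [CommRing K] [AddCommGroup E] [Module K E] (k : K) (c : Finset ι → E)
    (x : ι → K) : multiaffine (k • c) x = k • multiaffine c x := by
  simp only [multiaffine, Pi.smul_apply, Finset.smul_sum, smul_comm k]

lemma multiaffine_apply [CommRing K] {κ : Type*} (c : Finset ι → κ → K) (x : ι → K) (j : κ) :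
    multiaffine c x j = multiaffine (fun s => c s j) x := by
  simp only [multiaffine, Finset.sum_apply, Pi.smul_apply]

lemma eq_zero_of_multiaffine_eq_zero [CommRing K] [AddCommGroup E] [Module K E]
    {c : Finset ι → E} (h : ∀ x : ι → K, multiaffine c x = 0) : c = 0 := by
  classical
  funext s
  induction s using Finset.strongInduction with
  | H s ih =>
    have hs := h fun i => if i ∈ s then 1 else 0
    rw [multiaffine, Finset.sum_eq_single s (fun t _ hts => ?_) (by simp)] at hs
    · rwa [Finset.prod_eq_one fun i hi => if_pos hi, one_smul] at hs
    · by_cases hsub : t ⊆ s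
      · rw [ih t (hsub.ssubset_of_ne hts), Pi.zero_apply, smul_zero]
      · obtain ⟨i, hit, his⟩ := Finset.not_subset.1 hsub
        rw [Finset.prod_eq_zero hit (if_neg his), zero_smul]

open MvPolynomial in
lemma polyMap_eq_multiaffine {κ : Type*} (c : Finset ι → κ → ℝ) :
    polyMap (fun j => ∑ s, (∏ i ∈ s, X i) * C (c s j)) = multiaffine c := by
  funext x j
  rw [multiaffine_apply]
  simp only [polyMap, map_sum, map_mul, map_prod, eval_X, eval_C, multiaffine, smul_eq_mul]

theorem card_le_card_of_injective_multiaffine {κ : Type*} [Fintype κ] {c : Finset ι → κ → ℝ}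
    (hc : Function.Injective (multiaffine c : (ι → ℝ) → κ → ℝ)) :
    Fintype.card ι ≤ Fintype.card κ :=
  card_le_card_of_injective (by rwa [polyMap_eq_multiaffine c])

theorem surjective_multiaffine_of_injective {κ : Type*} [Fintype κ] {c : Finset ι → κ → ℝ}
    (hc : Function.Injective (multiaffine c : (ι → ℝ) → κ → ℝ))
    (hcard : Fintype.card κ ≤ Fintype.card ι) :
    Function.Surjective (multiaffine c : (ι → ℝ) → κ → ℝ) := by
  rw [← polyMap_eq_multiaffine c] at hc ⊢
  exact surjective_polyMap_of_injective hc hcard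

variable [DecidableEq ι]

/-- The coefficients of the translate `x ↦ multiaffine c (x + k (1, …, 1))`. -/
def translateCoeff [CommRing K] (c : Finset ι → K) (k : K) (t : Finset ι) : K :=
  ∑ s with t ⊆ s, k ^ (s.card - t.card) * c s

lemma multiaffine_add_const [CommRing K] (c : Finset ι → K) (x : ι → K) (k : K) :
    multiaffine c (fun i => x i + k) = multiaffine (translateCoeff c k) x := by
  simp only [multiaffine, translateCoeff, smul_eq_mul, Finset.prod_add, Finset.sum_mul,
    Finset.mul_sum]
  rw [Finset.sum_comm' (t' := Finset.univ) (s' := fun t => {s | t ⊆ s}) (by simp)]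
  refine Finset.sum_congr rfl fun t _ => Finset.sum_congr rfl fun s hs => ?_
  rw [Finset.prod_const, Finset.card_sdiff_of_subset (Finset.mem_filter.1 hs).2, mul_assoc]

open Polynomial in
lemma sum_superset_card_eq_zero [CommRing K] [IsDomain K] [CharZero K] {c : Finset ι → K}
    {a b : K} {t : Finset ι} (h : ∀ k : ℕ, translateCoeff c (k : K) t = a + k * b) {j : ℕ}
    (hj : 2 ≤ j) : ∑ s with t ⊆ s ∧ s.card = t.card + j, c s = 0 := by
  let p : K[X] := ∑ s with t ⊆ s, C (c s) * X ^ (s.card - t.card) - (C a + C b * X)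
  have hp : p = 0 := by
    refine eq_zero_of_infinite_isRoot p <|
      (Set.infinite_range_of_injective (Nat.cast_injective (R := K))).mono ?_
    rintro _ ⟨k, rfl⟩
    have hk := sub_eq_zero.2 (h k)
    simp only [translateCoeff, mul_comm (_ ^ _) (c _), mul_comm (k : K) b] at hk
    simpa only [Set.mem_ofPred_eq, IsRoot, p, eval_sub, eval_add, eval_finsetSum, eval_mul, eval_C,
      eval_pow, eval_X] using hk
  have hcoeff : p.coeff j = 0 := by rw [hp, coeff_zero]
  simp only [p, coeff_sub, coeff_add, finsetSum_coeff, coeff_C_mul, coeff_X_pow,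
    coeff_C_of_ne_zero (show j ≠ 0 by lia), coeff_X_of_ne_one (show j ≠ 1 by lia), mul_zero,
    add_zero, sub_zero, mul_ite, mul_one, ← Finset.sum_filter, Finset.filter_filter] at hcoeff
  rw [← hcoeff]
  refine Finset.sum_congr (Finset.filter_congr fun s _ => and_congr_right fun hts => ?_)
    fun _ _ => rfl
  have := Finset.card_le_card hts
  lia

/- Along each line parallel to `(1, …, 1)` the polynomial `multiaffine c` takes affine values at
integer steps, so its coefficients of degree at least two along the line vanish. -/
lemma sum_superset_card_eq_zero_of_affine_steps [CommRing K] [IsDomain K] [CharZero K]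
    {c : Finset ι → K}
    (h : ∀ (x : ι → K) (k : ℕ), multiaffine c (fun i => x i + k) =
      multiaffine c x + k * (multiaffine c (fun i => x i + 1) - multiaffine c x))
    (t : Finset ι) {j : ℕ} (hj : 2 ≤ j) :
    ∑ s with t ⊆ s ∧ s.card = t.card + j, c s = 0 := by
  refine sum_superset_card_eq_zero (a := c t) (b := translateCoeff c 1 t - c t) (fun k => ?_) hj
  have hzero : translateCoeff c (k : K) - c - (k : K) • (translateCoeff c 1 - c) = 0 :=
    eq_zero_of_multiaffine_eq_zero (K := K) fun x => by
      rw [multiaffine_sub, multiaffine_smul, multiaffine_sub, multiaffine_sub,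
        ← multiaffine_add_const, ← multiaffine_add_const, h x k, smul_eq_mul]
      ring
  have ht := congrFun hzero t
  simp only [Pi.sub_apply, Pi.smul_apply, Pi.zero_apply, smul_eq_mul] at ht
  linear_combination ht

/- Inclusion–exclusion: the alternating sum of the hypotheses over all `t` in the complement of
`s₀` isolates `c s₀`. -/
lemma eq_zero_of_sum_superset_eq_zero [AddCommGroup E] {c : Finset ι → E} {k : ℕ}
    (h : ∀ t : Finset ι, t.card + 2 ≤ k → ∑ s with t ⊆ s ∧ s.card = k, c s = 0)
    (hk : Fintype.card ι + 2 ≤ 2 * k) {s₀ : Finset ι} (hs₀ : s₀.card = k) : c s₀ = 0 := by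
  have halt : ∑ t ∈ s₀ᶜ.powerset, (-1 : ℤ) ^ t.card • ∑ s with t ⊆ s ∧ s.card = k, c s = 0 := by
    refine Finset.sum_eq_zero fun t ht => ?_
    have hcard := Finset.card_le_card (Finset.mem_powerset.1 ht)
    rw [Finset.card_compl] at hcard
    rw [h t (by have := s₀.card_le_univ; lia), smul_zero]
  simp only [Finset.smul_sum] at halt
  rw [Finset.sum_comm' (t' := {s : Finset ι | s.card = k}) (s' := fun s => (s ∩ s₀ᶜ).powerset)
    (fun t s => by simp only [Finset.mem_powerset, Finset.mem_filter, Finset.mem_univ, true_and,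
      Finset.subset_inter_iff]; tauto)] at halt
  simp only [← Finset.sum_smul, Finset.sum_powerset_neg_one_pow_card] at halt
  rw [Finset.sum_eq_single s₀ (fun s hs hne => ?_) (by simp [hs₀])] at halt
  · simpa using halt
  · rw [if_neg, zero_smul]
    intro hdisj
    rw [← Finset.sdiff_eq_inter_compl, Finset.sdiff_eq_empty_iff_subset] at hdisj
    exact hne (Finset.eq_of_subset_of_card_le hdisj (by rw [hs₀, (Finset.mem_filter.1 hs).2]))

end Multiaffine

section MultiaffineForm

variable {ι K V E : Type*} [Field K] [AddCommGroup V] [Module K V] [AddCommGroup E] [Module K E]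
  {G : V → E} {u : ι → V}

lemma exists_coeff_of_affine_directions {f : ι → K → K}
    (h : ∀ i p t, G (p + t • u i) = G p + f i t • (G (p + u i) - G p)) (t : Finset ι) (p : V) :
    ∃ c : Finset ι → E, ∀ α : ι → K, G (p + ∑ i ∈ t, α i • u i) =
      ∑ s ∈ t.powerset, (∏ i ∈ s, f i (α i)) • c s := by
  classical
  induction t using Finset.induction_on generalizing p with
  | empty => exact ⟨fun _ => G p, fun α => by simp⟩
  | insert i t hi ih =>
    obtain ⟨c₀, h₀⟩ := ih p
    obtain ⟨c₁, h₁⟩ := ih (p + u i)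
    refine ⟨fun s => if i ∈ s then c₁ (s.erase i) - c₀ (s.erase i) else c₀ s, fun α => ?_⟩
    rw [Finset.sum_insert hi, add_comm (α i • u i), ← add_assoc, h, add_right_comm, h₀, h₁,
      Finset.sum_powerset_insert hi, ← Finset.sum_sub_distrib, Finset.smul_sum]
    congr 1 <;> refine Finset.sum_congr rfl fun s hs => ?_ <;>
      have his : i ∉ s := fun his => hi (Finset.mem_powerset.1 hs his)
    · simp only [if_neg his]
    · simp only [Finset.mem_insert_self, if_true, Finset.erase_insert his, Finset.prod_insert his,
        mul_smul, smul_sub]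

variable [Fintype ι]

lemma linearIndependent_pair_sum [Nontrivial ι] (hu : LinearIndependent K u) (i : ι) :
    LinearIndependent K ![∑ k, u k, u i] := by
  classical
  refine LinearIndependent.pair_iff.2 fun s t hst => ?_
  have hcoeff := Fintype.linearIndependent_iff.1 hu (fun k => s + if k = i then t else 0) (by
    simpa [add_smul, Finset.sum_add_distrib, Finset.smul_sum] using hst)
  obtain ⟨j, hj⟩ := exists_ne i
  have hs : s = 0 := by simpa [hj] using hcoeff j
  exact ⟨hs, by simpa [hs] using hcoeff i⟩

lemma span_directions_independent_of_sum [Nontrivial ι] (hu : LinearIndependent K u)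
    (hspan : Submodule.span K (Set.range u) = ⊤) (hlines : ∀ i, MapsLines K G (u i)) :
    Submodule.span K {b | MapsLines K G b ∧ LinearIndependent K ![∑ k, u k, b]} = ⊤ :=
  top_unique <| hspan.ge.trans <| Submodule.span_mono <| Set.range_subset_iff.2 fun i =>
    ⟨hlines i, linearIndependent_pair_sum hu i⟩

lemma span_directions_independent_of_basis [Nontrivial ι] (hu : LinearIndependent K u)
    (hspan : Submodule.span K (Set.range u) = ⊤) (hlines : ∀ i, MapsLines K G (u i))
    (hsum : MapsLines K G (∑ k, u k)) (i : ι) :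
    Submodule.span K {b | MapsLines K G b ∧ LinearIndependent K ![u i, b]} = ⊤ := by
  classical
  set S := Submodule.span K {b | MapsLines K G b ∧ LinearIndependent K ![u i, b]}
  have hother {j : ι} (hj : j ≠ i) : u j ∈ S :=
    Submodule.subset_span ⟨hlines j, LinearIndependent.pair_iff.2
      ((LinearIndepOn.pair_iff u hj.symm).1 (hu.linearIndepOn _))⟩
  have hself : u i ∈ S := by
    have hsumS : ∑ k, u k ∈ S :=
      Submodule.subset_span
        ⟨hsum, LinearIndependent.pair_symm_iff.1 (linearIndependent_pair_sum hu i)⟩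
    rw [← Finset.add_sum_erase _ _ (Finset.mem_univ i)] at hsumS
    exact (S.add_mem_iff_left (S.sum_mem fun j hj => hother (Finset.ne_of_mem_erase hj))).1 hsumS
  refine top_unique (hspan.ge.trans (Submodule.span_le.2 (Set.range_subset_iff.2 fun j => ?_)))
  exact (eq_or_ne j i).elim (fun h => h ▸ hself) hother

variable {κ : Type*} {f : ι → K ≃+ K}

lemma exists_addEquiv_multiaffine [Nontrivial ι] [NeZero (2 : K)]
    (hG : Function.Injective G) (hu : LinearIndependent K u)
    (hspan : Submodule.span K (Set.range u) = ⊤) (hlines : ∀ i, MapsLines K G (u i))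
    (hsum : MapsLines K G (∑ k, u k)) :
    ∃ (f : ι → K ≃+ K) (c : Finset ι → E), (∀ i, f i 1 = 1) ∧
      ∀ α : ι → K, G (∑ i, α i • u i) = multiaffine c fun i => f i (α i) := by
  choose f hf hline using fun i => exists_addEquiv_of_mapsLines hG (hu.ne_zero i) (hlines i)
    (span_directions_independent_of_basis hu hspan hlines hsum i)
  obtain ⟨c, hc⟩ := exists_coeff_of_affine_directions hline Finset.univ 0
  exact ⟨f, c, hf, fun α => by simpa only [zero_add, Finset.powerset_univ, multiaffine] using hc α⟩

lemma injective_multiaffine {c : Finset ι → E} (hG : Function.Injective G)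
    (hu : LinearIndependent K u)
    (hform : ∀ α : ι → K, G (∑ i, α i • u i) = multiaffine c fun i => f i (α i)) :
    Function.Injective (multiaffine c : (ι → K) → E) := by
  intro x y hxy
  have hx := hform fun i => (f i).symm (x i)
  have hy := hform fun i => (f i).symm (y i)
  simp only [AddEquiv.apply_symm_apply] at hx hy
  have heq := hu.fintypeLinearCombination_injective (hG (hx.trans (hxy.trans hy.symm)))
  exact _root_.funext fun i => (f i).symm.injective (congrFun heq i)

lemma multiaffine_add_natCast {c : Finset ι → E} (hf : ∀ i, f i 1 = 1)
    (hform : ∀ α : ι → K, G (∑ i, α i • u i) = multiaffine c fun i => f i (α i)) {g : K ≃+ K}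
    (hg : g 1 = 1)
    (hline : ∀ p t, G (p + t • ∑ i, u i) = G p + g t • (G (p + ∑ i, u i) - G p))
    (x : ι → K) (k : ℕ) : multiaffine c (fun i => x i + k) =
      multiaffine c x + (k : K) • (multiaffine c (fun i => x i + 1) - multiaffine c x) := by
  have htranslate (k : ℕ) : G (∑ i, (f i).symm (x i) • u i + (k : K) • ∑ i, u i) =
      multiaffine c fun i => x i + k := by
    rw [Finset.smul_sum, ← Finset.sum_add_distrib]
    simp only [← add_smul, hform, map_add, AddEquiv.apply_symm_apply, map_natCast' _ (hf _)]
  have h1 := htranslate 1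
  have h0 := htranslate 0
  simp only [Nat.cast_one, Nat.cast_zero, one_smul, zero_smul, add_zero] at h0 h1
  rw [← htranslate k, hline, map_natCast' g hg, h0, h1]

theorem exists_restricted_multiaffine_form [Nontrivial ι] [CharZero K] [DecidableEq ι]
    {G : V → κ → K} (hG : Function.Injective G) (hu : LinearIndependent K u)
    (hspan : Submodule.span K (Set.range u) = ⊤) (hlines : ∀ i, MapsLines K G (u i))
    (hsum : MapsLines K G (∑ k, u k)) :
    ∃ (f : ι → K ≃+ K) (c : Finset ι → κ → K), (∀ i, f i 1 = 1) ∧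
      (∀ (t : Finset ι) (k : ℕ), t.card + 2 ≤ k → ∑ s with t ⊆ s ∧ s.card = k, c s = 0) ∧
      ∀ α : ι → K, G (∑ i, α i • u i) = multiaffine c fun i => f i (α i) := by
  obtain ⟨f, c, hf, hform⟩ := exists_addEquiv_multiaffine hG hu hspan hlines hsum
  have hsum0 : ∑ k, u k ≠ 0 :=
    (linearIndependent_pair_sum hu (Classical.arbitrary ι)).ne_zero 0
  obtain ⟨g, hg, hline⟩ := exists_addEquiv_of_mapsLines hG hsum0 hsum
    (span_directions_independent_of_sum hu hspan hlines)
  refine ⟨f, c, hf, fun t k hk => ?_, hform⟩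
  obtain ⟨j, rfl⟩ := Nat.exists_eq_add_of_le hk
  funext l
  rw [Finset.sum_apply, add_assoc]
  refine sum_superset_card_eq_zero_of_affine_steps (fun x k => ?_) t (Nat.le_add_right 2 j)
  simpa only [Pi.add_apply, Pi.smul_apply, Pi.sub_apply, multiaffine_apply, smul_eq_mul] using
    congrFun (multiaffine_add_natCast hf hform hg hline x k) l

end MultiaffineForm

section GeneralPosition

lemma exists_basis_sum_eq_last {K V : Type*} [Field K] [AddCommGroup V] [Module K V]
    [FiniteDimensional K V] {n : ℕ} (hn : Module.finrank K V = n) {v : Fin (n + 1) → V}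
    (hv : ∀ s : Finset (Fin (n + 1)), s.card = n → LinearIndependent K fun i : s => v i.1) :
    ∃ r : Fin n → K, (∀ i, r i ≠ 0) ∧ LinearIndependent K (fun i => r i • v i.castSucc) ∧
      ∑ i, r i • v i.castSucc = v (Fin.last n) := by
  have hli : LinearIndependent K fun i : Fin n => v i.castSucc :=
    (hv (Finset.univ.erase (Fin.last n)) (by simp)).comp
      (fun i : Fin n => ⟨i.castSucc, by simp [Fin.castSucc_ne_last]⟩)
      fun i j hij => by simpa using hij
  have hspan : Submodule.span K (Set.range fun i : Fin n => v i.castSucc) = ⊤ :=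
    hli.span_eq_top_of_card_eq_finrank' (by simp [hn])
  obtain ⟨r, hr⟩ := (Submodule.mem_span_range_iff_exists_fun K).1
    (hspan.ge (x := v (Fin.last n)) trivial)
  have hr0 (i : Fin n) : r i ≠ 0 := fun hi => by
    have hrel := Fintype.linearIndependent_iff.1 (hv (Finset.univ.erase i.castSucc) (by simp))
      (fun j => Fin.lastCases (-1) r j.1) (by
        rw [Finset.sum_coe_sort _ fun j : Fin (n + 1) => (Fin.lastCases (-1) r j : K) • v j,
          Finset.sum_erase _ (by simp [hi]), Fin.sum_univ_castSucc]
        simp [hr])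
      ⟨Fin.last n, by simp [(Fin.castSucc_ne_last i).symm]⟩
    simp at hrel
  exact ⟨r, hr0, hli.units_smul fun i => Units.mk0 (r i) (hr0 i), hr⟩

lemma mapsLines_smul_of_isLine {n m : ℕ} {F : (Fin n → ℝ) → Fin m → ℝ}
    (hF : Function.Injective F) {w : Fin n → ℝ} (hw : w ≠ 0)
    (h : ∀ a, IsLine (F '' lineThru a w)) {r : ℝ} (hr : r ≠ 0) : MapsLines ℝ F (r • w) := by
  intro p
  obtain ⟨a, b, hb, himage⟩ := h p
  refine exists_isLineParam (fun s t hst => ?_) hb (Eq.trans ?_ himage)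
  · exact smul_left_injective ℝ (smul_ne_zero hr hw) (add_left_cancel (hF hst))
  · ext y
    constructor
    · rintro ⟨t, rfl⟩
      exact ⟨_, ⟨t * r, by rw [mul_smul]⟩, rfl⟩
    · rintro ⟨_, ⟨t, rfl⟩, rfl⟩
      exact ⟨t / r, by simp only [smul_smul, div_mul_cancel₀ _ hr]⟩

end GeneralPosition

section BoolExponents

/-- A `{0,1}`-valued exponent vector, identified with its support. -/
def boolFunEquivFinset (ι : Type*) [Fintype ι] [DecidableEq ι] : (ι → Bool) ≃ Finset ι where
  toFun δ := {i | δ i = true}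
  invFun s i := decide (i ∈ s)
  left_inv δ := by ext i; simp
  right_inv s := by ext i; simp

variable {ι : Type*} [Fintype ι] [DecidableEq ι]

lemma mem_boolFunEquivFinset (δ : ι → Bool) (i : ι) : i ∈ boolFunEquivFinset ι δ ↔ δ i = true := by
  simp [boolFunEquivFinset]

lemma card_boolFunEquivFinset {n : ℕ} (δ : Fin n → Bool) :
    (boolFunEquivFinset (Fin n) δ).card = wt δ := by
  simp [boolFunEquivFinset, wt]

lemma multiaffine_eq_sum_bool {K E : Type*} [CommRing K] [AddCommGroup E] [Module K E]
    (c : Finset ι → E) (x : ι → K) : multiaffine c x =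
      ∑ δ : ι → Bool, (∏ i, if δ i then x i else 1) • c (boolFunEquivFinset ι δ) := by
  rw [multiaffine, ← (boolFunEquivFinset ι).sum_comp]
  simp only [← Finset.prod_filter]
  rfl

lemma sum_wt_eq_sum_card {n k : ℕ} {E : Type*} [AddCommGroup E] (c : Finset (Fin n) → E)
    (I : Finset (Fin n)) :
    ∑ δ with wt δ = k ∧ ∀ i ∈ I, δ i = true, c (boolFunEquivFinset (Fin n) δ) =
      ∑ s with I ⊆ s ∧ s.card = k, c s := by
  refine Finset.sum_equiv (boolFunEquivFinset (Fin n)) (fun δ => ?_) fun _ _ => rfl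
  simp only [Finset.mem_filter, Finset.mem_univ, true_and, card_boolFunEquivFinset,
    Finset.subset_iff, mem_boolFunEquivFinset, and_comm]

end BoolExponents

/-- **Theorem (restricted polynomial form for collineations in n+1 generic directions).**
If `m, n ≥ 2`, `v₁,…,v_{n+1} ∈ ℝⁿ` are in general position and `F : ℝⁿ → ℝᵐ` is an
injection mapping each line in `ℒ(v₁,…,v_{n+1})` onto a line, then there is a basis
`u₁,…,uₙ` of `ℝⁿ`, additive bijections `fᵢ : ℝ → ℝ` with `fᵢ 1 = 1`, and coefficients
`c_δ ∈ ℝᵐ` satisfying: `c_δ = 0` whenever `|δ| ≥ (n+2)/2`, and for each `2 ≤ k < (n+2)/2`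
and every set of at most `k - 2` indices `i₁ < ⋯ < i_l`, the sum of `c_δ` over all `δ`
with `|δ| = k` and `δ_{i₁} = ⋯ = δ_{i_l} = 1` vanishes; and
`F (∑ αᵢ uᵢ) = ∑_δ (∏ᵢ fᵢ(αᵢ)^{δᵢ}) c_δ`. Moreover `m ≥ n`, and if `m = n` then `F`
is a bijection. -/
theorem restricted_polynomial_form_nPlusOne_directions
    {n m : ℕ} (hn : 2 ≤ n) (hm : 2 ≤ m)
    (v : Fin (n + 1) → (Fin n → ℝ))
    (hv : ∀ s : Finset (Fin (n + 1)), s.card = n →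
      LinearIndependent ℝ (fun i : s => v i.1))
    (F : (Fin n → ℝ) → (Fin m → ℝ))
    (hinj : Function.Injective F)
    (honto : ∀ (i : Fin (n + 1)) (a : Fin n → ℝ), IsLine (F '' lineThru a (v i))) :
    (∃ (u : Fin n → (Fin n → ℝ)) (c : (Fin n → Bool) → (Fin m → ℝ)) (f : Fin n → ℝ → ℝ),
      LinearIndependent ℝ u ∧ Submodule.span ℝ (Set.range u) = ⊤ ∧
      (∀ i, Function.Bijective (f i) ∧ (∀ a b : ℝ, f i (a + b) = f i a + f i b) ∧
        f i 1 = 1) ∧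
      (∀ δ : Fin n → Bool, n + 2 ≤ 2 * wt δ → c δ = 0) ∧
      (∀ k : ℕ, 2 ≤ k → 2 * k < n + 2 → ∀ I : Finset (Fin n), I.card ≤ k - 2 →
        ∑ δ ∈ Finset.univ.filter
            (fun δ : Fin n → Bool => wt δ = k ∧ ∀ i ∈ I, δ i = true), c δ = 0) ∧
      (∀ α : Fin n → ℝ,
        F (∑ i, α i • u i) =
          ∑ δ : Fin n → Bool, (∏ i, if δ i then f i (α i) else 1) • c δ)) ∧
    n ≤ m ∧ (m = n → Function.Surjective F) := by
  have : Nontrivial (Fin n) := Fin.nontrivial_iff_two_le.2 hn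
  obtain ⟨r, hr, hu, hlast⟩ := exists_basis_sum_eq_last (by simp) hv
  have hspan := hu.span_eq_top_of_card_eq_finrank' (by simp)
  have hlines (i : Fin n) : MapsLines ℝ F (r i • v i.castSucc) :=
    mapsLines_smul_of_isLine hinj (right_ne_zero_of_smul (hu.ne_zero i)) (honto _) (hr i)
  have hsum : MapsLines ℝ F (∑ i, r i • v i.castSucc) := by
    have hlast0 : v (Fin.last n) ≠ 0 :=
      hlast ▸ (linearIndependent_pair_sum hu (Classical.arbitrary _)).ne_zero 0
    simpa only [hlast, one_smul] using mapsLines_smul_of_isLine hinj hlast0 (honto _) one_ne_zero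
  obtain ⟨f, c, hf, hc, hform⟩ := exists_restricted_multiaffine_form hinj hu hspan hlines hsum
  have hmulti : Function.Injective (multiaffine c : (Fin n → ℝ) → Fin m → ℝ) :=
    injective_multiaffine hinj hu hform
  refine ⟨⟨_, fun δ => c (boolFunEquivFinset (Fin n) δ), fun i => f i, hu, hspan,
    fun i => ⟨(f i).bijective, map_add (f i), hf i⟩, fun δ hδ => ?_, fun k hk _ I hI => ?_,
    fun α => (hform α).trans (multiaffine_eq_sum_bool c _)⟩, ?_, ?_⟩
  · exact eq_zero_of_sum_superset_eq_zero (fun t => hc t _) (by simpa using hδ)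
      (card_boolFunEquivFinset δ)
  · exact (sum_wt_eq_sum_card c I).trans (hc I k (by lia))
  · simpa using card_le_card_of_injective_multiaffine hmulti
  · rintro rfl y
    obtain ⟨x, rfl⟩ := surjective_multiaffine_of_injective hmulti le_rfl y
    exact ⟨_, by simpa using hform fun i => (f i).symm (x i)⟩
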